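/- Let μ be a probability measure on X = C_0([0,T]; ℝ^d) with E_μ[sup_{t ∈ [0,T]} |X_t|^p] < ∞. Let f: X → ℝ admit an extension f̃: D([0,T]; ℝ^d) → ℝ which is pathwise Malliavin differentiable with derivative 𝔻f̃, such that f̃ and each map ω ↦ 𝔻_t f̃(ω) are continuous with respect to the uniform norm, 𝔻f̃ has left limits and is boundedness preserving, and there is a constant C with |f̃(ω)| ≤ C(1 + ‖ω‖_∞^p) and |𝔻_t f̃(ω)|_* ≤ C(1 + ‖ω‖_∞^{p−1}) for all t ∈ [0,T] and all càdlàg ω; write 𝔻_t f(ω) = 𝔻_t f̃(ω) for continuous ω. Define, for δ > 0, V(δ) = sup { E_π[f(Y)] − L_δ(E_π[c(X, Y)]^{1/p}) : π ∈ Π_c(μ, *) with E_π[c(X, Y)] < ∞ }, and V(0) = E_μ[f(X)]. Then lim_{δ→0+} (V(δ) − V(0))/δ = L*( ( ∫_0^T E_μ[ |E_μ[𝔻_t f(X) | F_t]|_*^q ] dt )^{1/q} ), where for each t a version of the conditional expectation E_μ[𝔻_t f(X) | F_t] is chosen making the integrand measurable in t (such a choice exists, and the value of the integral does not depend on it). 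-/

import Mathlib

open MeasureTheory Filter Set
open scoped ENNReal

noncomputable section

/-- The path space `C_0([0,T]; ℝ^d)`: functions `ℝ → ℝ^d` that are continuous on `[0,T]`
and vanish at `0`. -/
def ContPath (T : ℝ) (d : ℕ) : Type :=
  {ω : ℝ → Fin d → ℝ // ContinuousOn ω (Set.Icc 0 T) ∧ ω 0 = 0}

/-- The σ-algebra `σ(ω_r : r ∈ [0,T], r ≤ s)` generated by the evaluations up to time `s`. -/
def evalSigma (T : ℝ) (d : ℕ) (s : ℝ) : MeasurableSpace (ContPath T d) :=
  ⨆ r : {r : ℝ // 0 ≤ r ∧ r ≤ T ∧ r ≤ s},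
    MeasurableSpace.comap (fun ω : ContPath T d => ω.1 r.1) inferInstance

/-- The ambient σ-algebra on the path space is `σ(ω_r : r ∈ [0,T])`. -/
instance instMSContPath (T : ℝ) (d : ℕ) : MeasurableSpace (ContPath T d) := evalSigma T d T

/-- The right-continuous natural filtration `F_t = ⋂_{s > t} σ(ω_r : r ≤ s)`
(with `F_T = σ(ω_r : r ≤ T)`). -/
def FilC (T : ℝ) (d : ℕ) (t : ℝ) : MeasurableSpace (ContPath T d) :=
  if t < T then ⨅ s : {s : ℝ // t < s ∧ s ≤ T}, evalSigma T d s.1 else evalSigma T d T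

/-- Conditional independence of `m₁` and `m₂` given `m'` under `π`, expressed through
conditional expectations of indicators. -/
def CondIndepOn {Ω : Type*} [MeasurableSpace Ω] (π : Measure Ω)
    (m' m₁ m₂ : MeasurableSpace Ω) : Prop :=
  ∀ A B : Set Ω, MeasurableSet[m₁] A → MeasurableSet[m₂] B →
    (π[(A ∩ B).indicator (fun _ => (1 : ℝ)) | m']) =ᵐ[π]
      (π[A.indicator (fun _ => (1 : ℝ)) | m']) * (π[B.indicator (fun _ => (1 : ℝ)) | m'])

/-- `π` is a coupling with first marginal `μ` which is causal to its second marginal: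
for every `t ∈ [0,T]`, `σ(Y_s : s ≤ t)` is conditionally independent of
`σ(X_s : s ≤ T)` given `F_t`. -/
def IsCausalStarC (T : ℝ) (d : ℕ) (μ : Measure (ContPath T d))
    (π : Measure (ContPath T d × ContPath T d)) : Prop :=
  π.map Prod.fst = μ ∧
  ∀ t ∈ Set.Icc (0 : ℝ) T,
    CondIndepOn π ((FilC T d t).comap Prod.fst)
      ((FilC T d t).comap Prod.snd) ((evalSigma T d T).comap Prod.fst)

/-- `π` is a causal coupling of `(μ, ν)`. -/
def IsCausalCouplingC (T : ℝ) (d : ℕ) (μ ν : Measure (ContPath T d))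
    (π : Measure (ContPath T d × ContPath T d)) : Prop :=
  π.map Prod.snd = ν ∧ IsCausalStarC T d μ π

/-- `π` is a bicausal coupling of `(μ, ν)`: both `π` and its swap are causal. -/
def IsBicausalCouplingC (T : ℝ) (d : ℕ) (μ ν : Measure (ContPath T d))
    (π : Measure (ContPath T d × ContPath T d)) : Prop :=
  IsCausalCouplingC T d μ ν π ∧
  ∀ t ∈ Set.Icc (0 : ℝ) T,
    CondIndepOn π ((FilC T d t).comap Prod.snd)
      ((FilC T d t).comap Prod.fst) ((evalSigma T d T).comap Prod.snd)

/-- `μ` is a martingale measure on `C_0([0,T]; ℝ^d)`: every coordinate `X_t`, `t ∈ [0,T]`,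
is integrable and the canonical process is a martingale with respect to the right-continuous
natural filtration. -/
def IsMartingaleMeasureC (T : ℝ) (d : ℕ) (μ : Measure (ContPath T d)) : Prop :=
  (∀ t ∈ Set.Icc (0 : ℝ) T, Integrable (fun ω : ContPath T d => ω.1 t) μ) ∧
  ∀ s t : ℝ, 0 ≤ s → s ≤ t → t ≤ T →
    (μ[(fun ω : ContPath T d => ω.1 t) | FilC T d s]) =ᵐ[μ] (fun ω => ω.1 s)


/-- The `ℓ_e` norm on `ℝ^d`. -/
def lpnorm {d : ℕ} (e : ℝ) (v : Fin d → ℝ) : ℝ := (∑ i, |v i| ^ e) ^ (1 / e)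

/-- The sup norm `‖ω‖_∞ = sup_{t ∈ [0,T]} ‖ω_t‖` of a path. -/
def pathSup (T : ℝ) {d : ℕ} (ω : ℝ → Fin d → ℝ) : ℝ :=
  ⨆ t : Set.Icc (0 : ℝ) T, ‖ω t.1‖

/-- `ω : ℝ → ℝ^d` is càdlàg on `[0,T]`. -/
def CadlagOn (T : ℝ) {d : ℕ} (ω : ℝ → Fin d → ℝ) : Prop :=
  (∀ t ∈ Set.Ico (0 : ℝ) T, Tendsto ω (nhdsWithin t (Set.Ioc t T)) (nhds (ω t))) ∧
  (∀ t ∈ Set.Ioc (0 : ℝ) T, ∃ l : Fin d → ℝ, Tendsto ω (nhdsWithin t (Set.Ico 0 t)) (nhds l))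

/-- The bump path `e·1_{[t,T]}`. -/
def bump (T : ℝ) {d : ℕ} (t : ℝ) (e : Fin d → ℝ) : ℝ → Fin d → ℝ :=
  Set.indicator (Set.Icc t T) (fun _ => e)

/-- `f` is pathwise Malliavin differentiable on `D([0,T]; ℝ^d)` with derivative `Df`. -/
def HasPathwiseMalliavinDeriv (T : ℝ) {d : ℕ} (f : (ℝ → Fin d → ℝ) → ℝ)
    (Df : (ℝ → Fin d → ℝ) → ℝ → Fin d → ℝ) : Prop :=
  ∀ ω : ℝ → Fin d → ℝ, CadlagOn T ω → ∀ t ∈ Set.Icc (0 : ℝ) T, ∀ e : Fin d → ℝ,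
    Tendsto (fun ε : ℝ => (f (ω + ε • bump T t e) - f ω) / ε)
      (nhdsWithin 0 {(0 : ℝ)}ᶜ) (nhds (∑ i, Df ω t i * e i))

/-- Continuity of a real functional on càdlàg paths w.r.t. the uniform norm on `[0,T]`. -/
def UnifContOnCadlag (T : ℝ) {d : ℕ} (f : (ℝ → Fin d → ℝ) → ℝ) : Prop :=
  ∀ (ω : ℝ → Fin d → ℝ) (ωs : ℕ → ℝ → Fin d → ℝ),
    CadlagOn T ω → (∀ n, CadlagOn T (ωs n)) →
    TendstoUniformlyOn ωs ω atTop (Set.Icc 0 T) →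
    Tendsto (fun n => f (ωs n)) atTop (nhds (f ω))

/-- Continuity of an `ℝ^d`-valued functional on càdlàg paths w.r.t. the uniform norm. -/
def UnifContOnCadlagVec (T : ℝ) {d : ℕ} (F : (ℝ → Fin d → ℝ) → Fin d → ℝ) : Prop :=
  ∀ (ω : ℝ → Fin d → ℝ) (ωs : ℕ → ℝ → Fin d → ℝ),
    CadlagOn T ω → (∀ n, CadlagOn T (ωs n)) →
    TendstoUniformlyOn ωs ω atTop (Set.Icc 0 T) →
    Tendsto (fun n => F (ωs n)) atTop (nhds (F ω))

/-- `F : [0,T] × D([0,T];ℝ^d) → ℝ^d` has left limits. -/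
def HasLeftLimits (T : ℝ) {d : ℕ} (F : (ℝ → Fin d → ℝ) → ℝ → Fin d → ℝ) : Prop :=
  ∀ ω : ℝ → Fin d → ℝ, CadlagOn T ω → ∀ t ∈ Set.Ioc (0 : ℝ) T, ∃ l : Fin d → ℝ,
    ∀ (ωs : ℕ → ℝ → Fin d → ℝ) (ts : ℕ → ℝ),
      (∀ n, CadlagOn T (ωs n)) →
      TendstoUniformlyOn ωs ω atTop (Set.Icc 0 T) →
      (∀ n, ts n < t) → Monotone ts → Tendsto ts atTop (nhds t) →
      Tendsto (fun n => F (ωs n) (ts n)) atTop (nhds l)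

/-- `F` is boundedness preserving. -/
def BoundednessPreserving (T : ℝ) {d : ℕ} (F : (ℝ → Fin d → ℝ) → ℝ → Fin d → ℝ) : Prop :=
  ∀ K : ℝ, 0 < K → ∃ M : ℝ,
    ∀ ω : ℝ → Fin d → ℝ, CadlagOn T ω → (∀ s ∈ Set.Icc (0 : ℝ) T, ‖ω s‖ < K) →
      ∀ t ∈ Set.Icc (0 : ℝ) T, ‖F ω t‖ ≤ M

/-- The hyperbolic transport cost `c(ω,η) = ‖ω − η‖_{W₀^{1,p}}^p = ∫_0^T |(ω−η)'(t)|^p dt`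
if `ω − η` is absolutely continuous with an `L¹` derivative, and `+∞` otherwise. -/
def hcost (T p : ℝ) {d : ℕ} (ω η : ℝ → Fin d → ℝ) : ℝ≥0∞ :=
  sInf {v : ℝ≥0∞ | ∃ g : ℝ → Fin d → ℝ,
    MeasureTheory.IntegrableOn g (Set.Icc 0 T) ∧
    (∀ t ∈ Set.Icc (0 : ℝ) T, ω t - η t = ∫ s in Set.Ioc (0 : ℝ) t, g s) ∧
    v = ∫⁻ t in Set.Icc (0 : ℝ) T, ENNReal.ofReal (lpnorm p (g t) ^ p)}

/-- Standing assumptions on the penalty function `L`. -/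
structure PenaltyAssumptions (p : ℝ) (L : ℝ → ℝ≥0∞) : Prop where
  cont : ContinuousOn L (Set.Ici 0)
  mono : MonotoneOn L (Set.Ici 0)
  zero : L 0 = 0
  growth : Tendsto (fun u : ℝ => L u / ENNReal.ofReal (u ^ p)) atTop (nhds ⊤)

/-- The convex conjugate `L*(v) = sup_{u ≥ 0} { u v − L(u) }`, valued in the extended reals. -/
def Lconj (L : ℝ → ℝ≥0∞) (v : ℝ) : EReal :=
  ⨆ u : {u : ℝ // 0 ≤ u}, ((u.1 * v : ℝ) : EReal) - ((L u.1 : ℝ≥0∞) : EReal)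

/-- The penalised causal DRO value in continuous time,
`V(δ) = sup_{π ∈ Π_c(μ,*), E_π[c] < ∞} { E_π[f(Y)] − δ L(E_π[c(X,Y)]^{1/p}/δ) }`. -/
def VC (T p : ℝ) {d : ℕ} (L : ℝ → ℝ≥0∞) (μ : Measure (ContPath T d))
    (f : ContPath T d → ℝ) (δ : ℝ) : EReal :=
  ⨆ π : {π : Measure (ContPath T d × ContPath T d) //
      IsProbabilityMeasure π ∧ IsCausalStarC T d μ π ∧
      (∫⁻ z, hcost T p z.1.1 z.2.1 ∂π) < ⊤},
    ((∫ z, f z.2 ∂π.1 : ℝ) : EReal) -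
      ((ENNReal.ofReal δ *
          L (((∫⁻ z, hcost T p z.1.1 z.2.1 ∂π.1).toReal) ^ (1 / p) / δ) : ℝ≥0∞) : EReal)

/-- The `k`-th point of the uniform grid with `n` cells on `[0,T]`. -/
def grid (T : ℝ) (n k : ℕ) : ℝ := T * k / n

/-- The index of the cell of the uniform grid with `n` cells that contains `t`. -/
def gridIdx (T : ℝ) (n : ℕ) (t : ℝ) : ℕ := ⌊t * n / T⌋₊

section Grid

variable {T : ℝ}

theorem grid_zero (n : ℕ) : grid T n 0 = 0 := by simp [grid]

theorem grid_self {n : ℕ} (hn : 0 < n) : grid T n n = T := by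
  have : (n : ℝ) ≠ 0 := by positivity
  simp [grid, this]

theorem grid_mono (hT : 0 < T) (n : ℕ) : Monotone (grid T n) := by
  intro a b hab
  unfold grid
  have : (a : ℝ) ≤ b := by exact_mod_cast hab
  gcongr

theorem grid_succ_sub (n k : ℕ) : grid T n (k + 1) - grid T n k = T / n := by
  unfold grid; push_cast; ring

theorem grid_mem_Icc (hT : 0 < T) {n k : ℕ} (hn : 0 < n) (hk : k ≤ n) :
    grid T n k ∈ Icc 0 T := by
  refine ⟨by unfold grid; positivity, ?_⟩
  calc grid T n k ≤ grid T n n := grid_mono hT n hk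
    _ = T := grid_self hn

theorem gridIdx_eq_iff (hT : 0 < T) {n : ℕ} (hn : 0 < n) {t : ℝ} (ht : 0 ≤ t) (k : ℕ) :
    gridIdx T n t = k ↔ grid T n k ≤ t ∧ t < grid T n (k + 1) := by
  have hn' : (0 : ℝ) < n := by exact_mod_cast hn
  unfold gridIdx grid
  rw [Nat.floor_eq_iff (by positivity), le_div_iff₀ hT, div_lt_iff₀ hT, div_le_iff₀ hn',
    lt_div_iff₀ hn']
  push_cast
  rw [mul_comm T, mul_comm T]

theorem grid_gridIdx_le (hT : 0 < T) {n : ℕ} (hn : 0 < n) {t : ℝ} (ht : 0 ≤ t) :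
    grid T n (gridIdx T n t) ≤ t :=
  ((gridIdx_eq_iff hT hn ht _).1 rfl).1

theorem lt_grid_gridIdx (hT : 0 < T) {n : ℕ} (hn : 0 < n) {t : ℝ} (ht : 0 ≤ t) :
    t < grid T n (gridIdx T n t + 1) :=
  ((gridIdx_eq_iff hT hn ht _).1 rfl).2

theorem gridIdx_lt (hT : 0 < T) {n : ℕ} (hn : 0 < n) {t : ℝ} (ht : t ∈ Ico 0 T) :
    gridIdx T n t < n := by
  by_contra! h
  have h1 := grid_gridIdx_le hT hn ht.1
  have h2 := grid_mono hT n h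
  rw [grid_self hn] at h2
  linarith [ht.2]

theorem tendsto_grid_gridIdx (hT : 0 < T) {t : ℝ} (ht : 0 ≤ t) :
    Tendsto (fun n : ℕ => grid T n (gridIdx T n t)) atTop (nhds t) := by
  have h0 : Tendsto (fun n : ℕ => t - T / n) atTop (nhds (t - 0)) :=
    tendsto_const_nhds.sub (tendsto_const_div_atTop_nhds_zero_nat T)
  rw [sub_zero] at h0
  refine tendsto_of_tendsto_of_tendsto_of_le_of_le' h0 tendsto_const_nhds ?_ ?_
  · filter_upwards [eventually_gt_atTop 0] with n hn
    have h1 := lt_grid_gridIdx hT hn ht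
    have h2 := grid_succ_sub (T := T) n (gridIdx T n t)
    linarith
  · filter_upwards [eventually_gt_atTop 0] with n hn
    exact grid_gridIdx_le hT hn ht

theorem tendsto_grid_gridIdx_succ (hT : 0 < T) {t : ℝ} (ht : 0 ≤ t) :
    Tendsto (fun n : ℕ => grid T n (gridIdx T n t + 1)) atTop (nhds t) := by
  have h0 := (tendsto_grid_gridIdx hT ht).add (tendsto_const_div_atTop_nhds_zero_nat T)
  rw [add_zero] at h0
  refine h0.congr fun n => ?_
  have h2 := grid_succ_sub (T := T) n (gridIdx T n t)
  linarith

theorem ae_tendsto_grid_gridIdx_lt (hT : 0 < T) :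
    ∀ᵐ t ∂volume.restrict (Ioo 0 T),
      Tendsto (fun n : ℕ => grid T n (gridIdx T n t)) atTop (nhdsWithin t (Iio t)) := by
  have hc : (range fun z : ℕ × ℕ => grid T z.1 z.2).Countable := countable_range _
  have h1 : ∀ᵐ t ∂volume.restrict (Ioo 0 T), t ∉ range fun z : ℕ × ℕ => grid T z.1 z.2 :=
    measure_mono_null (fun t ht => by simpa using ht) (hc.measure_zero _)
  filter_upwards [h1, ae_restrict_mem measurableSet_Ioo] with t h1 h2
  refine tendsto_nhdsWithin_iff.2 ⟨tendsto_grid_gridIdx hT h2.1.le, ?_⟩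
  filter_upwards [eventually_gt_atTop 0] with n hn
  refine lt_of_le_of_ne (grid_gridIdx_le hT hn h2.1.le) fun h => h1 ⟨(n, gridIdx T n t), h⟩

theorem measurable_gridIdx (n : ℕ) : Measurable (gridIdx T n) := by
  unfold gridIdx
  exact Nat.measurable_floor.comp (by fun_prop)

theorem integral_gridIdx (hT : 0 < T) {n : ℕ} (hn : 0 < n) (a : ℕ → ℝ) :
    ∫ t in Ioo 0 T, a (gridIdx T n t) = T / n * ∑ k ∈ Finset.range n, a k := by
  have key : ∀ k < n, ∀ t ∈ Ioo (grid T n k) (grid T n (k + 1)), a (gridIdx T n t) = a k := by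
    intro k hk t ht
    have h0 := (grid_mem_Icc hT hn hk.le).1
    rw [(gridIdx_eq_iff hT hn (h0.trans ht.1.le) k).2 ⟨ht.1.le, ht.2⟩]
  have hle : ∀ k, grid T n k ≤ grid T n (k + 1) := fun k => grid_mono hT n k.le_succ
  have hsum := intervalIntegral.sum_integral_adjacent_intervals (μ := volume)
    (f := fun t => a (gridIdx T n t)) (a := grid T n) (n := n) (fun k hk => by
      rw [intervalIntegrable_iff_integrableOn_Ioo_of_le (hle k)]
      refine IntegrableOn.congr_fun (f := fun _ => a k) ?_ (fun t ht => (key k hk t ht).symm)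
        measurableSet_Ioo
      exact integrableOn_const (by simp))
  rw [grid_zero, grid_self hn] at hsum
  rw [← integral_Ioc_eq_integral_Ioo, ← intervalIntegral.integral_of_le hT.le, ← hsum,
    Finset.mul_sum]
  refine Finset.sum_congr rfl fun k hk => ?_
  rw [intervalIntegral.integral_of_le (hle k), integral_Ioc_eq_integral_Ioo,
    setIntegral_congr_fun measurableSet_Ioo (key k (Finset.mem_range.1 hk))]
  simp only [integral_const, MeasurableSet.univ, measureReal_restrict_apply, univ_inter,
    Real.volume_real_Ioo_of_le (hle k), grid_succ_sub, smul_eq_mul]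

theorem tendsto_riemann_sum (hT : 0 < T) {ι : Type*} {l : Filter ι} [l.IsCountablyGenerated]
    (n : ι → ℕ) (hn : ∀ᶠ j in l, 0 < n j) (a : ι → ℕ → ℝ) (K : ℝ)
    (hK : ∀ᶠ j in l, ∀ k < n j, |a j k| ≤ K) (φ : ℝ → ℝ)
    (h : ∀ᵐ t ∂volume.restrict (Ioo 0 T),
      Tendsto (fun j => a j (gridIdx T (n j) t)) l (nhds (φ t))) :
    Tendsto (fun j => T / n j * ∑ k ∈ Finset.range (n j), a j k) l
      (nhds (∫ t in Ioo 0 T, φ t)) := by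
  have h1 : Tendsto (fun j => ∫ t in Ioo 0 T, a j (gridIdx T (n j) t)) l
      (nhds (∫ t in Ioo 0 T, φ t)) := by
    refine tendsto_integral_filter_of_dominated_convergence (fun _ => K) ?_ ?_ ?_ h
    · refine Eventually.of_forall fun j => ?_
      exact ((measurable_from_top (f := a j)).comp (measurable_gridIdx _)).aestronglyMeasurable
    · filter_upwards [hK, hn] with j hj hnj
      filter_upwards [ae_restrict_mem measurableSet_Ioo] with t ht
      exact hj _ (gridIdx_lt hT hnj ⟨ht.1.le, ht.2⟩)
    · exact integrable_const K
  refine h1.congr' ?_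
  filter_upwards [hn] with j hj
  exact integral_gridIdx hT hj (a j)

end Grid

/-- A two-point gauge that is Cauchy from the left at every point of `(0,T]` is Cauchy at
almost every point of `(0,T)`. -/
theorem ae_tendsto_prod_of_left (T : ℝ) (h : ℝ → ℝ → ℝ)
    (hh : ∀ t ∈ Ioc 0 T, Tendsto (fun z : ℝ × ℝ => h z.1 z.2)
      (nhdsWithin t (Iio t) ×ˢ nhdsWithin t (Iio t)) (nhds 0)) :
    ∀ᵐ t ∂volume.restrict (Ioo 0 T),
      Tendsto (fun z : ℝ × ℝ => h z.1 z.2) (nhds t ×ˢ nhds t) (nhds 0) := by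
  let S : ℕ → Set ℝ := fun n =>
    {t | t ∈ Ioo 0 T ∧ ¬ ∃ U ∈ nhds t, ∀ x ∈ U, ∀ y ∈ U, |h x y| < 1 / ((n : ℝ) + 1)}
  have hS : ∀ n, (S n).Countable := by
    intro n
    suffices hsub : S n ⊆ {x | x ∈ S n ∧ nhdsWithin x (S n ∩ Iio x) = ⊥} from
      countable_setOfPred_isolated_left_within.mono hsub
    intro t ht
    refine ⟨ht, ?_⟩
    have h1 : ∀ᶠ z : ℝ × ℝ in nhdsWithin t (Iio t) ×ˢ nhdsWithin t (Iio t),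
        |h z.1 z.2| < 1 / ((n : ℝ) + 1) := by
      have := (hh t ⟨ht.1.1, ht.1.2.le⟩).eventually
        (Metric.ball_mem_nhds (0 : ℝ) (Nat.one_div_pos_of_nat (n := n)))
      filter_upwards [this] with z hz
      simpa [Real.dist_eq] using hz
    obtain ⟨U, hU, hUh⟩ :=
      (eventually_prod_self_iff (r := fun x y => |h x y| < 1 / ((n : ℝ) + 1))).1 h1
    obtain ⟨a, ha, haU⟩ := (mem_nhdsLT_iff_exists_Ioo_subset (a := t)).1 hU
    have : Ioo a t ∈ nhdsWithin t (S n ∩ Iio t) :=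
      nhdsWithin_mono t inter_subset_right (Ioo_mem_nhdsLT ha)
    rw [← empty_mem_iff_bot]
    filter_upwards [this, self_mem_nhdsWithin] with t' h1 h2
    refine h2.1.2 ⟨Ioo a t, Ioo_mem_nhds h1.1 h1.2,
      fun x hx y hy => hUh x (haU hx) y (haU hy)⟩
  have h0 : ∀ᵐ t ∂volume.restrict (Ioo 0 T), t ∉ ⋃ n, S n :=
    measure_mono_null (fun t ht => by simpa using ht)
      ((countable_iUnion hS).measure_zero _)
  filter_upwards [h0, ae_restrict_mem measurableSet_Ioo] with t h1 h2
  rw [Metric.tendsto_nhds]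
  intro ε hε
  obtain ⟨n, hn⟩ := exists_nat_one_div_lt hε
  have h3 : ∃ U ∈ nhds t, ∀ x ∈ U, ∀ y ∈ U, |h x y| < 1 / ((n : ℝ) + 1) := by
    by_contra h4
    exact h1 (mem_iUnion.2 ⟨n, h2, h4⟩)
  have h4 : ∀ᶠ z : ℝ × ℝ in nhds t ×ˢ nhds t, |h z.1 z.2| < 1 / ((n : ℝ) + 1) :=
    (eventually_prod_self_iff (r := fun x y => |h x y| < 1 / ((n : ℝ) + 1))).2 h3
  filter_upwards [h4] with z hz
  simpa [Real.dist_eq] using hz.trans hn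

/-- Hölder's inequality for finite sums of expectations, with weights matching a uniform grid. -/
theorem abs_sum_integral_mul_le {Ω : Type*} [MeasurableSpace Ω] {π : Measure Ω} {p q : ℝ}
    (hpq : q.HolderConjugate p) {ι : Type*} (s : Finset ι) (A B : ι → Ω → ℝ)
    (hA : ∀ j ∈ s, MemLp (A j) (ENNReal.ofReal q) π)
    (hB : ∀ j ∈ s, MemLp (B j) (ENNReal.ofReal p) π) {w r : ℝ} (hw : 0 < w) (hr : 0 ≤ r)
    (hBr : ∑ j ∈ s, ∫ z, |B j z| ^ p ∂π ≤ w ^ (p - 1) * r ^ p) :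
    ∑ j ∈ s, ∫ z, |A j z| * |B j z| ∂π ≤
      (w * ∑ j ∈ s, ∫ z, |A j z| ^ q ∂π) ^ (1 / q) * r := by
  have hq0 : 0 < q := hpq.pos
  have hp0 : 0 < p := hpq.symm.pos
  have hin : ∀ (f : Ω → ℝ) (e : ℝ), 0 ≤ ∫ z, |f z| ^ e ∂π := fun f e =>
    integral_nonneg fun z => by positivity
  calc ∑ j ∈ s, ∫ z, |A j z| * |B j z| ∂π
      ≤ ∑ j ∈ s, (∫ z, |A j z| ^ q ∂π) ^ (1 / q) * (∫ z, |B j z| ^ p ∂π) ^ (1 / p) := by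
        refine Finset.sum_le_sum fun j hj => ?_
        exact integral_mul_le_Lp_mul_Lq_of_nonneg hpq
          (Eventually.of_forall fun z => abs_nonneg _)
          (Eventually.of_forall fun z => abs_nonneg _) (hA j hj).abs (hB j hj).abs
    _ ≤ (∑ j ∈ s, |(∫ z, |A j z| ^ q ∂π) ^ (1 / q)| ^ q) ^ (1 / q) *
          (∑ j ∈ s, |(∫ z, |B j z| ^ p ∂π) ^ (1 / p)| ^ p) ^ (1 / p) :=
        Real.inner_le_Lp_mul_Lq s _ _ hpq
    _ = (∑ j ∈ s, ∫ z, |A j z| ^ q ∂π) ^ (1 / q) *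
          (∑ j ∈ s, ∫ z, |B j z| ^ p ∂π) ^ (1 / p) := by
        have e1 : ∀ (x e : ℝ), 0 < e → 0 ≤ x → |x ^ (1 / e)| ^ e = x := by
          intro x e he hx
          rw [abs_of_nonneg (by positivity), ← Real.rpow_mul hx, one_div_mul_cancel he.ne',
            Real.rpow_one]
        simp only [e1 _ q hq0 (hin _ _), e1 _ p hp0 (hin _ _)]
    _ ≤ (∑ j ∈ s, ∫ z, |A j z| ^ q ∂π) ^ (1 / q) * (w ^ (p - 1) * r ^ p) ^ (1 / p) := by
        have : 0 ≤ ∑ j ∈ s, ∫ z, |B j z| ^ p ∂π := Finset.sum_nonneg fun j _ => hin _ _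
        have : 0 ≤ ∑ j ∈ s, ∫ z, |A j z| ^ q ∂π := Finset.sum_nonneg fun j _ => hin _ _
        gcongr
    _ = (w * ∑ j ∈ s, ∫ z, |A j z| ^ q ∂π) ^ (1 / q) * r := by
        have : 0 ≤ ∑ j ∈ s, ∫ z, |A j z| ^ q ∂π := Finset.sum_nonneg fun j _ => hin _ _
        rw [Real.mul_rpow hw.le this, Real.mul_rpow (by positivity) (by positivity),
          ← Real.rpow_mul hw.le, ← Real.rpow_mul hr, mul_one_div_cancel hp0.ne', Real.rpow_one]
        have : (p - 1) * (1 / p) = 1 / q := by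
          have := hpq.inv_add_inv_eq_one
          field_simp at this ⊢
          linarith
        rw [this]; ring

/-- The càdlàg path that is equal to `V k` on the `k`-th cell of the uniform grid. -/
def stepPath (T : ℝ) {d : ℕ} (n : ℕ) (V : Fin (n + 1) → Fin d → ℝ) : ℝ → Fin d → ℝ :=
  fun t => V ⟨min (gridIdx T n t) n, by omega⟩

/-- The path `x` shifted by the first `k` increments `h j - h (j + 1)`, at the grid points. -/
def shiftPath (T : ℝ) {d : ℕ} (n : ℕ) (x : ℝ → Fin d → ℝ) (h : ℕ → Fin d → ℝ) (k : ℕ) :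
    ℝ → Fin d → ℝ :=
  x + ∑ j ∈ Finset.range k, bump T (grid T n j) (h j - h (j + 1))

section Paths

variable {T : ℝ} {d : ℕ}

theorem CadlagOn.add {x y : ℝ → Fin d → ℝ} (hx : CadlagOn T x) (hy : CadlagOn T y) :
    CadlagOn T (x + y) := by
  refine ⟨fun t ht => (hx.1 t ht).add (hy.1 t ht), fun t ht => ?_⟩
  obtain ⟨l, hl⟩ := hx.2 t ht
  obtain ⟨l', hl'⟩ := hy.2 t ht
  exact ⟨l + l', hl.add hl'⟩

theorem CadlagOn.smul {x : ℝ → Fin d → ℝ} (hx : CadlagOn T x) (c : ℝ) :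
    CadlagOn T (c • x) := by
  refine ⟨fun t ht => (hx.1 t ht).const_smul c, fun t ht => ?_⟩
  obtain ⟨l, hl⟩ := hx.2 t ht
  exact ⟨c • l, hl.const_smul c⟩

theorem ContinuousOn.cadlagOn {x : ℝ → Fin d → ℝ} (hx : ContinuousOn x (Icc 0 T)) :
    CadlagOn T x := by
  refine ⟨fun t ht => ?_, fun t ht => ⟨x t, ?_⟩⟩
  · exact (hx t ⟨ht.1, ht.2.le⟩).mono fun s hs => ⟨ht.1.trans hs.1.le, hs.2⟩
  · exact (hx t ⟨ht.1.le, ht.2⟩).mono fun s hs => ⟨hs.1, hs.2.le.trans ht.2⟩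

theorem cadlagOn_bump (t : ℝ) (e : Fin d → ℝ) : CadlagOn T (bump T t e) := by
  refine ⟨fun s hs => ?_, fun s hs => ?_⟩
  · refine tendsto_const_nhds.congr' ?_
    by_cases hts : t ≤ s
    · filter_upwards [self_mem_nhdsWithin] with u hu
      rw [bump, indicator_of_mem (show s ∈ Icc t T from ⟨hts, hs.2.le⟩),
        indicator_of_mem (show u ∈ Icc t T from ⟨hts.trans hu.1.le, hu.2⟩)]
    · have : Iio t ∈ nhdsWithin s (Ioc s T) := mem_nhdsWithin_of_mem_nhds (Iio_mem_nhds (by simpa using hts))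
      filter_upwards [this] with u hu
      rw [bump, indicator_of_notMem (fun h => hts h.1),
        indicator_of_notMem (fun h => (not_le.2 hu) h.1)]
  · by_cases hts : t < s
    · refine ⟨e, tendsto_const_nhds.congr' ?_⟩
      have : Ioi t ∈ nhdsWithin s (Ico 0 s) := mem_nhdsWithin_of_mem_nhds (Ioi_mem_nhds hts)
      filter_upwards [this, self_mem_nhdsWithin] with u hu hu'
      rw [bump, indicator_of_mem (show u ∈ Icc t T from ⟨le_of_lt hu, hu'.2.le.trans hs.2⟩)]
    · refine ⟨0, tendsto_const_nhds.congr' ?_⟩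
      filter_upwards [self_mem_nhdsWithin] with u hu
      rw [bump, indicator_of_notMem (fun h => hts (h.1.trans_lt hu.2))]

theorem cadlagOn_stepPath (hT : 0 < T) {n : ℕ} (hn : 0 < n) (V : Fin (n + 1) → Fin d → ℝ) :
    CadlagOn T (stepPath T n V) := by
  refine ⟨fun t ht => ?_, fun t ht => ?_⟩
  · refine tendsto_const_nhds.congr' ?_
    have : Iio (grid T n (gridIdx T n t + 1)) ∈ nhdsWithin t (Ioc t T) :=
      mem_nhdsWithin_of_mem_nhds (Iio_mem_nhds (lt_grid_gridIdx hT hn ht.1))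
    filter_upwards [this, self_mem_nhdsWithin] with s hs hs'
    have : gridIdx T n s = gridIdx T n t :=
      (gridIdx_eq_iff hT hn (ht.1.trans hs'.1.le) _).2
        ⟨(grid_gridIdx_le hT hn ht.1).trans hs'.1.le, hs⟩
    simp only [stepPath, this]
  · obtain ⟨k, hk, hk'⟩ : ∃ k, grid T n k < t ∧ t ≤ grid T n (k + 1) := by
      rcases (grid_gridIdx_le hT hn ht.1.le).lt_or_eq with h | h
      · exact ⟨_, h, (lt_grid_gridIdx hT hn ht.1.le).le⟩
      · rcases hi : gridIdx T n t with _ | k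
        · rw [hi, grid_zero] at h
          exact absurd h ht.1.ne
        · refine ⟨k, ?_, by rw [← hi, h]⟩
          have := grid_succ_sub (T := T) n k
          rw [← hi, h] at this
          have hd : 0 < T / n := by positivity
          linarith
    refine ⟨V ⟨min k n, by omega⟩, tendsto_const_nhds.congr' ?_⟩
    have : Ioi (grid T n k) ∈ nhdsWithin t (Ico 0 t) :=
      mem_nhdsWithin_of_mem_nhds (Ioi_mem_nhds hk)
    filter_upwards [this, self_mem_nhdsWithin] with s hs hs'
    have : gridIdx T n s = k :=
      (gridIdx_eq_iff hT hn hs'.1 _).2 ⟨le_of_lt hs, hs'.2.trans_le hk'⟩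
    simp only [stepPath, this]

theorem cadlagOn_shiftPath (n : ℕ) {x : ℝ → Fin d → ℝ} (hx : ContinuousOn x (Icc 0 T))
    (h : ℕ → Fin d → ℝ) (k : ℕ) : CadlagOn T (shiftPath T n x h k) := by
  induction k with
  | zero => simpa [shiftPath] using hx.cadlagOn
  | succ k ih =>
    have : shiftPath T n x h (k + 1) =
        shiftPath T n x h k + bump T (grid T n k) (h k - h (k + 1)) := by
      simp [shiftPath, Finset.sum_range_succ, add_assoc]
    rw [this]
    exact ih.add (cadlagOn_bump _ _)

theorem norm_stepPath_le {n : ℕ} (V : Fin (n + 1) → Fin d → ℝ) (t : ℝ) :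
    ‖stepPath T n V t‖ ≤ ‖V‖ := norm_le_pi_norm V _

theorem pathSup_le {ω : ℝ → Fin d → ℝ} {K : ℝ} (hK : 0 ≤ K) (h : ∀ t ∈ Icc 0 T, ‖ω t‖ ≤ K) :
    pathSup T ω ≤ K := Real.iSup_le (fun t => h t.1 t.2) hK

theorem pathSup_nonneg (ω : ℝ → Fin d → ℝ) : 0 ≤ pathSup T ω :=
  Real.iSup_nonneg fun _ => norm_nonneg _

theorem UnifContOnCadlag.congr {F : (ℝ → Fin d → ℝ) → ℝ} (hF : UnifContOnCadlag T F)
    {x y : ℝ → Fin d → ℝ} (hx : CadlagOn T x) (hy : CadlagOn T y) (h : EqOn x y (Icc 0 T)) :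
    F x = F y := by
  have h1 := hF x (fun _ => y) hx (fun _ => hy) (by
    rw [Metric.tendstoUniformlyOn_iff]
    intro ε hε
    refine Eventually.of_forall fun n t ht => ?_
    rw [h ht, dist_self]; exact hε)
  exact tendsto_nhds_unique h1 tendsto_const_nhds

theorem UnifContOnCadlagVec.apply {F : (ℝ → Fin d → ℝ) → Fin d → ℝ}
    (hF : UnifContOnCadlagVec T F) (i : Fin d) : UnifContOnCadlag T fun ω => F ω i :=
  fun ω ωs h1 h2 h3 => (tendsto_pi_nhds.1 (hF ω ωs h1 h2 h3)) i

theorem UnifContOnCadlagVec.congr {F : (ℝ → Fin d → ℝ) → Fin d → ℝ}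
    (hF : UnifContOnCadlagVec T F) {x y : ℝ → Fin d → ℝ} (hx : CadlagOn T x)
    (hy : CadlagOn T y) (h : EqOn x y (Icc 0 T)) : F x = F y :=
  funext fun i => (hF.apply i).congr hx hy h

theorem tendstoUniformlyOn_stepPath_grid (hT : 0 < T) {x : ℝ → Fin d → ℝ}
    (hx : ContinuousOn x (Icc 0 T)) :
    TendstoUniformlyOn
      (fun (m : ℕ) => stepPath T (m + 1) fun k => x (grid T (m + 1) k)) x atTop (Icc 0 T) := by
  have huc := isCompact_Icc.uniformContinuousOn_of_continuous hx
  rw [Metric.uniformContinuousOn_iff] at huc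
  rw [Metric.tendstoUniformlyOn_iff]
  intro ε hε
  obtain ⟨η, hη, h⟩ := huc ε hε
  have h0 : Tendsto (fun m : ℕ => T / ((m + 1 : ℕ) : ℝ)) atTop (nhds 0) :=
    (tendsto_const_div_atTop_nhds_zero_nat T).comp (tendsto_add_atTop_nat 1)
  filter_upwards [h0.eventually (gt_mem_nhds hη)] with m hm t ht
  refine h _ ht _ (grid_mem_Icc hT m.succ_pos (min_le_right _ _)) ?_
  have h1 := grid_gridIdx_le hT m.succ_pos ht.1
  have h2 := lt_grid_gridIdx hT m.succ_pos ht.1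
  have h3 := grid_succ_sub (T := T) (m + 1) (gridIdx T (m + 1) t)
  have hle : grid T (m + 1) (min (gridIdx T (m + 1) t) (m + 1)) =
      grid T (m + 1) (gridIdx T (m + 1) t) := by
    rcases le_total (gridIdx T (m + 1) t) (m + 1) with h4 | h4
    · rw [min_eq_left h4]
    · rw [min_eq_right h4]
      refine le_antisymm (grid_mono hT _ h4) ?_
      rw [grid_self m.succ_pos]
      exact h1.trans ht.2
  simp only [hle]
  rw [Real.dist_eq, abs_lt]
  constructor <;> linarith

theorem tendstoUniformlyOn_stepPath {n : ℕ} {ι : Type*} {l : Filter ι}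
    {V : ι → Fin (n + 1) → Fin d → ℝ} {V₀ : Fin (n + 1) → Fin d → ℝ}
    (h : Tendsto V l (nhds V₀)) (s : Set ℝ) :
    TendstoUniformlyOn (fun j => stepPath T n (V j)) (stepPath T n V₀) l s := by
  rw [Metric.tendstoUniformlyOn_iff]
  intro ε hε
  filter_upwards [Metric.tendsto_nhds.1 h ε hε] with j hj t _
  rw [dist_comm]
  exact (dist_le_pi_dist (V j) V₀ _).trans_lt hj

theorem UnifContOnCadlag.continuous_stepPath (hT : 0 < T) {F : (ℝ → Fin d → ℝ) → ℝ}
    (hF : UnifContOnCadlag T F) {n : ℕ} (hn : 0 < n) {x : ℝ → Fin d → ℝ} (hx : CadlagOn T x) :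
    Continuous fun V : Fin (n + 1) → Fin d → ℝ => F (x + stepPath T n V) := by
  refine continuous_iff_seqContinuous.2 fun V V₀ hV => ?_
  refine hF _ _ (hx.add (cadlagOn_stepPath hT hn _))
    (fun j => hx.add (cadlagOn_stepPath hT hn _)) ?_
  have h1 : TendstoUniformlyOn (fun _ : ℕ => x) x atTop (Icc 0 T) := by
    rw [Metric.tendstoUniformlyOn_iff]
    intro ε hε
    exact Eventually.of_forall fun n t _ => by rw [dist_self]; exact hε
  exact h1.add (tendstoUniformlyOn_stepPath hV _)

theorem UnifContOnCadlag.continuous_stepPath_add (hT : 0 < T) {F : (ℝ → Fin d → ℝ) → ℝ}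
    (hF : UnifContOnCadlag T F) {m n : ℕ} (hm : 0 < m) (hn : 0 < n) :
    Continuous fun V : (Fin (m + 1) → Fin d → ℝ) × (Fin (n + 1) → Fin d → ℝ) =>
      F (stepPath T m V.1 + stepPath T n V.2) := by
  refine continuous_iff_seqContinuous.2 fun V V₀ hV => ?_
  refine hF _ _ ((cadlagOn_stepPath hT hm _).add (cadlagOn_stepPath hT hn _))
    (fun j => (cadlagOn_stepPath hT hm _).add (cadlagOn_stepPath hT hn _)) ?_
  exact (tendstoUniformlyOn_stepPath ((continuous_fst.tendsto _).comp hV) _).add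
    (tendstoUniformlyOn_stepPath ((continuous_snd.tendsto _).comp hV) _)

theorem UnifContOnCadlag.measurable_comp (hT : 0 < T) {F : (ℝ → Fin d → ℝ) → ℝ}
    (hF : UnifContOnCadlag T F) {Ω : Type*} [MeasurableSpace Ω] {x : Ω → ℝ → Fin d → ℝ}
    (hc : ∀ z, ContinuousOn (x z) (Icc 0 T)) (hm : ∀ t ∈ Icc 0 T, Measurable fun z => x z t)
    {n : ℕ} (hn : 0 < n) {V : Ω → Fin (n + 1) → Fin d → ℝ} (hV : Measurable V) :
    Measurable fun z => F (x z + stepPath T n (V z)) := by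
  refine measurable_of_tendsto_metrizable
    (f := fun (m : ℕ) z => F (stepPath T (m + 1) (fun k => x z (grid T (m + 1) k)) +
      stepPath T n (V z))) (fun m => ?_) (tendsto_pi_nhds.2 fun z => ?_)
  · refine (hF.continuous_stepPath_add hT m.succ_pos hn).measurable.comp
      (Measurable.prodMk (measurable_pi_lambda _ fun k => ?_) hV)
    exact hm _ (grid_mem_Icc hT m.succ_pos (Nat.lt_succ_iff.1 k.2))
  · refine hF _ _ ((hc z).cadlagOn.add (cadlagOn_stepPath hT hn _))
      (fun m => (cadlagOn_stepPath hT m.succ_pos _).add (cadlagOn_stepPath hT hn _)) ?_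
    refine (tendstoUniformlyOn_stepPath_grid hT (hc z)).add ?_
    exact tendstoUniformlyOn_stepPath tendsto_const_nhds _

theorem UnifContOnCadlag.measurable_comp_continuous (hT : 0 < T) {F : (ℝ → Fin d → ℝ) → ℝ}
    (hF : UnifContOnCadlag T F) {Ω : Type*} [MeasurableSpace Ω] {x : Ω → ℝ → Fin d → ℝ}
    (hc : ∀ z, ContinuousOn (x z) (Icc 0 T)) (hm : ∀ t ∈ Icc 0 T, Measurable fun z => x z t) :
    Measurable fun z => F (x z) := by
  have h1 := hF.measurable_comp hT hc hm one_pos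
    (V := fun _ => 0) measurable_const
  have h2 : stepPath T 1 (0 : Fin 2 → Fin d → ℝ) = 0 := rfl
  simpa [h2] using h1

theorem HasLeftLimits.exists_uniform {F : (ℝ → Fin d → ℝ) → ℝ → Fin d → ℝ}
    (hF : HasLeftLimits T F) {x : ℝ → Fin d → ℝ} (hx : CadlagOn T x) {t : ℝ}
    (ht : t ∈ Ioc 0 T) :
    ∃ l : Fin d → ℝ, ∀ ε > 0, ∃ η > 0, ∀ y : ℝ → Fin d → ℝ, CadlagOn T y →
      (∀ s ∈ Icc 0 T, ‖y s - x s‖ < η) → ∀ s ∈ Ioo (t - η) t, ‖F y s - l‖ < ε := by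
  obtain ⟨l, hl⟩ := hF x hx t ht
  refine ⟨l, fun ε hε => ?_⟩
  by_contra! hcon
  choose! y hy hyx s hs hys using hcon
  let η : ℕ → ℝ := fun k => Nat.rec 1 (fun k e => min (1 / ((k : ℝ) + 2)) (t - s e)) k
  have hη1 : ∀ k, η (k + 1) = min (1 / ((k : ℝ) + 2)) (t - s (η k)) := fun k => rfl
  have hηpos : ∀ k, 0 < η k := by
    intro k
    induction k with
    | zero => exact one_pos
    | succ k ih =>
      rw [hη1]
      exact lt_min (by positivity) (sub_pos.2 (hs _ ih).2)
  have hηle : ∀ k, η k ≤ 1 / ((k : ℝ) + 1) := by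
    intro k
    cases k with
    | zero => simp [η]
    | succ k => rw [hη1]; push_cast; exact (min_le_left _ _).trans_eq (by ring)
  have hη0 : Tendsto η atTop (nhds 0) :=
    tendsto_of_tendsto_of_tendsto_of_le_of_le tendsto_const_nhds
      tendsto_one_div_add_atTop_nhds_zero_nat (fun k => (hηpos k).le) hηle
  have h1 := hl (fun k => y (η k)) (fun k => s (η k)) (fun k => hy _ (hηpos k)) ?_
    (fun k => (hs _ (hηpos k)).2) ?_ ?_
  · obtain ⟨k, hk⟩ := (Metric.tendsto_nhds.1 h1 ε hε).exists
    rw [dist_eq_norm] at hk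
    exact absurd hk (not_lt.2 (hys _ (hηpos k)))
  · rw [Metric.tendstoUniformlyOn_iff]
    intro ε' hε'
    filter_upwards [hη0.eventually (gt_mem_nhds hε')] with k hk u hu
    rw [dist_comm, dist_eq_norm]
    exact (hyx _ (hηpos k) u hu).trans hk
  · refine monotone_nat_of_le_succ fun k => ?_
    have h2 := (hs _ (hηpos (k + 1))).1
    have h3 : η (k + 1) ≤ t - s (η k) := (hη1 k).trans_le (min_le_right _ _)
    linarith
  · have h4 : Tendsto (fun k => t - η k) atTop (nhds (t - 0)) := tendsto_const_nhds.sub hη0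
    rw [sub_zero] at h4
    exact tendsto_of_tendsto_of_tendsto_of_le_of_le h4 tendsto_const_nhds
      (fun k => (hs _ (hηpos k)).1.le) (fun k => (hs _ (hηpos k)).2.le)

end Paths

section Telescoping

variable {T : ℝ} {d : ℕ}

theorem shiftPath_succ (n : ℕ) (x : ℝ → Fin d → ℝ) (h : ℕ → Fin d → ℝ) (k : ℕ) :
    shiftPath T n x h (k + 1) =
      shiftPath T n x h k + (1 : ℝ) • bump T (grid T n k) (h k - h (k + 1)) := by
  simp [shiftPath, Finset.sum_range_succ, add_assoc]

theorem bump_grid_apply (hT : 0 < T) {n : ℕ} (hn : 0 < n) (k : ℕ) (e : Fin d → ℝ) {t : ℝ}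
    (ht : t ∈ Icc 0 T) : bump T (grid T n k) e t = if k ≤ gridIdx T n t then e else 0 := by
  have hiff : grid T n k ≤ t ↔ k ≤ gridIdx T n t := by
    constructor
    · intro h
      by_contra! hlt
      have := grid_mono hT n hlt
      exact absurd (lt_grid_gridIdx hT hn ht.1) (not_lt.2 (this.trans h))
    · exact fun h => (grid_mono hT n h).trans (grid_gridIdx_le hT hn ht.1)
  unfold bump
  simp only [indicator, mem_Icc, ht.2, and_true, hiff]

theorem shiftPath_apply (hT : 0 < T) {n : ℕ} (hn : 0 < n) (x : ℝ → Fin d → ℝ)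
    {h : ℕ → Fin d → ℝ} (h0 : h 0 = 0) (k : ℕ) {t : ℝ} (ht : t ∈ Icc 0 T) :
    shiftPath T n x h k t = x t - h (min k (gridIdx T n t + 1)) := by
  induction k with
  | zero => simp [shiftPath, h0]
  | succ k ih =>
    rw [shiftPath_succ, Pi.add_apply, ih, one_smul, bump_grid_apply hT hn k _ ht]
    split_ifs with hk
    · rw [min_eq_left (by omega), min_eq_left (by omega)]; abel
    · rw [min_eq_right (by omega), min_eq_right (by omega), add_zero]

theorem shiftPath_eqOn_stepPath (hT : 0 < T) {n : ℕ} (hn : 0 < n) (x : ℝ → Fin d → ℝ)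
    {h : ℕ → Fin d → ℝ} (h0 : h 0 = 0) :
    EqOn (shiftPath T n x h n)
      (x + stepPath T n fun k => - h (min n ((k : ℕ) + 1))) (Icc 0 T) := by
  intro t ht
  rw [shiftPath_apply hT hn x h0 n ht, Pi.add_apply, stepPath, sub_eq_add_neg]
  have : min n (min (gridIdx T n t) n + 1) = min n (gridIdx T n t + 1) := by omega
  simp only [this]

theorem hasDerivAt_add_smul_bump {f : (ℝ → Fin d → ℝ) → ℝ}
    {Df : (ℝ → Fin d → ℝ) → ℝ → Fin d → ℝ} (hdiff : HasPathwiseMalliavinDeriv T f Df)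
    {x : ℝ → Fin d → ℝ} (hx : CadlagOn T x) {t : ℝ} (ht : t ∈ Icc 0 T) (e : Fin d → ℝ) (r : ℝ) :
    HasDerivAt (fun r : ℝ => f (x + r • bump T t e))
      (∑ i, Df (x + r • bump T t e) t i * e i) r := by
  rw [hasDerivAt_iff_tendsto_slope_zero]
  refine (hdiff _ (hx.add ((cadlagOn_bump t e).smul r)) t ht e).congr fun ε => ?_
  rw [add_smul, ← add_assoc, smul_eq_mul]
  ring

theorem exists_shiftPath_succ_sub_eq (hT : 0 < T) {f : (ℝ → Fin d → ℝ) → ℝ}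
    {Df : (ℝ → Fin d → ℝ) → ℝ → Fin d → ℝ} (hdiff : HasPathwiseMalliavinDeriv T f Df)
    (hDcont : ∀ t ∈ Icc 0 T, UnifContOnCadlagVec T (fun ω => Df ω t))
    {n k : ℕ} (hk : k < n) {x : ℝ → Fin d → ℝ} (hx : ContinuousOn x (Icc 0 T))
    {h : ℕ → Fin d → ℝ} (h0 : h 0 = 0) :
    ∃ V : Fin (n + 1) → Fin d → ℝ, ‖V‖ ≤ ‖fun j : Fin (n + 1) => h j‖ ∧
      f (shiftPath T n x h (k + 1)) - f (shiftPath T n x h k) =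
        ∑ i, Df (x + stepPath T n V) (grid T n k) i * (h k i - h (k + 1) i) := by
  have hn : 0 < n := by omega
  have ht := grid_mem_Icc hT hn hk.le
  set e := h k - h (k + 1) with he
  have hc := cadlagOn_shiftPath n hx h k
  have hder := hasDerivAt_add_smul_bump hdiff hc ht e
  obtain ⟨r, hr, hslope⟩ := exists_hasDerivAt_eq_slope _ _ zero_lt_one
    (fun s _ => (hder s).continuousAt.continuousWithinAt) (fun s _ => hder s)
  rw [← shiftPath_succ, zero_smul, add_zero, sub_zero, div_one] at hslope
  have hbd : ∀ j : ℕ, j ≤ n → ‖h j‖ ≤ ‖fun j : Fin (n + 1) => h j‖ := fun j hj =>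
    norm_le_pi_norm (fun j : Fin (n + 1) => h j) ⟨j, by omega⟩
  refine ⟨fun i => if (i : ℕ) < k then - h (i + 1) else - ((1 - r) • h k + r • h (k + 1)),
    ?_, ?_⟩
  · refine (pi_norm_le_iff_of_nonneg (norm_nonneg _)).2 fun i => ?_
    split_ifs with hi
    · rw [norm_neg]; exact hbd _ (by omega)
    · rw [norm_neg]
      refine (norm_add_le _ _).trans ?_
      rw [norm_smul, norm_smul, Real.norm_of_nonneg (by linarith [hr.2]),
        Real.norm_of_nonneg hr.1.le]
      nlinarith [hbd k hk.le, hbd (k + 1) hk, hr.1, hr.2]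
  · rw [← hslope]
    refine Finset.sum_congr rfl fun i _ => ?_
    rw [he, Pi.sub_apply]
    congr 1
    refine congrFun ((hDcont _ ht).congr (hc.add ((cadlagOn_bump _ _).smul r))
      (hx.cadlagOn.add (cadlagOn_stepPath hT hn _)) fun t ht' => ?_) i
    simp only [Pi.add_apply, Pi.smul_apply]
    rw [shiftPath_apply hT hn x h0 k ht', bump_grid_apply hT hn k _ ht', stepPath]
    have hlt : gridIdx T n t ≤ n := by
      by_contra! hcon
      have h1 := grid_gridIdx_le hT hn ht'.1
      have h2 : grid T n n < grid T n (n + 1) := by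
        have := grid_succ_sub (T := T) n n
        have : 0 < T / n := by positivity
        linarith
      rw [grid_self hn] at h2
      linarith [ht'.2, grid_mono hT n (show n + 1 ≤ gridIdx T n t from hcon)]
    simp only [min_eq_left hlt]
    split_ifs with h1 h2 h2
    · omega
    · rw [min_eq_left (by omega)]
      module
    · rw [min_eq_right (by omega), smul_zero, add_zero, sub_eq_add_neg]
    · omega

end Telescoping

section Cost

variable {T : ℝ} {d : ℕ}

theorem lpnorm_rpow {e : ℝ} (he : 0 < e) (v : Fin d → ℝ) : lpnorm e v ^ e = ∑ i, |v i| ^ e := by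
  unfold lpnorm
  rw [← Real.rpow_mul (Finset.sum_nonneg fun i _ => by positivity), one_div,
    inv_mul_cancel₀ he.ne', Real.rpow_one]

theorem lpnorm_nonneg (e : ℝ) (v : Fin d → ℝ) : 0 ≤ lpnorm e v :=
  Real.rpow_nonneg (Finset.sum_nonneg fun i _ => by positivity) _

theorem norm_le_lpnorm {e : ℝ} (he : 0 < e) (v : Fin d → ℝ) : ‖v‖ ≤ lpnorm e v := by
  refine (pi_norm_le_iff_of_nonneg (lpnorm_nonneg _ _)).2 fun i => ?_
  unfold lpnorm
  rw [one_div, Real.le_rpow_inv_iff_of_pos (norm_nonneg _)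
    (Finset.sum_nonneg fun i _ => by positivity) he]
  exact Finset.single_le_sum (f := fun i => |v i| ^ e) (fun i _ => by positivity)
    (Finset.mem_univ i)

theorem norm_rpow_le_sum {e : ℝ} (he : 0 < e) (v : Fin d → ℝ) : ‖v‖ ^ e ≤ ∑ i, |v i| ^ e := by
  rw [← lpnorm_rpow he]
  exact Real.rpow_le_rpow (norm_nonneg _) (norm_le_lpnorm he v) he.le

theorem lintegral_rpow_le {Ω : Type*} [MeasurableSpace Ω] {ν : Measure Ω} {p : ℝ} (hp : 1 < p)
    {g : Ω → ℝ≥0∞} (hg : AEMeasurable g ν) :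
    (∫⁻ z, g z ∂ν) ^ p ≤ ν univ ^ (p - 1) * ∫⁻ z, g z ^ p ∂ν := by
  have hpq := Real.HolderConjugate.conjExponent hp
  have h1 := ENNReal.lintegral_mul_le_Lp_mul_Lq ν hpq hg (aemeasurable_const (b := (1 : ℝ≥0∞)))
  simp only [Pi.mul_apply, mul_one, ENNReal.one_rpow, lintegral_const, one_mul] at h1
  calc (∫⁻ z, g z ∂ν) ^ p
      ≤ ((∫⁻ z, g z ^ p ∂ν) ^ (1 / p) * ν univ ^ (1 / p.conjExponent)) ^ p := by gcongr
    _ = ν univ ^ (p - 1) * ∫⁻ z, g z ^ p ∂ν := by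
      rw [ENNReal.mul_rpow_of_nonneg _ _ hpq.nonneg, ← ENNReal.rpow_mul, ← ENNReal.rpow_mul,
        one_div_mul_cancel hpq.ne_zero, ENNReal.rpow_one, mul_comm]
      congr 2
      have := hpq.ne_zero
      have h3 : p - 1 ≠ 0 := by linarith
      unfold Real.conjExponent
      field_simp

theorem sum_abs_increment_rpow_le {p : ℝ} (hp : 1 < p) {H g : ℝ → Fin d → ℝ}
    (hg : IntegrableOn g (Icc 0 T)) (hH : ∀ t ∈ Icc 0 T, H t = ∫ s in Ioc 0 t, g s)
    {a b : ℝ} (ha : 0 ≤ a) (hab : a ≤ b) (hb : b ≤ T) :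
    ∑ i, ENNReal.ofReal (|H b i - H a i| ^ p) ≤
      ENNReal.ofReal (b - a) ^ (p - 1) *
        ∫⁻ t in Ioc a b, ENNReal.ofReal (lpnorm p (g t) ^ p) := by
  have hgi : ∀ i, IntegrableOn (fun t => g t i) (Icc 0 T) := fun i => hg.eval i
  have hHi : ∀ i, H b i - H a i = ∫ s in Ioc a b, g s i := by
    intro i
    rw [hH b ⟨ha.trans hab, hb⟩, hH a ⟨ha, hab.trans hb⟩,
      eval_integral fun j => (hg.mono_set (Ioc_subset_Icc_self.trans (Icc_subset_Icc_right hb))).eval j,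
      eval_integral fun j => (hg.mono_set (Ioc_subset_Icc_self.trans
        (Icc_subset_Icc_right (hab.trans hb)))).eval j, ← Ioc_union_Ioc_eq_Ioc ha hab,
      setIntegral_union (Ioc_disjoint_Ioc_of_le le_rfl) measurableSet_Ioc
        ((hgi i).mono_set (Ioc_subset_Icc_self.trans (Icc_subset_Icc_right (hab.trans hb))))
        ((hgi i).mono_set (Ioc_subset_Icc_self.trans (Icc_subset_Icc ha hb)))]
    ring
  have hm : ∀ i, AEMeasurable (fun t => ENNReal.ofReal (|g t i| ^ p)) (volume.restrict (Ioc a b)) :=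
    fun i => by
      have := ((hgi i).mono_set (Ioc_subset_Icc_self.trans (Icc_subset_Icc ha hb))).aemeasurable
      exact ((this.norm).pow_const p).ennreal_ofReal
  calc ∑ i, ENNReal.ofReal (|H b i - H a i| ^ p)
      ≤ ∑ i, ENNReal.ofReal (b - a) ^ (p - 1) * ∫⁻ t in Ioc a b, ENNReal.ofReal (|g t i| ^ p) := by
        refine Finset.sum_le_sum fun i _ => ?_
        have hp0 : 0 ≤ p := by linarith
        have hae := ((hgi i).mono_set (Ioc_subset_Icc_self.trans (Icc_subset_Icc ha hb)))
        rw [hHi, ← ENNReal.ofReal_rpow_of_nonneg (abs_nonneg _) hp0, ← Real.norm_eq_abs,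
          ofReal_norm]
        calc ‖∫ s in Ioc a b, g s i‖ₑ ^ p ≤ (∫⁻ s in Ioc a b, ‖g s i‖ₑ) ^ p := by
              gcongr; exact enorm_integral_le_lintegral_enorm _
          _ ≤ _ := lintegral_rpow_le hp hae.aemeasurable.enorm
          _ = _ := by
              simp only [Measure.restrict_apply_univ, Real.volume_Ioc]
              congr 1
              refine lintegral_congr fun t => ?_
              rw [← ENNReal.ofReal_rpow_of_nonneg (abs_nonneg _) hp0, ← Real.norm_eq_abs,
                ofReal_norm]
    _ = _ := by
        rw [← Finset.mul_sum, ← lintegral_finsetSum' _ fun i _ => hm i]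
        congr 1
        refine lintegral_congr fun t => ?_
        rw [lpnorm_rpow (by linarith), ENNReal.ofReal_sum_of_nonneg fun i _ => by positivity]

theorem mul_le_mul_hcost {p : ℝ} {c : ℝ≥0∞} (hne : c ≠ 0) (hc : c ≠ ⊤) {a : ℝ≥0∞} {x y : ℝ → Fin d → ℝ}
    (h : ∀ g : ℝ → Fin d → ℝ, IntegrableOn g (Icc 0 T) →
      (∀ t ∈ Icc (0 : ℝ) T, (x - y) t = ∫ s in Ioc (0 : ℝ) t, g s) →
      a ≤ c * ∫⁻ t in Icc (0 : ℝ) T, ENNReal.ofReal (lpnorm p (g t) ^ p)) :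
    a ≤ c * hcost T p x y := by
  rw [mul_comm, ← ENNReal.div_le_iff_le_mul (Or.inl hne) (Or.inl hc)]
  refine le_sInf ?_
  rintro v ⟨g, hg, hxy, rfl⟩
  rw [ENNReal.div_le_iff_le_mul (Or.inl hne) (Or.inl hc), mul_comm]
  exact h g hg hxy

theorem sum_sum_abs_increment_rpow_le_hcost (hT : 0 < T) {p : ℝ} (hp : 1 < p) {n : ℕ}
    (hn : 0 < n) (x y : ℝ → Fin d → ℝ) :
    ∑ k ∈ Finset.range n, ∑ i,
      ENNReal.ofReal (|(x - y) (grid T n (k + 1)) i - (x - y) (grid T n k) i| ^ p) ≤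
      ENNReal.ofReal ((T / n) ^ (p - 1)) * hcost T p x y := by
  have hTn : 0 < T / n := by positivity
  refine mul_le_mul_hcost (by simp; positivity) ENNReal.ofReal_ne_top fun g hg hxy => ?_
  have hmem : ∀ k ∈ Finset.range n, grid T n (k + 1) ≤ T := fun k hk =>
    (grid_mem_Icc hT hn (Finset.mem_range.1 hk)).2
  calc _ ≤ ∑ k ∈ Finset.range n, ENNReal.ofReal ((T / n) ^ (p - 1)) *
        ∫⁻ t in Ioc (grid T n k) (grid T n (k + 1)), ENNReal.ofReal (lpnorm p (g t) ^ p) := by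
        refine Finset.sum_le_sum fun k hk => ?_
        have h1 := sum_abs_increment_rpow_le hp hg hxy
          (grid_mem_Icc hT hn (Finset.mem_range.1 hk).le).1 (grid_mono hT n k.le_succ) (hmem k hk)
        rw [grid_succ_sub, ENNReal.ofReal_rpow_of_pos hTn] at h1
        exact h1
    _ = ENNReal.ofReal ((T / n) ^ (p - 1)) * ∫⁻ t in
        ⋃ k ∈ Finset.range n, Ioc (grid T n k) (grid T n (k + 1)),
          ENNReal.ofReal (lpnorm p (g t) ^ p) := by
        rw [← Finset.mul_sum, lintegral_biUnion_finset (fun i _ j _ hij =>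
          (by simpa using (grid_mono hT n).pairwise_disjoint_on_Ioc_succ hij :
            Disjoint (Ioc (grid T n i) (grid T n (i + 1))) (Ioc (grid T n j) (grid T n (j + 1)))))
          fun _ _ => measurableSet_Ioc]
    _ ≤ _ := by
        gcongr
        refine iUnion₂_subset fun k hk t ht => ⟨?_, ht.2.trans (hmem k hk)⟩
        exact (grid_mem_Icc hT hn (Finset.mem_range.1 hk).le).1.trans ht.1.le

theorem norm_rpow_le_hcost (hT : 0 < T) {p : ℝ} (hp : 1 < p) {x y : ℝ → Fin d → ℝ}
    (h0 : x 0 = y 0) {t : ℝ} (ht : t ∈ Icc 0 T) :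
    ENNReal.ofReal (‖(x - y) t‖ ^ p) ≤ ENNReal.ofReal (T ^ (p - 1)) * hcost T p x y := by
  refine mul_le_mul_hcost (by simp; positivity) ENNReal.ofReal_ne_top fun g hg hxy => ?_
  have h1 := sum_abs_increment_rpow_le hp hg hxy le_rfl ht.1 ht.2
  simp only [Pi.sub_apply x y 0, h0, sub_self, Pi.zero_apply, sub_zero] at h1
  calc ENNReal.ofReal (‖(x - y) t‖ ^ p) ≤ ENNReal.ofReal (∑ i, |(x - y) t i| ^ p) :=
        ENNReal.ofReal_le_ofReal (norm_rpow_le_sum (by linarith) _)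
    _ ≤ _ := by
        rw [ENNReal.ofReal_sum_of_nonneg fun i _ => by positivity]
        refine h1.trans ?_
        rw [← ENNReal.ofReal_rpow_of_pos hT]
        gcongr
        · exact ht.2
        · exact Ioc_subset_Icc_self.trans (Icc_subset_Icc_right ht.2)

end Cost

/-- The `p`-th power of the supremum of the `ℓ_p`-norm of a path. -/
def pathMoment (T p : ℝ) {d : ℕ} (ω : ContPath T d) : ℝ :=
  (⨆ t : Icc (0 : ℝ) T, lpnorm p (ω.1 t.1)) ^ p

/-- The assumptions on the reference measure and on the extended functional. -/
structure SensitivitySetup (T p q C : ℝ) {d : ℕ} (μ : Measure (ContPath T d))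
    (F : (ℝ → Fin d → ℝ) → ℝ) (DF : (ℝ → Fin d → ℝ) → ℝ → Fin d → ℝ) : Prop where
  hT : 0 < T
  hpq : q.HolderConjugate p
  prob : IsProbabilityMeasure μ
  moment : Integrable (pathMoment T p) μ
  deriv : HasPathwiseMalliavinDeriv T F DF
  cont : UnifContOnCadlag T F
  derivCont : ∀ t ∈ Icc (0 : ℝ) T, UnifContOnCadlagVec T (fun ω => DF ω t)
  leftLim : HasLeftLimits T DF
  growth : ∀ ω : ℝ → Fin d → ℝ, CadlagOn T ω → |F ω| ≤ C * (1 + (pathSup T ω) ^ p)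
  derivGrowth : ∀ ω : ℝ → Fin d → ℝ, CadlagOn T ω → ∀ t ∈ Icc (0 : ℝ) T,
      lpnorm q (DF ω t) ≤ C * (1 + (pathSup T ω) ^ (p - 1))

section Growth

variable {T p q C : ℝ} {d : ℕ}

theorem measurable_eval {t : ℝ} (ht : t ∈ Icc 0 T) :
    Measurable fun ω : ContPath T d => ω.1 t :=
  Measurable.of_comap_le (le_iSup (fun r : {r : ℝ // 0 ≤ r ∧ r ≤ T ∧ r ≤ T} =>
    MeasurableSpace.comap (fun ω : ContPath T d => ω.1 r.1) inferInstance) ⟨t, ht.1, ht.2, ht.2⟩)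

theorem pathMoment_nonneg (ω : ContPath T d) : 0 ≤ pathMoment T p ω :=
  Real.rpow_nonneg (Real.iSup_nonneg fun _ => lpnorm_nonneg _ _) _

theorem continuous_lpnorm {e : ℝ} (he : 0 < e) : Continuous (lpnorm e : (Fin d → ℝ) → ℝ) := by
  unfold lpnorm
  refine Continuous.rpow_const (continuous_finsetSum _ fun i _ => ?_) fun _ => Or.inr (by positivity)
  exact Continuous.rpow_const (by fun_prop) fun _ => Or.inr he.le

theorem norm_rpow_le_pathMoment (hp : 0 < p) (ω : ContPath T d) {t : ℝ} (ht : t ∈ Icc 0 T) :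
    ‖ω.1 t‖ ^ p ≤ pathMoment T p ω := by
  refine Real.rpow_le_rpow (norm_nonneg _) ((norm_le_lpnorm hp _).trans ?_) hp.le
  have hb : BddAbove (range fun t : Icc (0 : ℝ) T => lpnorm p (ω.1 t.1)) := by
    have := (isCompact_Icc.image_of_continuousOn
      ((continuous_lpnorm hp).comp_continuousOn ω.2.1)).bddAbove
    rwa [image_eq_range] at this
  exact le_ciSup hb ⟨t, ht⟩

theorem add_rpow_le_two_rpow_mul {a b e : ℝ} (ha : 0 ≤ a) (hb : 0 ≤ b) (he : 0 ≤ e) :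
    (a + b) ^ e ≤ 2 ^ e * (a ^ e + b ^ e) := by
  have h1 : (a + b) ^ e ≤ (2 * max a b) ^ e := by
    refine Real.rpow_le_rpow (by positivity) ?_ he
    linarith [le_max_left a b, le_max_right a b]
  refine h1.trans ?_
  rw [Real.mul_rpow (by norm_num) (le_max_of_le_left ha)]
  gcongr
  rcases max_choice a b with h | h <;> rw [h]
  · linarith [Real.rpow_nonneg hb e]
  · linarith [Real.rpow_nonneg ha e]

namespace SensitivitySetup

variable {μ : Measure (ContPath T d)} {F : (ℝ → Fin d → ℝ) → ℝ}
  {DF : (ℝ → Fin d → ℝ) → ℝ → Fin d → ℝ}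

theorem exists_growth (S : SensitivitySetup T p q C μ F DF) :
    ∃ K : ℝ, 0 ≤ K ∧ ∀ (ω : ContPath T d) (z : ℝ → Fin d → ℝ) (R : ℝ),
    CadlagOn T z → 0 ≤ R → (∀ s ∈ Icc 0 T, ‖z s‖ ≤ R) →
      |F (ω.1 + z)| ≤ K * (1 + pathMoment T p ω + R ^ p) ∧
      ∀ t ∈ Icc 0 T, ‖DF (ω.1 + z) t‖ ^ q ≤ K * (1 + pathMoment T p ω + R ^ p) := by
  have hp := S.hpq.symm.pos
  have hq := S.hpq.pos
  have hp1 : 0 < p - 1 := by linarith [S.hpq.symm.lt]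
  have hpq : (p - 1) * q = p := S.hpq.symm.sub_one_mul_conj
  have h0 : CadlagOn T (0 : ℝ → Fin d → ℝ) := (continuousOn_const (c := 0)).cadlagOn
  have hC : 0 ≤ C := by
    have h1 := (lpnorm_nonneg _ _).trans (S.derivGrowth 0 h0 0 ⟨le_rfl, S.hT.le⟩)
    have h2 : 0 < 1 + pathSup T (0 : ℝ → Fin d → ℝ) ^ (p - 1) := by
      have := Real.rpow_nonneg (pathSup_nonneg (T := T) (0 : ℝ → Fin d → ℝ)) (p - 1)
      linarith
    exact nonneg_of_mul_nonneg_left h1 h2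
  have hsup : ∀ (ω : ContPath T d) (z : ℝ → Fin d → ℝ) (R : ℝ), 0 ≤ R →
      (∀ s ∈ Icc 0 T, ‖z s‖ ≤ R) →
      pathSup T (ω.1 + z) ^ p ≤ 2 ^ p * (pathMoment T p ω + R ^ p) := by
    intro ω z R hR hz
    have h1 : pathSup T (ω.1 + z) ≤ pathMoment T p ω ^ (1 / p) + R := by
      refine pathSup_le (by have := pathMoment_nonneg (p := p) ω; positivity) fun t ht => ?_
      refine (norm_add_le _ _).trans (add_le_add ?_ (hz t ht))
      rw [one_div, Real.le_rpow_inv_iff_of_pos (norm_nonneg _) (pathMoment_nonneg _) hp]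
      exact norm_rpow_le_pathMoment hp ω ht
    have h2 := pathMoment_nonneg (p := p) ω
    calc _ ≤ (pathMoment T p ω ^ (1 / p) + R) ^ p :=
          Real.rpow_le_rpow (pathSup_nonneg _) h1 hp.le
      _ ≤ _ := add_rpow_le_two_rpow_mul (by positivity) hR hp.le
      _ = _ := by rw [← Real.rpow_mul h2, one_div_mul_cancel hp.ne', Real.rpow_one]
  refine ⟨C * (1 + 2 ^ p) + (C ^ q * 2 ^ q) * (1 + 2 ^ p), by positivity,
    fun ω z R hz hR hzR => ?_⟩
  have hm := pathMoment_nonneg (p := p) ω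
  have hRp : 0 ≤ R ^ p := by positivity
  have hs := hsup ω z R hR hzR
  have hcad := ω.2.1.cadlagOn.add hz
  have h2p : (0 : ℝ) ≤ 2 ^ p := by positivity
  have hbd : 1 + pathSup T (ω.1 + z) ^ p ≤ (1 + 2 ^ p) * (1 + pathMoment T p ω + R ^ p) := by
    nlinarith
  have hpos : 0 ≤ 1 + pathMoment T p ω + R ^ p := by positivity
  have hps := pathSup_nonneg (T := T) (ω.1 + z)
  constructor
  · refine (S.growth _ hcad).trans ?_
    calc _ ≤ C * ((1 + 2 ^ p) * (1 + pathMoment T p ω + R ^ p)) := by gcongr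
      _ ≤ _ := by
        have : 0 ≤ (C ^ q * 2 ^ q) * (1 + 2 ^ p) * (1 + pathMoment T p ω + R ^ p) := by positivity
        linarith
  · intro t ht
    calc ‖DF (ω.1 + z) t‖ ^ q ≤ (C * (1 + pathSup T (ω.1 + z) ^ (p - 1))) ^ q := by
          refine Real.rpow_le_rpow (norm_nonneg _)
            ((norm_le_lpnorm hq _).trans (S.derivGrowth _ hcad t ht)) hq.le
      _ = C ^ q * (1 + pathSup T (ω.1 + z) ^ (p - 1)) ^ q :=
          Real.mul_rpow hC (by positivity)
      _ ≤ C ^ q * (2 ^ q * (1 ^ q + (pathSup T (ω.1 + z) ^ (p - 1)) ^ q)) := by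
          gcongr
          exact add_rpow_le_two_rpow_mul zero_le_one (by positivity) hq.le
      _ = C ^ q * 2 ^ q * (1 + pathSup T (ω.1 + z) ^ p) := by
          rw [Real.one_rpow, ← Real.rpow_mul hps, hpq, mul_assoc]
      _ ≤ C ^ q * 2 ^ q * ((1 + 2 ^ p) * (1 + pathMoment T p ω + R ^ p)) := by gcongr
      _ ≤ _ := by
        have : 0 ≤ C * (1 + 2 ^ p) * (1 + pathMoment T p ω + R ^ p) := by positivity
        linarith

theorem measurable_deriv (S : SensitivitySetup T p q C μ F DF) {t : ℝ} (ht : t ∈ Icc 0 T) :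
    Measurable fun ω : ContPath T d => DF ω.1 t :=
  measurable_pi_lambda _ fun i => ((S.derivCont t ht).apply i).measurable_comp_continuous S.hT
    (fun ω => ω.2.1) fun _ hs => measurable_eval hs

theorem memLp_deriv (S : SensitivitySetup T p q C μ F DF) {t : ℝ} (ht : t ∈ Icc 0 T) :
    MemLp (fun ω : ContPath T d => DF ω.1 t) (ENNReal.ofReal q) μ := by
  have hq := S.hpq.pos
  have := S.prob
  obtain ⟨K, hK, hgr⟩ := S.exists_growth
  rw [← integrable_norm_rpow_iff (S.measurable_deriv ht).aestronglyMeasurable (by simpa using hq)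
    ENNReal.ofReal_ne_top, ENNReal.toReal_ofReal hq.le]
  have hint : Integrable (fun ω => K * (1 + pathMoment T p ω + 0 ^ p)) μ :=
    (((integrable_const 1).add S.moment).add (integrable_const _)).const_mul K
  refine hint.mono' ((S.measurable_deriv ht).norm.pow_const q).aestronglyMeasurable
    (Eventually.of_forall fun ω => ?_)
  rw [Real.norm_of_nonneg (by positivity)]
  have := (hgr ω 0 0 (continuousOn_const (c := 0)).cadlagOn le_rfl (by simp)).2 t ht
  rwa [add_zero] at this

theorem measurable_functional (S : SensitivitySetup T p q C μ F DF) :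
    Measurable fun ω : ContPath T d => F ω.1 :=
  S.cont.measurable_comp_continuous S.hT (fun ω => ω.2.1) fun _ hs => measurable_eval hs

theorem integrable_functional (S : SensitivitySetup T p q C μ F DF) :
    Integrable (fun ω : ContPath T d => F ω.1) μ := by
  have := S.prob
  obtain ⟨K, hK, hgr⟩ := S.exists_growth
  have hint : Integrable (fun ω => K * (1 + pathMoment T p ω + 0 ^ p)) μ :=
    (((integrable_const 1).add S.moment).add (integrable_const _)).const_mul K
  refine hint.mono' S.measurable_functional.aestronglyMeasurable (Eventually.of_forall fun ω => ?_)
  have := (hgr ω 0 0 (continuousOn_const (c := 0)).cadlagOn le_rfl (by simp)).1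
  rwa [add_zero] at this

end SensitivitySetup
end Growth

section Filtration

variable {T : ℝ} {d : ℕ}

theorem evalSigma_mono {s t : ℝ} (h : s ≤ t) : evalSigma T d s ≤ evalSigma T d t :=
  iSup_le fun r => le_iSup (fun r : {r : ℝ // 0 ≤ r ∧ r ≤ T ∧ r ≤ t} =>
    MeasurableSpace.comap (fun ω : ContPath T d => ω.1 r.1) inferInstance)
    ⟨r.1, r.2.1, r.2.2.1, r.2.2.2.trans h⟩

theorem evalSigma_le (t : ℝ) : evalSigma T d t ≤ evalSigma T d T :=
  iSup_le fun r => le_iSup (fun r : {r : ℝ // 0 ≤ r ∧ r ≤ T ∧ r ≤ T} =>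
    MeasurableSpace.comap (fun ω : ContPath T d => ω.1 r.1) inferInstance)
    ⟨r.1, r.2.1, r.2.2.1, r.2.2.1⟩

theorem FilC_le (t : ℝ) : FilC T d t ≤ instMSContPath T d := by
  unfold FilC
  split_ifs with h
  · exact iInf_le_of_le ⟨T, h, le_rfl⟩ le_rfl
  · exact le_rfl

theorem FilC_mono {s t : ℝ} (h : s ≤ t) : FilC T d s ≤ FilC T d t := by
  by_cases ht : t < T
  · unfold FilC
    rw [if_pos ht, if_pos (h.trans_lt ht)]
    exact le_iInf fun r => iInf_le_of_le ⟨r.1, h.trans_lt r.2.1, r.2.2⟩ le_rfl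
  · refine (FilC_le s).trans ?_
    unfold FilC
    rw [if_neg ht]
    exact le_rfl

theorem evalSigma_le_FilC (t : ℝ) : evalSigma T d t ≤ FilC T d t := by
  unfold FilC
  split_ifs with h
  · exact le_iInf fun r => evalSigma_mono r.2.1.le
  · exact evalSigma_le t

end Filtration

theorem integral_abs_rpow_eq_lpNorm {Ω : Type*} [MeasurableSpace Ω] {μ : Measure Ω} {q : ℝ}
    (hq : 0 < q) {f : Ω → ℝ} (hf : AEStronglyMeasurable f μ) :
    ∫ ω, |f ω| ^ q ∂μ = lpNorm f (ENNReal.ofReal q) μ ^ q := by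
  rw [lpNorm_eq_integral_norm_rpow_toReal (by simpa using hq) ENNReal.ofReal_ne_top hf,
    ENNReal.toReal_ofReal hq.le, ← Real.rpow_mul (integral_nonneg fun ω => by positivity),
    inv_mul_cancel₀ hq.ne', Real.rpow_one]
  rfl

namespace SensitivitySetup

variable {T p q C : ℝ} {d : ℕ} {μ : Measure (ContPath T d)} {F : (ℝ → Fin d → ℝ) → ℝ}
  {DF : (ℝ → Fin d → ℝ) → ℝ → Fin d → ℝ}

theorem one_le (S : SensitivitySetup T p q C μ F DF) : 1 ≤ ENNReal.ofReal q := by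
  rw [← ENNReal.ofReal_one]
  exact ENNReal.ofReal_le_ofReal S.hpq.lt.le

theorem memLp_deriv_apply (S : SensitivitySetup T p q C μ F DF) {t : ℝ} (ht : t ∈ Icc 0 T)
    (i : Fin d) : MemLp (fun ω : ContPath T d => DF ω.1 t i) (ENNReal.ofReal q) μ :=
  (S.memLp_deriv ht).eval i

theorem memLp_condExp (S : SensitivitySetup T p q C μ F DF) {t : ℝ} (ht : t ∈ Icc 0 T)
    (i : Fin d) (s : ℝ) :
    MemLp (μ[fun ω : ContPath T d => DF ω.1 t i | FilC T d s]) (ENNReal.ofReal q) μ :=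
  (S.memLp_deriv_apply ht i).condExp S.one_le

theorem integrable_deriv_apply (S : SensitivitySetup T p q C μ F DF) {t : ℝ} (ht : t ∈ Icc 0 T)
    (i : Fin d) : Integrable (fun ω : ContPath T d => DF ω.1 t i) μ := by
  have := S.prob
  exact (S.memLp_deriv_apply ht i).integrable S.one_le

theorem exists_lpNorm_bound (S : SensitivitySetup T p q C μ F DF) :
    ∃ K : ℝ, 0 ≤ K ∧ ∀ t ∈ Icc 0 T, ∀ i,
      lpNorm (fun ω : ContPath T d => DF ω.1 t i) (ENNReal.ofReal q) μ ≤ K := by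
  have hq := S.hpq.pos
  have := S.prob
  obtain ⟨K, hK, hgr⟩ := S.exists_growth
  have hint : Integrable (fun ω => K * (1 + pathMoment T p ω + 0 ^ p)) μ :=
    (((integrable_const 1).add S.moment).add (integrable_const _)).const_mul K
  have hnn : 0 ≤ ∫ ω, K * (1 + pathMoment T p ω + 0 ^ p) ∂μ :=
    integral_nonneg fun ω => by have := pathMoment_nonneg (p := p) ω; positivity
  refine ⟨(∫ ω, K * (1 + pathMoment T p ω + 0 ^ p) ∂μ) ^ q⁻¹, by positivity,
    fun t ht i => ?_⟩
  rw [Real.le_rpow_inv_iff_of_pos lpNorm_nonneg hnn hq,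
    ← integral_abs_rpow_eq_lpNorm hq (S.memLp_deriv_apply ht i).aestronglyMeasurable]
  refine integral_mono_of_nonneg (Eventually.of_forall fun ω => by positivity) hint
    (Eventually.of_forall fun ω => ?_)
  have h1 := (hgr ω 0 0 (continuousOn_const (c := 0)).cadlagOn le_rfl (by simp)).2 t ht
  rw [add_zero] at h1
  exact (Real.rpow_le_rpow (abs_nonneg _) (norm_le_pi_norm (DF ω.1 t) i) hq.le).trans h1

theorem exists_leftLim_lpNorm (S : SensitivitySetup T p q C μ F DF) {t : ℝ} (ht : t ∈ Ioc 0 T)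
    (i : Fin d) : ∃ l : ContPath T d → ℝ, MemLp l (ENNReal.ofReal q) μ ∧
      Tendsto (fun s => lpNorm ((fun ω : ContPath T d => DF ω.1 s i) - l) (ENNReal.ofReal q) μ)
        (nhdsWithin t (Iio t)) (nhds 0) := by
  have hq := S.hpq.pos
  have := S.prob
  obtain ⟨K, hK, hgr⟩ := S.exists_growth
  have hgr' : ∀ ω : ContPath T d, ∀ s ∈ Icc 0 T,
      ‖DF ω.1 s i‖ ^ q ≤ K * (1 + pathMoment T p ω + 0 ^ p) := fun ω s hs => by
    have h1 := (hgr ω 0 0 (continuousOn_const (c := 0)).cadlagOn le_rfl (by simp)).2 s hs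
    rw [add_zero] at h1
    exact (Real.rpow_le_rpow (abs_nonneg _) (norm_le_pi_norm (DF ω.1 s) i) hq.le).trans h1
  have hint : Integrable (fun ω => K * (1 + pathMoment T p ω + 0 ^ p)) μ :=
    (((integrable_const 1).add S.moment).add (integrable_const _)).const_mul K
  have hex : ∀ ω : ContPath T d, ∃ l : ℝ,
      Tendsto (fun s => DF ω.1 s i) (nhdsWithin t (Iio t)) (nhds l) := by
    intro ω
    obtain ⟨l, hl⟩ := S.leftLim.exists_uniform ω.2.1.cadlagOn ht
    refine ⟨l i, (tendsto_pi_nhds.1 (?_ : Tendsto (fun s => DF ω.1 s) _ (nhds l))) i⟩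
    rw [Metric.tendsto_nhds]
    intro ε hε
    obtain ⟨η, hη, h⟩ := hl ε hε
    filter_upwards [Ioo_mem_nhdsLT (show t - η < t by linarith)] with s hs
    rw [dist_eq_norm]
    exact h _ ω.2.1.cadlagOn (fun s _ => by simpa using hη) s hs
  choose l hl using hex
  have hIcc : ∀ᶠ s in nhdsWithin t (Iio t), s ∈ Icc 0 T := by
    filter_upwards [Ioo_mem_nhdsLT ht.1] with s hs
    exact ⟨hs.1.le, hs.2.le.trans ht.2⟩
  have hlm : AEStronglyMeasurable l μ := by
    obtain ⟨u, hu⟩ := exists_seq_tendsto (nhdsWithin t (Iio t))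
    obtain ⟨N, hN⟩ := eventually_atTop.1 (hu.eventually hIcc)
    refine (measurable_of_tendsto_metrizable (f := fun (k : ℕ) (ω : ContPath T d) => DF ω.1 (u (k + N)) i)
      (fun k => (measurable_pi_apply i).comp (S.measurable_deriv (hN _ (by omega))))
      (tendsto_pi_nhds.2 fun ω => ?_)).aestronglyMeasurable
    exact ((hl ω).comp hu).comp (tendsto_add_atTop_nat N)
  have hlb : ∀ ω, ‖l ω‖ ^ q ≤ K * (1 + pathMoment T p ω + 0 ^ p) := fun ω =>
    le_of_tendsto ((hl ω).norm.rpow_const (Or.inr hq.le))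
      (hIcc.mono fun s hs => hgr' ω s hs)
  have hlL : MemLp l (ENNReal.ofReal q) μ := by
    rw [← integrable_norm_rpow_iff hlm (by simpa using hq) ENNReal.ofReal_ne_top,
      ENNReal.toReal_ofReal hq.le]
    refine hint.mono' (hlm.norm.aemeasurable.pow_const q).aestronglyMeasurable
      (Eventually.of_forall fun ω => ?_)
    rw [Real.norm_of_nonneg (by positivity)]
    exact hlb ω
  refine ⟨l, hlL, ?_⟩
  have h1 : Tendsto (fun s => ∫ ω, |DF ω.1 s i - l ω| ^ q ∂μ) (nhdsWithin t (Iio t))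
      (nhds (∫ ω : ContPath T d, (0 : ℝ) ∂μ)) := by
    refine tendsto_integral_filter_of_dominated_convergence
      (fun ω => 2 ^ q * (K * (1 + pathMoment T p ω + 0 ^ p) + K * (1 + pathMoment T p ω + 0 ^ p)))
      ?_ ?_ ((hint.add hint).const_mul _) (Eventually.of_forall fun ω => ?_)
    · filter_upwards [hIcc] with s hs
      have := ((S.memLp_deriv_apply hs i).aestronglyMeasurable.sub hlm)
      exact (this.norm.aemeasurable.pow_const q).aestronglyMeasurable
    · filter_upwards [hIcc] with s hs
      refine Eventually.of_forall fun ω => ?_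
      rw [Real.norm_of_nonneg (by positivity)]
      calc |DF ω.1 s i - l ω| ^ q ≤ (|DF ω.1 s i| + |l ω|) ^ q :=
            Real.rpow_le_rpow (abs_nonneg _) (abs_sub _ _) hq.le
        _ ≤ 2 ^ q * (|DF ω.1 s i| ^ q + |l ω| ^ q) :=
            add_rpow_le_two_rpow_mul (abs_nonneg _) (abs_nonneg _) hq.le
        _ ≤ _ := by
            gcongr
            · exact hgr' ω s hs
            · exact hlb ω
    · have h2 := (((hl ω).sub_const (l ω)).abs).rpow_const (p := q) (Or.inr hq.le)
      rw [sub_self, abs_zero, Real.zero_rpow hq.ne'] at h2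
      exact h2
  rw [integral_zero] at h1
  have h3 := h1.rpow_const (p := q⁻¹) (Or.inr (by positivity))
  rw [Real.zero_rpow (by positivity)] at h3
  refine h3.congr' ?_
  filter_upwards [hIcc] with s hs
  have h4 := integral_abs_rpow_eq_lpNorm (μ := μ) hq
    ((S.memLp_deriv_apply hs i).aestronglyMeasurable.sub hlm)
  simp only [Pi.sub_apply] at h4
  rw [h4, Real.rpow_rpow_inv lpNorm_nonneg hq.ne']

theorem tendsto_lpNorm_sub_left (S : SensitivitySetup T p q C μ F DF) {t : ℝ} (ht : t ∈ Ioc 0 T)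
    (i : Fin d) :
    Tendsto (fun z : ℝ × ℝ => lpNorm ((fun ω : ContPath T d => DF ω.1 z.1 i) -
      fun ω => DF ω.1 z.2 i) (ENNReal.ofReal q) μ)
        (nhdsWithin t (Iio t) ×ˢ nhdsWithin t (Iio t)) (nhds 0) := by
  obtain ⟨l, hl, h⟩ := S.exists_leftLim_lpNorm ht i
  have hIcc : ∀ᶠ s in nhdsWithin t (Iio t), s ∈ Icc 0 T := by
    filter_upwards [Ioo_mem_nhdsLT ht.1] with s hs
    exact ⟨hs.1.le, hs.2.le.trans ht.2⟩
  have h2 := (h.comp (tendsto_fst (g := nhdsWithin t (Iio t)))).add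
    (h.comp (tendsto_snd (f := nhdsWithin t (Iio t))))
  rw [add_zero] at h2
  refine squeeze_zero' (Eventually.of_forall fun z => lpNorm_nonneg) ?_ h2
  filter_upwards [hIcc.prod_mk hIcc] with z hz
  refine (lpNorm_sub_le_lpNorm_sub_add_lpNorm_sub (S.memLp_deriv_apply hz.1 i) hl
    S.one_le).trans ?_
  rw [lpNorm_sub_comm l]
  exact le_rfl

theorem tendsto_lpNorm_condExp_left (S : SensitivitySetup T p q C μ F DF) {t : ℝ}
    (ht : t ∈ Ioc 0 T) (i : Fin d) :
    ∃ a, Tendsto (fun s => lpNorm (μ[fun ω : ContPath T d => DF ω.1 s i | FilC T d s])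
      (ENNReal.ofReal q) μ) (nhdsWithin t (Iio t)) (nhds a) := by
  have := S.prob
  obtain ⟨l, hl, h⟩ := S.exists_leftLim_lpNorm ht i
  have hIcc : ∀ᶠ s in nhdsWithin t (Iio t), s ∈ Icc 0 T := by
    filter_upwards [Ioo_mem_nhdsLT ht.1] with s hs
    exact ⟨hs.1.le, hs.2.le.trans ht.2⟩
  have hmono : Monotone fun s => lpNorm (μ[l | FilC T d s]) (ENNReal.ofReal q) μ := by
    intro s s' hss
    have h1 := condExp_condExp_of_le (μ := μ) (f := l) (FilC_mono hss) (FilC_le (T := T) (d := d) s')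
    refine le_trans (le_of_eq ?_)
      ((hl.condExp S.one_le (m := FilC T d s')).lpNorm_condExp_le_lpNorm (m := FilC T d s) S.one_le)
    change lpNorm (μ[l | FilC T d s]) (ENNReal.ofReal q) μ = _
    rw [← toReal_eLpNorm integrable_condExp.1, ← toReal_eLpNorm integrable_condExp.1,
      eLpNorm_congr_ae h1]
  have hlim := (hmono.monotoneOn (Iio t)).tendsto_nhdsLT (x := t) ?_
  · refine ⟨_, hlim.congr_dist (squeeze_zero' (Eventually.of_forall fun _ => dist_nonneg) ?_ h)⟩
    filter_upwards [hIcc] with s hs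
    have hD := S.memLp_deriv_apply hs i
    have h2 : lpNorm (μ[l | FilC T d s] - μ[fun ω : ContPath T d => DF ω.1 s i | FilC T d s])
        (ENNReal.ofReal q) μ ≤
        lpNorm ((fun ω : ContPath T d => DF ω.1 s i) - l) (ENNReal.ofReal q) μ := by
      rw [lpNorm_sub_comm]
      refine le_trans (le_of_eq ?_)
        ((hD.sub hl).lpNorm_condExp_le_lpNorm (m := FilC T d s) S.one_le)
      rw [← toReal_eLpNorm integrable_condExp.1,
        ← toReal_eLpNorm (integrable_condExp.1.sub integrable_condExp.1), eLpNorm_congr_ae]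
      exact (condExp_sub (hD.integrable S.one_le) (hl.integrable S.one_le) _).symm
    refine le_trans ?_ h2
    rw [Real.dist_eq, abs_sub_le_iff]
    have hL := hl.condExp S.one_le (m := FilC T d s)
    have hM := S.memLp_condExp hs i s
    have h3 := lpNorm_le_lpNorm_add_lpNorm_sub' (f := μ[l | FilC T d s]) hM S.one_le
    have h4 := lpNorm_le_lpNorm_add_lpNorm_sub
      (f := μ[fun ω : ContPath T d => DF ω.1 s i | FilC T d s]) hL S.one_le
    constructor <;> linarith
  · refine ⟨lpNorm l (ENNReal.ofReal q) μ, ?_⟩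
    rintro _ ⟨s, _, rfl⟩
    exact hl.lpNorm_condExp_le_lpNorm S.one_le

end SensitivitySetup

/-- The sum over the coordinates of the `q`-th moments of the optional projection of the
derivative at time `t`. -/
def condMoment {T : ℝ} {d : ℕ} (q : ℝ) (μ : Measure (ContPath T d))
    (DF : (ℝ → Fin d → ℝ) → ℝ → Fin d → ℝ) (t : ℝ) : ℝ :=
  ∑ i, ∫ ω, |(μ[fun ω : ContPath T d => DF ω.1 t i | FilC T d t]) ω| ^ q ∂μ

namespace SensitivitySetup

variable {T p q C : ℝ} {d : ℕ} {μ : Measure (ContPath T d)} {F : (ℝ → Fin d → ℝ) → ℝ}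
  {DF : (ℝ → Fin d → ℝ) → ℝ → Fin d → ℝ}

theorem condMoment_nonneg (t : ℝ) : 0 ≤ condMoment q μ DF t :=
  Finset.sum_nonneg fun _ _ => integral_nonneg fun ω => by positivity

theorem condMoment_eq (S : SensitivitySetup T p q C μ F DF) (t : ℝ) :
    condMoment q μ DF t = ∑ i, lpNorm (μ[fun ω : ContPath T d => DF ω.1 t i | FilC T d t])
      (ENNReal.ofReal q) μ ^ q :=
  Finset.sum_congr rfl fun _ _ => integral_abs_rpow_eq_lpNorm S.hpq.pos integrable_condExp.1

theorem tendsto_sum_deriv_sub (S : SensitivitySetup T p q C μ F DF) {ι : Type*} {l : Filter ι}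
    [l.IsCountablyGenerated] (n : ι → ℕ) (hn : ∀ᶠ j in l, 0 < n j) (u u' : ι → ℕ → ℝ)
    (hu : ∀ᶠ j in l, ∀ k < n j, u j k ∈ Icc 0 T ∧ u' j k ∈ Icc 0 T)
    (hut : ∀ t ∈ Ioo 0 T, Tendsto (fun j => u j (gridIdx T (n j) t)) l (nhds t))
    (hut' : ∀ t ∈ Ioo 0 T, Tendsto (fun j => u' j (gridIdx T (n j) t)) l (nhds t)) :
    Tendsto (fun j => T / n j * ∑ k ∈ Finset.range (n j), ∑ i,
      ∫ ω : ContPath T d, |DF ω.1 (u j k) i - DF ω.1 (u' j k) i| ^ q ∂μ) l (nhds 0) := by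
  have hq := S.hpq.pos
  obtain ⟨K, hK, hb⟩ := S.exists_lpNorm_bound
  obtain ⟨h, hdef⟩ : ∃ h : ℝ → ℝ → ℝ, ∀ s s', h s s' = ∑ i, lpNorm
      ((fun ω : ContPath T d => DF ω.1 s i) - fun ω => DF ω.1 s' i) (ENNReal.ofReal q) μ ^ q :=
    ⟨_, fun _ _ => rfl⟩
  have hsub : ∀ s ∈ Icc 0 T, ∀ s' ∈ Icc 0 T, ∀ i, lpNorm ((fun ω : ContPath T d => DF ω.1 s i) -
      fun ω => DF ω.1 s' i) (ENNReal.ofReal q) μ ≤ 2 * K := fun s hs s' hs' i => by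
    have h1 := lpNorm_sub_le (S.memLp_deriv_apply hs i)
      (g := fun ω : ContPath T d => DF ω.1 s' i) S.one_le
    linarith [hb _ hs i, hb _ hs' i]
  have hh0 : ∀ s s', 0 ≤ h s s' := fun s s' => by
    rw [hdef]
    exact Finset.sum_nonneg fun i _ => Real.rpow_nonneg lpNorm_nonneg _
  have hae := ae_tendsto_prod_of_left T h fun t ht => by
    simp_rw [hdef]
    have h1 := tendsto_finsetSum Finset.univ fun i _ =>
      (S.tendsto_lpNorm_sub_left ht i).rpow_const (p := q) (Or.inr hq.le)
    simpa [Real.zero_rpow hq.ne'] using h1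
  have hmain := tendsto_riemann_sum S.hT n hn (fun j k => h (u j k) (u' j k)) (d * (2 * K) ^ q) ?_
    (fun _ => 0) ?_
  · rw [integral_zero] at hmain
    refine hmain.congr' ?_
    filter_upwards [hu] with j hj
    simp_rw [hdef]
    congr 1
    refine Finset.sum_congr rfl fun k hk => Finset.sum_congr rfl fun i _ => ?_
    have hk' := hj k (Finset.mem_range.1 hk)
    exact (integral_abs_rpow_eq_lpNorm (μ := μ) hq ((S.memLp_deriv_apply hk'.1 i).sub
      (S.memLp_deriv_apply hk'.2 i)).aestronglyMeasurable).symm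
  · filter_upwards [hu] with j hj k hk
    rw [abs_of_nonneg (hh0 _ _), hdef]
    refine (Finset.sum_le_sum fun i _ => Real.rpow_le_rpow lpNorm_nonneg
      (hsub _ (hj k hk).1 _ (hj k hk).2 i) hq.le).trans_eq ?_
    rw [Finset.sum_const, Finset.card_univ, Fintype.card_fin, nsmul_eq_mul]
  · filter_upwards [hae, ae_restrict_mem measurableSet_Ioo] with t h1 ht
    exact h1.comp ((hut t ht).prodMk (hut' t ht))

theorem tendsto_sum_condMoment (S : SensitivitySetup T p q C μ F DF) {ι : Type*} {l : Filter ι}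
    [l.IsCountablyGenerated] (n : ι → ℕ) (hn : ∀ᶠ j in l, 0 < n j) (u : ι → ℕ → ℝ)
    (hu : ∀ᶠ j in l, ∀ k < n j, u j k ∈ Icc 0 T)
    (hut : ∀ t ∈ Ioo 0 T, Tendsto (fun j => u j (gridIdx T (n j) t)) l (nhds t)) :
    Tendsto (fun j => T / n j * ∑ k ∈ Finset.range (n j), condMoment q μ DF (u j k)) l
      (nhds (∫ t in Ioo 0 T, condMoment q μ DF t)) := by
  have hq := S.hpq.pos
  obtain ⟨K, hK, hb⟩ := S.exists_lpNorm_bound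
  have hae := ae_tendsto_prod_of_left T (fun s s' => condMoment q μ DF s - condMoment q μ DF s')
      fun t ht => by
    have h1 : ∃ a, Tendsto (condMoment q μ DF) (nhdsWithin t (Iio t)) (nhds a) := by
      choose a ha using fun i => S.tendsto_lpNorm_condExp_left ht i
      refine ⟨∑ i, a i ^ q, ?_⟩
      simp_rw [funext S.condMoment_eq]
      exact tendsto_finsetSum _ fun i _ => (ha i).rpow_const (Or.inr hq.le)
    obtain ⟨a, ha⟩ := h1
    have h2 := (ha.comp (tendsto_fst (g := nhdsWithin t (Iio t)))).sub
      (ha.comp (tendsto_snd (f := nhdsWithin t (Iio t))))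
    rwa [sub_self] at h2
  refine tendsto_riemann_sum S.hT n hn _ (d * K ^ q) ?_ _ ?_
  · filter_upwards [hu] with j hj k hk
    rw [abs_of_nonneg (condMoment_nonneg _), S.condMoment_eq]
    refine (Finset.sum_le_sum fun i _ => Real.rpow_le_rpow lpNorm_nonneg
      (((S.memLp_deriv_apply (hj k hk) i).lpNorm_condExp_le_lpNorm S.one_le).trans
        (hb _ (hj k hk) i)) hq.le).trans_eq ?_
    rw [Finset.sum_const, Finset.card_univ, Fintype.card_fin, nsmul_eq_mul]
  · filter_upwards [hae, ae_restrict_mem measurableSet_Ioo] with t h1 ht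
    have h2 := (h1.comp ((hut t ht).prodMk (tendsto_const_nhds (x := t)))).add_const
      (condMoment q μ DF t)
    simpa using h2

end SensitivitySetup

/-- A penalised modulus of continuity of the derivative at time `t` along the step paths of
mesh `T / n`. -/
def stepModulus (T p q : ℝ) {d : ℕ} (DF : (ℝ → Fin d → ℝ) → ℝ → Fin d → ℝ) (n : ℕ) (B t : ℝ)
    (ω : ContPath T d) : ℝ≥0∞ :=
  ⨆ m : ℕ, ENNReal.ofReal
    (‖DF (ω.1 + stepPath T n (TopologicalSpace.denseSeq (Fin (n + 1) → Fin d → ℝ) m)) t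
        - DF ω.1 t‖ ^ q
      - B * ‖TopologicalSpace.denseSeq (Fin (n + 1) → Fin d → ℝ) m‖ ^ p)

namespace SensitivitySetup

variable {T p q C : ℝ} {d : ℕ} {μ : Measure (ContPath T d)} {F : (ℝ → Fin d → ℝ) → ℝ}
  {DF : (ℝ → Fin d → ℝ) → ℝ → Fin d → ℝ}

theorem measurable_stepModulus (S : SensitivitySetup T p q C μ F DF) {n : ℕ} (hn : 0 < n) (B : ℝ)
    {t : ℝ} (ht : t ∈ Icc 0 T) : Measurable (stepModulus T p q DF n B t) := by
  refine Measurable.iSup fun m => ENNReal.measurable_ofReal.comp (Measurable.sub_const ?_ _)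
  refine Measurable.pow_const (Measurable.norm (Measurable.sub ?_ (S.measurable_deriv ht))) _
  exact measurable_pi_lambda _ fun i => ((S.derivCont t ht).apply i).measurable_comp S.hT
    (fun ω => ω.2.1) (fun _ hs => measurable_eval hs) hn measurable_const

theorem exists_norm_sub_le (S : SensitivitySetup T p q C μ F DF) :
    ∃ K : ℝ, 0 ≤ K ∧ ∀ (ω : ContPath T d) {n : ℕ}, 0 < n → ∀ V : Fin (n + 1) → Fin d → ℝ,
      ∀ t ∈ Icc 0 T, ‖DF (ω.1 + stepPath T n V) t - DF ω.1 t‖ ^ q ≤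
        K * (1 + pathMoment T p ω) + K * ‖V‖ ^ p := by
  obtain ⟨K, hK, hb⟩ := S.exists_growth
  have hq := S.hpq.pos
  have hp := S.hpq.symm.pos
  refine ⟨2 ^ q * (2 * K), by positivity, fun ω n hn V t ht => ?_⟩
  have h1 := (hb ω _ ‖V‖ (cadlagOn_stepPath S.hT hn V) (norm_nonneg _)
    fun s _ => norm_stepPath_le V s).2 t ht
  have h2 := (hb ω 0 0 (ContinuousOn.cadlagOn continuousOn_const) le_rfl
    fun s _ => by simp).2 t ht
  rw [add_zero, Real.zero_rpow hp.ne', add_zero] at h2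
  have h3 : ‖DF (ω.1 + stepPath T n V) t - DF ω.1 t‖ ^ q ≤
      2 ^ q * (‖DF (ω.1 + stepPath T n V) t‖ ^ q + ‖DF ω.1 t‖ ^ q) :=
    (Real.rpow_le_rpow (norm_nonneg _) (norm_sub_le _ _) hq.le).trans
      (add_rpow_le_two_rpow_mul (norm_nonneg _) (norm_nonneg _) hq.le)
  have h4 : (0 : ℝ) ≤ 2 ^ q := by positivity
  have h5 : 0 ≤ K * ‖V‖ ^ p := by positivity
  nlinarith [mul_le_mul_of_nonneg_left (add_le_add h1 h2) h4, mul_nonneg h4 h5]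

theorem exists_stepModulus_le (S : SensitivitySetup T p q C μ F DF) :
    ∃ K : ℝ, 0 ≤ K ∧ ∀ B, K ≤ B → ∀ {n : ℕ}, 0 < n → ∀ t ∈ Icc 0 T, ∀ ω : ContPath T d,
      stepModulus T p q DF n B t ω ≤ ENNReal.ofReal (K * (1 + pathMoment T p ω)) := by
  obtain ⟨K, hK, hb⟩ := S.exists_norm_sub_le
  refine ⟨K, hK, fun B hB n hn t ht ω => iSup_le fun m => ENNReal.ofReal_le_ofReal ?_⟩
  have h1 := hb ω hn (TopologicalSpace.denseSeq (Fin (n + 1) → Fin d → ℝ) m) t ht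
  have h2 : K * ‖TopologicalSpace.denseSeq (Fin (n + 1) → Fin d → ℝ) m‖ ^ p ≤
      B * ‖TopologicalSpace.denseSeq (Fin (n + 1) → Fin d → ℝ) m‖ ^ p := by gcongr
  linarith

theorem norm_sub_le_stepModulus (S : SensitivitySetup T p q C μ F DF) {n : ℕ} (hn : 0 < n)
    {B t : ℝ} (ht : t ∈ Icc 0 T) (ω : ContPath T d) (V : Fin (n + 1) → Fin d → ℝ) :
    ENNReal.ofReal (‖DF (ω.1 + stepPath T n V) t - DF ω.1 t‖ ^ q - B * ‖V‖ ^ p) ≤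
      stepModulus T p q DF n B t ω := by
  have hcont : Continuous fun V : Fin (n + 1) → Fin d → ℝ =>
      ENNReal.ofReal (‖DF (ω.1 + stepPath T n V) t - DF ω.1 t‖ ^ q - B * ‖V‖ ^ p) := by
    refine ENNReal.continuous_ofReal.comp (Continuous.sub ?_ (continuous_const.mul
      (continuous_norm.rpow_const fun _ => Or.inr S.hpq.symm.pos.le)))
    refine Continuous.rpow_const (Continuous.norm (Continuous.sub ?_ continuous_const))
      fun _ => Or.inr S.hpq.pos.le
    exact continuous_pi fun i => ((S.derivCont t ht).apply i).continuous_stepPath S.hT hn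
      ω.2.1.cadlagOn
  have hclosed := isClosed_le hcont (continuous_const (y := stepModulus T p q DF n B t ω))
  refine hclosed.closure_subset_iff.2 (range_subset_iff.2 fun m => ?_)
    (TopologicalSpace.denseRange_denseSeq (Fin (n + 1) → Fin d → ℝ) V)
  exact le_iSup (fun m : ℕ => ENNReal.ofReal
    (‖DF (ω.1 + stepPath T n (TopologicalSpace.denseSeq (Fin (n + 1) → Fin d → ℝ) m)) t
      - DF ω.1 t‖ ^ q - B * ‖TopologicalSpace.denseSeq (Fin (n + 1) → Fin d → ℝ) m‖ ^ p)) m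

theorem tendsto_stepModulus (S : SensitivitySetup T p q C μ F DF) {t : ℝ} (ht : t ∈ Ioo 0 T)
    (h : Tendsto (fun n : ℕ => grid T n (gridIdx T n t)) atTop (nhdsWithin t (Iio t)))
    (ω : ContPath T d) :
    Tendsto (fun z : ℕ × ℕ => stepModulus T p q DF z.1 z.2 (grid T z.1 (gridIdx T z.1 t)) ω)
      (atTop ×ˢ atTop) (nhds 0) := by
  obtain ⟨K, hK, hb⟩ := S.exists_norm_sub_le
  obtain ⟨l, hl⟩ := S.leftLim.exists_uniform (x := ω.1) ω.2.1.cadlagOn ⟨ht.1, ht.2.le⟩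
  have hq := S.hpq.pos
  have hp := S.hpq.symm.pos
  have hΦ := pathMoment_nonneg (p := p) ω
  rw [ENNReal.tendsto_nhds_zero]
  intro ε hε
  obtain ⟨ε', hε'0, hε'⟩ : ∃ ε' : ℝ, 0 < ε' ∧ ENNReal.ofReal ((2 * ε') ^ q) ≤ ε := by
    have h1 : Tendsto (fun x : ℝ => ENNReal.ofReal ((2 * x) ^ q)) (nhdsWithin 0 (Ioi 0))
        (nhds 0) := by
      have h2 : Continuous fun x : ℝ => ENNReal.ofReal ((2 * x) ^ q) :=
        ENNReal.continuous_ofReal.comp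
          ((continuous_const.mul continuous_id).rpow_const fun _ => Or.inr hq.le)
      have h3 := h2.tendsto 0
      simp only [mul_zero, Real.zero_rpow hq.ne', ENNReal.ofReal_zero] at h3
      exact h3.mono_left nhdsWithin_le_nhds
    obtain ⟨x, hx⟩ := ((ENNReal.tendsto_nhds_zero.1 h1 ε hε).and self_mem_nhdsWithin).exists
    exact ⟨x, hx.2, hx.1⟩
  obtain ⟨η, hη, hη'⟩ := hl ε' hε'0
  have hev1 : ∀ᶠ n : ℕ in atTop, 0 < n ∧ grid T n (gridIdx T n t) ∈ Ioo (t - η) t := by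
    refine (eventually_gt_atTop 0).and (h.eventually ?_)
    exact Ioo_mem_nhdsLT (by linarith)
  have hev2 : ∀ᶠ B : ℕ in atTop, K + K * (1 + pathMoment T p ω) / η ^ p ≤ B :=
    tendsto_natCast_atTop_atTop.eventually_ge_atTop _
  filter_upwards [hev1.prod_mk hev2] with ⟨n, B⟩ ⟨⟨hn, hg⟩, hB⟩
  have hgI : grid T n (gridIdx T n t) ∈ Icc 0 T := by
    refine ⟨?_, hg.2.le.trans ht.2.le⟩
    have := grid_mono S.hT n (Nat.zero_le (gridIdx T n t))
    rwa [grid_zero] at this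
  refine iSup_le fun m => ?_
  generalize TopologicalSpace.denseSeq (Fin (n + 1) → Fin d → ℝ) m = V
  rcases lt_or_ge ‖V‖ η with hV | hV
  · refine le_trans (ENNReal.ofReal_le_ofReal ?_) hε'
    have h1 := hη' (ω.1 + stepPath T n V)
      (CadlagOn.add ω.2.1.cadlagOn (cadlagOn_stepPath S.hT hn V))
      (fun s _ => by simpa using (norm_stepPath_le V s).trans_lt hV) _ hg
    have h2 := hη' ω.1 ω.2.1.cadlagOn (fun s _ => by simpa using hη) _ hg
    have h3 : ‖DF (ω.1 + stepPath T n V) (grid T n (gridIdx T n t)) -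
        DF ω.1 (grid T n (gridIdx T n t))‖ ≤ 2 * ε' := by
      rw [← sub_sub_sub_cancel_right _ _ l]
      exact (norm_sub_le _ _).trans (by linarith)
    have h4 := Real.rpow_le_rpow (norm_nonneg _) h3 hq.le
    have h5 : 0 ≤ (B : ℝ) * ‖V‖ ^ p := by positivity
    linarith
  · rw [ENNReal.ofReal_of_nonpos]
    · exact zero_le
    have h1 := hb ω hn V _ hgI
    have hηp : 0 < η ^ p := by positivity
    have h2 : η ^ p ≤ ‖V‖ ^ p := Real.rpow_le_rpow hη.le hV hp.le
    have h3 : K * (1 + pathMoment T p ω) / η ^ p * ‖V‖ ^ p ≥ K * (1 + pathMoment T p ω) := by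
      rw [ge_iff_le, div_mul_eq_mul_div, le_div_iff₀ hηp]
      gcongr
    have h4 := mul_le_mul_of_nonneg_right hB (show 0 ≤ ‖V‖ ^ p by positivity)
    linarith

/-- The derivative is uniformly continuous along step paths up to an error which vanishes on
average, and a multiple of the `p`-th power of the size of the shift. -/
theorem exists_modulus (S : SensitivitySetup T p q C μ F DF) :
    ∃ (W : ℕ → ℕ → ℕ → ContPath T d → ℝ) (B₀ : ℕ),
      (∀ n B k, 0 < n → B₀ ≤ B → k ≤ n → Integrable (W n B k) μ ∧ ∀ ω : ContPath T d,
        ∀ V : Fin (n + 1) → Fin d → ℝ,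
        ‖DF (ω.1 + stepPath T n V) (grid T n k) - DF ω.1 (grid T n k)‖ ^ q ≤
          W n B k ω + B * ‖V‖ ^ p) ∧ (∀ n B k ω, 0 ≤ W n B k ω) ∧
      Tendsto (fun z : ℕ × ℕ => T / z.1 * ∑ k ∈ Finset.range z.1, ∫ ω, W z.1 z.2 k ω ∂μ)
        (atTop ×ˢ atTop) (nhds 0) := by
  obtain ⟨K, hK, hb⟩ := S.exists_stepModulus_le
  have := S.prob
  let W : ℕ → ℕ → ℕ → ContPath T d → ℝ := fun n B k ω =>
    (stepModulus T p q DF n B (grid T n k) ω).toReal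
  have hint : Integrable (fun ω => K * (1 + pathMoment T p ω)) μ :=
    ((integrable_const 1).add S.moment).const_mul K
  have hW : ∀ n B k, 0 < n → ⌈K⌉₊ ≤ B → k ≤ n → ∀ ω, W n B k ω ≤ K * (1 + pathMoment T p ω) :=
    fun n B k hn hB hk ω => ENNReal.toReal_le_of_le_ofReal
      (mul_nonneg hK (by linarith [pathMoment_nonneg (p := p) ω]))
      (hb B (Nat.ceil_le.1 hB) hn _ (grid_mem_Icc S.hT hn hk) ω)
  have hmeas : ∀ n B k, 0 < n → k ≤ n → Measurable (W n B k) := fun n B k hn hk =>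
    (S.measurable_stepModulus hn B (grid_mem_Icc S.hT hn hk)).ennreal_toReal
  have hWint : ∀ n B k, 0 < n → ⌈K⌉₊ ≤ B → k ≤ n → Integrable (W n B k) μ :=
    fun n B k hn hB hk => hint.mono' (hmeas n B k hn hk).aestronglyMeasurable <|
      ae_of_all _ fun ω => by
        rw [Real.norm_of_nonneg ENNReal.toReal_nonneg]
        exact hW n B k hn hB hk ω
  refine ⟨W, ⌈K⌉₊, fun n B k hn hB hk => ⟨hWint n B k hn hB hk, fun ω V => ?_⟩,
    fun _ _ _ _ => ENNReal.toReal_nonneg, ?_⟩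
  · have h1 := S.norm_sub_le_stepModulus hn (B := B) (grid_mem_Icc S.hT hn hk) ω V
    have h2 := (hb B (Nat.ceil_le.1 hB) hn _ (grid_mem_Icc S.hT hn hk) ω)
    have h3 := (ENNReal.ofReal_le_iff_le_toReal (h2.trans_lt ENNReal.ofReal_lt_top).ne).1 h1
    linarith
  · have hev : ∀ᶠ z : ℕ × ℕ in atTop ×ˢ atTop, 0 < z.1 ∧ ⌈K⌉₊ ≤ z.2 :=
      (eventually_gt_atTop 0).prod_mk (eventually_ge_atTop _)
    have := tendsto_riemann_sum S.hT (l := (atTop ×ˢ atTop : Filter (ℕ × ℕ))) Prod.fst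
      (hev.mono fun _ h => h.1) (fun z k => ∫ ω, W z.1 z.2 k ω ∂μ)
      (∫ ω, K * (1 + pathMoment T p ω) ∂μ) ?_ (fun _ => 0) ?_
    · simpa using this
    · filter_upwards [hev] with z hz k hk
      rw [abs_of_nonneg (integral_nonneg fun _ => ENNReal.toReal_nonneg)]
      exact integral_mono (hWint _ _ _ hz.1 hz.2 hk.le) hint (hW _ _ _ hz.1 hz.2 hk.le)
    · filter_upwards [ae_tendsto_grid_gridIdx_lt S.hT, ae_restrict_mem measurableSet_Ioo]
        with t h1 ht
      rw [← integral_zero (ContPath T d) ℝ (μ := μ)]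
      have hidx : ∀ n : ℕ, 0 < n → gridIdx T n t ≤ n := fun n hn =>
        (gridIdx_lt S.hT hn ⟨ht.1.le, ht.2⟩).le
      refine tendsto_integral_filter_of_dominated_convergence
        (fun ω => K * (1 + pathMoment T p ω)) ?_ ?_ hint ?_
      · filter_upwards [hev] with z hz
        exact (hmeas _ _ _ hz.1 (hidx _ hz.1)).aestronglyMeasurable
      · filter_upwards [hev] with z hz
        refine ae_of_all _ fun ω => ?_
        rw [Real.norm_of_nonneg ENNReal.toReal_nonneg]
        exact hW _ _ _ hz.1 hz.2 (hidx _ hz.1) ω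
      · refine ae_of_all _ fun ω => ?_
        have h2 := S.tendsto_stepModulus ht h1 ω
        rw [← ENNReal.toReal_zero]
        exact (ENNReal.tendsto_toReal ENNReal.zero_ne_top).comp h2

end SensitivitySetup

/-- The displacement of a pair of paths at the grid points. -/
def gridDiff (T : ℝ) {d : ℕ} (n : ℕ) (z : ContPath T d × ContPath T d) (k : ℕ) : Fin d → ℝ :=
  z.1.1 (grid T n k) - z.2.1 (grid T n k)

/-- The maximal displacement of a pair of paths over the grid points. -/
def gridSup (T : ℝ) {d : ℕ} (n : ℕ) (z : ContPath T d × ContPath T d) : ℝ :=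
  ‖fun j : Fin (n + 1) => gridDiff T n z j‖

/-- `π` is a probability measure with first marginal `μ` and transport cost at most `r ^ p`. -/
structure PlanBound (T p : ℝ) {d : ℕ} (μ : Measure (ContPath T d))
    (π : Measure (ContPath T d × ContPath T d)) (r : ℝ) : Prop where
  prob : IsProbabilityMeasure π
  fst : π.map Prod.fst = μ
  nonneg : 0 ≤ r
  cost : ∫⁻ z, hcost T p z.1.1 z.2.1 ∂π ≤ ENNReal.ofReal (r ^ p)

section GridDiff

variable {T p : ℝ} {d : ℕ} {μ : Measure (ContPath T d)}
  {π : Measure (ContPath T d × ContPath T d)} {r : ℝ}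

theorem gridDiff_zero (n : ℕ) (z : ContPath T d × ContPath T d) : gridDiff T n z 0 = 0 := by
  simp [gridDiff, grid_zero, z.1.2.2, z.2.2.2]

theorem measurable_gridDiff (hT : 0 < T) {n k : ℕ} (hn : 0 < n) (hk : k ≤ n) :
    Measurable fun z : ContPath T d × ContPath T d => gridDiff T n z k :=
  ((measurable_eval (grid_mem_Icc hT hn hk)).comp measurable_fst).sub
    ((measurable_eval (grid_mem_Icc hT hn hk)).comp measurable_snd)

theorem measurable_gridSup (hT : 0 < T) {n : ℕ} (hn : 0 < n) :
    Measurable (gridSup T n : ContPath T d × ContPath T d → ℝ) :=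
  (measurable_pi_lambda _ fun j : Fin (n + 1) =>
    measurable_gridDiff hT hn (Nat.lt_succ_iff.1 j.2)).norm

theorem ofReal_gridSup_rpow_le (hT : 0 < T) (hp : 1 < p) {n : ℕ} (hn : 0 < n)
    (z : ContPath T d × ContPath T d) :
    ENNReal.ofReal (gridSup T n z ^ p) ≤
      ENNReal.ofReal (T ^ (p - 1)) * hcost T p z.1.1 z.2.1 := by
  obtain ⟨j, -, hj⟩ := Finset.exists_mem_eq_sup (Finset.univ : Finset (Fin (n + 1)))
    ⟨0, Finset.mem_univ _⟩ fun j => ‖gridDiff T n z j‖₊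
  have h1 : gridSup T n z = ‖gridDiff T n z j‖ := by
    rw [gridSup, Pi.norm_def, hj, coe_nnnorm]
  rw [h1]
  exact norm_rpow_le_hcost hT hp (by rw [z.1.2.2, z.2.2.2])
    (grid_mem_Icc hT hn (Nat.lt_succ_iff.1 j.2))

theorem PlanBound.sum_integral_increment_le (h : PlanBound T p μ π r) (hT : 0 < T) (hp : 1 < p)
    {n : ℕ} (hn : 0 < n) :
    (∀ k < n, ∀ i, MemLp (fun z => gridDiff T n z k i - gridDiff T n z (k + 1) i)
      (ENNReal.ofReal p) π) ∧
    ∑ k ∈ Finset.range n, ∑ i, ∫ z, |gridDiff T n z k i - gridDiff T n z (k + 1) i| ^ p ∂π ≤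
      (T / n) ^ (p - 1) * r ^ p := by
  have hw : 0 < T / n := by positivity
  have hr := h.nonneg
  have hmeas : ∀ k < n, ∀ i : Fin d, Measurable fun z : ContPath T d × ContPath T d =>
      gridDiff T n z k i - gridDiff T n z (k + 1) i := fun k hk i =>
    ((measurable_pi_apply i).comp (measurable_gridDiff hT hn hk.le)).sub
      ((measurable_pi_apply i).comp (measurable_gridDiff hT hn hk))
  have hmeas' : ∀ k < n, ∀ i, Measurable fun z : ContPath T d × ContPath T d =>
      ENNReal.ofReal (|gridDiff T n z k i - gridDiff T n z (k + 1) i| ^ p) := fun k hk i =>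
    ENNReal.measurable_ofReal.comp ((measurable_norm.comp (hmeas k hk i)).pow_const p)
  have hle : ∑ k ∈ Finset.range n, ∑ i,
      ∫⁻ z, ENNReal.ofReal (|gridDiff T n z k i - gridDiff T n z (k + 1) i| ^ p) ∂π ≤
      ENNReal.ofReal ((T / n) ^ (p - 1) * r ^ p) := by
    calc _ = ∫⁻ z, ∑ k ∈ Finset.range n, ∑ i,
          ENNReal.ofReal (|gridDiff T n z k i - gridDiff T n z (k + 1) i| ^ p) ∂π := by
          rw [lintegral_finsetSum _ fun k hk => Finset.measurable_sum _ fun i _ =>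
            hmeas' k (Finset.mem_range.1 hk) i]
          refine Finset.sum_congr rfl fun k hk => ?_
          rw [lintegral_finsetSum _ fun i _ => hmeas' k (Finset.mem_range.1 hk) i]
      _ ≤ ∫⁻ z, ENNReal.ofReal ((T / n) ^ (p - 1)) * hcost T p z.1.1 z.2.1 ∂π := by
          refine lintegral_mono fun z => ?_
          refine le_trans (le_of_eq ?_)
            (sum_sum_abs_increment_rpow_le_hcost hT hp hn z.1.1 z.2.1)
          refine Finset.sum_congr rfl fun k _ => Finset.sum_congr rfl fun i _ => ?_
          rw [abs_sub_comm]
          simp [gridDiff]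
      _ ≤ _ := by
          rw [lintegral_const_mul' _ _ ENNReal.ofReal_ne_top,
            ENNReal.ofReal_mul (by positivity)]
          gcongr
          exact h.cost
  have hlt : ∀ k < n, ∀ i : Fin d,
      ∫⁻ z, ENNReal.ofReal (|gridDiff T n z k i - gridDiff T n z (k + 1) i| ^ p) ∂π < ⊤ := by
    intro k hk i
    refine lt_of_le_of_lt ?_ (hle.trans_lt ENNReal.ofReal_lt_top)
    refine le_trans ?_ (Finset.single_le_sum (fun _ _ => zero_le) (Finset.mem_range.2 hk))
    exact Finset.single_le_sum (f := fun i => ∫⁻ z, ENNReal.ofReal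
      (|gridDiff T n z k i - gridDiff T n z (k + 1) i| ^ p) ∂π) (fun _ _ => zero_le)
      (Finset.mem_univ i)
  have hp0 : 0 < p := by linarith
  have hint : ∀ k < n, ∀ i : Fin d,
      Integrable (fun z => |gridDiff T n z k i - gridDiff T n z (k + 1) i| ^ p) π :=
    fun k hk i => ⟨((measurable_norm.comp (hmeas k hk i)).pow_const p).aestronglyMeasurable, by
      rw [hasFiniteIntegral_iff_ofReal (ae_of_all _ fun z => by positivity)]
      exact hlt k hk i⟩
  refine ⟨fun k hk i => ?_, ?_⟩
  · rw [← integrable_norm_rpow_iff (hmeas k hk i).aestronglyMeasurable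
      (ENNReal.ofReal_pos.2 hp0).ne' ENNReal.ofReal_ne_top, ENNReal.toReal_ofReal hp0.le]
    exact hint k hk i
  · rw [← ENNReal.ofReal_le_ofReal_iff (by positivity)]
    refine le_trans (le_of_eq ?_) hle
    rw [ENNReal.ofReal_sum_of_nonneg fun k _ => Finset.sum_nonneg fun i _ =>
      integral_nonneg fun z => by positivity]
    refine Finset.sum_congr rfl fun k hk => ?_
    rw [ENNReal.ofReal_sum_of_nonneg fun i _ => integral_nonneg fun z => by positivity]
    refine Finset.sum_congr rfl fun i _ => ?_
    rw [ofReal_integral_eq_lintegral_ofReal (hint k (Finset.mem_range.1 hk) i)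
      (ae_of_all _ fun z => by positivity)]

/-- The grid displacements are dominated by a single integrable function. -/
theorem PlanBound.exists_bound (h : PlanBound T p μ π r) (hT : 0 < T) (hp : 1 < p) :
    ∃ g : ContPath T d × ContPath T d → ℝ, Integrable g π ∧ ∫ z, g z ∂π ≤ T ^ (p - 1) * r ^ p ∧
      ∀ᵐ z ∂π, ∀ n, 0 < n → gridSup T n z ^ p ≤ g z := by
  have hr := h.nonneg
  let G : ContPath T d × ContPath T d → ℝ≥0∞ :=
    fun z => ⨆ m : ℕ, ENNReal.ofReal (gridSup T (m + 1) z ^ p)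
  have hG : Measurable G := Measurable.iSup fun m =>
    ENNReal.measurable_ofReal.comp ((measurable_gridSup hT m.succ_pos).pow_const p)
  have hle : ∫⁻ z, G z ∂π ≤ ENNReal.ofReal (T ^ (p - 1) * r ^ p) := by
    calc ∫⁻ z, G z ∂π ≤ ∫⁻ z, ENNReal.ofReal (T ^ (p - 1)) * hcost T p z.1.1 z.2.1 ∂π :=
          lintegral_mono fun z => iSup_le fun m => ofReal_gridSup_rpow_le hT hp m.succ_pos z
      _ ≤ _ := by
          rw [lintegral_const_mul' _ _ ENNReal.ofReal_ne_top, ENNReal.ofReal_mul (by positivity)]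
          gcongr
          exact h.cost
  have hlt := hle.trans_lt ENNReal.ofReal_lt_top
  refine ⟨fun z => (G z).toReal, integrable_toReal_of_lintegral_ne_top hG.aemeasurable hlt.ne,
    ?_, ?_⟩
  · rw [integral_toReal hG.aemeasurable (ae_lt_top hG hlt.ne)]
    exact ENNReal.toReal_le_of_le_ofReal (by positivity) hle
  · filter_upwards [ae_lt_top hG hlt.ne] with z hz n hn
    rw [← ENNReal.ofReal_le_iff_le_toReal hz.ne]
    obtain ⟨m, rfl⟩ := Nat.exists_eq_succ_of_ne_zero hn.ne'
    exact le_iSup (fun m : ℕ => ENNReal.ofReal (gridSup T (m + 1) z ^ p)) m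

theorem tendstoUniformlyOn_shiftPath (hT : 0 < T) (z : ContPath T d × ContPath T d) :
    TendstoUniformlyOn (fun m : ℕ => shiftPath T (m + 1) z.1.1 (gridDiff T (m + 1) z) (m + 1))
      z.2.1 atTop (Icc 0 T) := by
  have huc := isCompact_Icc.uniformContinuousOn_of_continuous (z.1.2.1.sub z.2.2.1)
  rw [Metric.uniformContinuousOn_iff] at huc
  rw [Metric.tendstoUniformlyOn_iff]
  intro ε hε
  obtain ⟨η, hη, h⟩ := huc ε hε
  have h0 : Tendsto (fun m : ℕ => T / ((m + 1 : ℕ) : ℝ)) atTop (nhds 0) :=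
    (tendsto_const_div_atTop_nhds_zero_nat T).comp (tendsto_add_atTop_nat 1)
  filter_upwards [h0.eventually (gt_mem_nhds hη)] with m hm t ht
  rw [shiftPath_apply hT m.succ_pos _ (gridDiff_zero _ z) _ ht]
  have h1 := grid_gridIdx_le hT m.succ_pos ht.1
  have h2 := lt_grid_gridIdx hT m.succ_pos ht.1
  have h3 := grid_succ_sub (T := T) (m + 1) (gridIdx T (m + 1) t)
  have h5 := h t ht (grid T (m + 1) (min (m + 1) (gridIdx T (m + 1) t + 1)))
    (grid_mem_Icc hT m.succ_pos (min_le_left _ _)) ?_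
  · rw [dist_eq_norm] at h5 ⊢
    rw [norm_sub_rev]
    refine lt_of_eq_of_lt (congrArg norm ?_) h5
    change z.1.1 t - (z.1.1 _ - z.2.1 _) - z.2.1 t = (z.1.1 t - z.2.1 t) - (z.1.1 _ - z.2.1 _)
    abel
  · rcases le_total (m + 1) (gridIdx T (m + 1) t + 1) with h4 | h4
    · rw [min_eq_left h4]
      have h6 := grid_mono hT (m + 1) h4
      rw [grid_self m.succ_pos] at h6 ⊢
      have h7 := ht.2
      rw [Real.dist_eq, abs_lt]
      have h8 : grid T (m + 1) (gridIdx T (m + 1) t) ≤ t := h1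
      constructor <;> linarith
    · rw [min_eq_right h4, Real.dist_eq, abs_lt]
      constructor <;> linarith

end GridDiff

namespace SensitivitySetup

variable {T p q C : ℝ} {d : ℕ} {μ : Measure (ContPath T d)} {F : (ℝ → Fin d → ℝ) → ℝ}
  {DF : (ℝ → Fin d → ℝ) → ℝ → Fin d → ℝ} {π : Measure (ContPath T d × ContPath T d)} {r : ℝ}

theorem shiftPath_functional_eq (S : SensitivitySetup T p q C μ F DF) {n : ℕ} (hn : 0 < n)
    (z : ContPath T d × ContPath T d) :
    F (shiftPath T n z.1.1 (gridDiff T n z) n) = F (z.1.1 +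
      stepPath T n fun k => - gridDiff T n z (min n ((k : ℕ) + 1))) :=
  S.cont.congr (cadlagOn_shiftPath n z.1.2.1 _ n)
    (CadlagOn.add z.1.2.1.cadlagOn (cadlagOn_stepPath S.hT hn _))
    (shiftPath_eqOn_stepPath S.hT hn z.1.1 (gridDiff_zero n z))

theorem measurable_shiftPath_functional (S : SensitivitySetup T p q C μ F DF) {n : ℕ}
    (hn : 0 < n) : Measurable fun z : ContPath T d × ContPath T d =>
      F (shiftPath T n z.1.1 (gridDiff T n z) n) := by
  simp_rw [S.shiftPath_functional_eq hn]
  exact S.cont.measurable_comp S.hT (fun z => z.1.2.1)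
    (fun t ht => (measurable_eval ht).comp measurable_fst) hn
    (measurable_pi_lambda _ fun k => (measurable_gridDiff S.hT hn (min_le_left _ _)).neg)

theorem exists_shiftPath_functional_le (S : SensitivitySetup T p q C μ F DF) :
    ∃ K : ℝ, 0 ≤ K ∧ ∀ (z : ContPath T d × ContPath T d) {n : ℕ}, 0 < n →
      |F (shiftPath T n z.1.1 (gridDiff T n z) n)| ≤
        K * (1 + pathMoment T p z.1 + gridSup T n z ^ p) := by
  obtain ⟨K, hK, hb⟩ := S.exists_growth
  refine ⟨K, hK, fun z n hn => ?_⟩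
  rw [S.shiftPath_functional_eq hn]
  refine (hb z.1 _ _ (cadlagOn_stepPath S.hT hn _) (norm_nonneg _) fun s _ => ?_).1
  refine (norm_stepPath_le _ s).trans ?_
  refine (pi_norm_le_iff_of_nonneg (norm_nonneg _)).2 fun k => ?_
  rw [norm_neg]
  exact norm_le_pi_norm (fun j : Fin (n + 1) => gridDiff T n z j)
    ⟨min n ((k : ℕ) + 1), by omega⟩

theorem tendsto_integral_shiftPath (S : SensitivitySetup T p q C μ F DF)
    (h : PlanBound T p μ π r) :
    Tendsto (fun m : ℕ => ∫ z, F (shiftPath T (m + 1) z.1.1 (gridDiff T (m + 1) z) (m + 1)) ∂π)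
      atTop (nhds (∫ z, F z.2.1 ∂π)) := by
  obtain ⟨K, hK, hb⟩ := S.exists_shiftPath_functional_le
  obtain ⟨g, hg, -, hgb⟩ := h.exists_bound S.hT S.hpq.symm.lt
  have := h.prob
  have hmom : Integrable (fun z : ContPath T d × ContPath T d => pathMoment T p z.1) π := by
    have h1 := S.moment
    rw [← h.fst] at h1
    exact h1.comp_measurable measurable_fst
  refine tendsto_integral_of_dominated_convergence
    (fun z => K * (1 + pathMoment T p z.1 + g z))
    (fun m => (S.measurable_shiftPath_functional m.succ_pos).aestronglyMeasurable)
    ((((integrable_const 1).add hmom).add hg).const_mul K) (fun m => ?_) (ae_of_all _ fun z => ?_)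
  · filter_upwards [hgb] with z hz
    refine (hb z m.succ_pos).trans ?_
    gcongr
    exact hz _ m.succ_pos
  · exact S.cont _ _ z.2.2.1.cadlagOn
      (fun m => cadlagOn_shiftPath (m + 1) z.1.2.1 _ _)
      (tendstoUniformlyOn_shiftPath S.hT z)

end SensitivitySetup

theorem Real.HolderConjugate.integrable_mul {Ω : Type*} [MeasurableSpace Ω] {π : Measure Ω}
    {q p : ℝ} (hpq : q.HolderConjugate p) {f g : Ω → ℝ} (hf : MemLp f (ENNReal.ofReal q) π)
    (hg : MemLp g (ENNReal.ofReal p) π) : Integrable (fun z => f z * g z) π := by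
  have := hpq.ennrealOfReal
  exact hf.integrable_mul hg

section PlanBound

variable {T p : ℝ} {d : ℕ} {μ : Measure (ContPath T d)}
  {π : Measure (ContPath T d × ContPath T d)} {r : ℝ}

theorem PlanBound.measurePreserving_fst (h : PlanBound T p μ π r) :
    MeasurePreserving Prod.fst π μ := ⟨measurable_fst, h.fst⟩

theorem PlanBound.integral_fst (h : PlanBound T p μ π r) {φ : ContPath T d → ℝ}
    (hφ : AEStronglyMeasurable φ μ) : ∫ z, φ z.1 ∂π = ∫ ω, φ ω ∂μ := by
  have hφ' := hφ
  rw [← h.fst] at hφ' ⊢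
  exact (integral_map measurable_fst.aemeasurable hφ').symm

theorem PlanBound.integral_gridSup_rpow_le (h : PlanBound T p μ π r) (hT : 0 < T) (hp : 1 < p)
    {n : ℕ} (hn : 0 < n) : Integrable (fun z => gridSup T n z ^ p) π ∧
      ∫ z, gridSup T n z ^ p ∂π ≤ T ^ (p - 1) * r ^ p := by
  obtain ⟨g, hg, hgi, hgb⟩ := h.exists_bound hT hp
  have h0 : ∀ z : ContPath T d × ContPath T d, 0 ≤ gridSup T n z ^ p := fun z => Real.rpow_nonneg (norm_nonneg _) _
  have h1 : Integrable (fun z => gridSup T n z ^ p) π := by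
    refine hg.mono' ((measurable_gridSup hT hn).pow_const p).aestronglyMeasurable ?_
    filter_upwards [hgb] with z hz
    rw [Real.norm_of_nonneg (h0 z)]
    exact hz n hn
  refine ⟨h1, (integral_mono_ae h1 hg ?_).trans hgi⟩
  filter_upwards [hgb] with z hz using hz n hn

end PlanBound

namespace SensitivitySetup

variable {T p q C : ℝ} {d : ℕ} {μ : Measure (ContPath T d)} {F : (ℝ → Fin d → ℝ) → ℝ}
  {DF : (ℝ → Fin d → ℝ) → ℝ → Fin d → ℝ} {π : Measure (ContPath T d × ContPath T d)} {r : ℝ}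

theorem integrable_shiftPath (S : SensitivitySetup T p q C μ F DF) (h : PlanBound T p μ π r)
    {n : ℕ} (hn : 0 < n) :
    Integrable (fun z => F (shiftPath T n z.1.1 (gridDiff T n z) n)) π := by
  obtain ⟨K, hK, hb⟩ := S.exists_shiftPath_functional_le
  have := h.prob
  have h1 := (h.integral_gridSup_rpow_le S.hT S.hpq.symm.lt hn).1
  have h2 : Integrable (fun z : ContPath T d × ContPath T d => pathMoment T p z.1) π :=
    h.measurePreserving_fst.integrable_comp_of_integrable S.moment
  exact ((((integrable_const 1).add h2).add h1).const_mul K).mono'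
    (S.measurable_shiftPath_functional hn).aestronglyMeasurable (ae_of_all _ fun z => hb z hn)

theorem abs_shiftPath_sub_le (S : SensitivitySetup T p q C μ F DF) (n : ℕ)
    (z : ContPath T d × ContPath T d) (A : ℕ → ℝ)
    (hA : ∀ k < n, ∀ V : Fin (n + 1) → Fin d → ℝ, ‖V‖ ≤ gridSup T n z →
      ‖DF (z.1.1 + stepPath T n V) (grid T n k) - DF z.1.1 (grid T n k)‖ ≤ A k) :
    |F (shiftPath T n z.1.1 (gridDiff T n z) n) - F z.1.1 - ∑ k ∈ Finset.range n, ∑ i,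
        DF z.1.1 (grid T n (k + 1)) i * (gridDiff T n z k i - gridDiff T n z (k + 1) i)| ≤
      ∑ k ∈ Finset.range n, ∑ i,
        (A k * |gridDiff T n z k i - gridDiff T n z (k + 1) i| +
          |DF z.1.1 (grid T n k) i - DF z.1.1 (grid T n (k + 1)) i| *
            |gridDiff T n z k i - gridDiff T n z (k + 1) i|) := by
  have h0 : shiftPath T n z.1.1 (gridDiff T n z) 0 = z.1.1 := by simp [shiftPath]
  have h1 := Finset.sum_range_sub (fun k => F (shiftPath T n z.1.1 (gridDiff T n z) k)) n
  rw [h0] at h1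
  rw [← h1, ← Finset.sum_sub_distrib]
  refine (Finset.abs_sum_le_sum_abs _ _).trans (Finset.sum_le_sum fun k hk => ?_)
  obtain ⟨V, hV, heq⟩ := exists_shiftPath_succ_sub_eq S.hT S.deriv S.derivCont
    (Finset.mem_range.1 hk) z.1.2.1 (gridDiff_zero n z)
  rw [heq, ← Finset.sum_sub_distrib]
  refine (Finset.abs_sum_le_sum_abs _ _).trans (Finset.sum_le_sum fun i _ => ?_)
  rw [← sub_mul, abs_mul, ← add_mul]
  refine mul_le_mul_of_nonneg_right ?_ (abs_nonneg _)
  refine (abs_sub_le _ (DF z.1.1 (grid T n k) i) _).trans (add_le_add_left ?_ _)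
  exact (norm_le_pi_norm (DF (z.1.1 + stepPath T n V) (grid T n k) - DF z.1.1 (grid T n k))
    i).trans (hA k (Finset.mem_range.1 hk) V hV)

/-- First-order expansion of the expected value of the functional along a plan, up to an error
which is uniform over plans of a given cost. -/
theorem exists_abs_integral_shiftPath_sub_le (S : SensitivitySetup T p q C μ F DF) {ε : ℝ}
    (hε : 0 < ε) : ∃ B : ℝ, 0 ≤ B ∧ ∀ᶠ n : ℕ in atTop,
      ∀ (π : Measure (ContPath T d × ContPath T d)) (r : ℝ), PlanBound T p μ π r →
      |∫ z, F (shiftPath T n z.1.1 (gridDiff T n z) n) ∂π - ∫ ω, F ω.1 ∂μ -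
        ∑ k ∈ Finset.range n, ∑ i, ∫ z, DF z.1.1 (grid T n (k + 1)) i *
          (gridDiff T n z k i - gridDiff T n z (k + 1) i) ∂π| ≤ ε * r + B * r ^ p := by
  have hT := S.hT
  have hq := S.hpq.pos
  have hp := S.hpq.symm.pos
  obtain ⟨W, B₀, hW, hW0, hWt⟩ := S.exists_modulus
  have hsub := S.tendsto_sum_deriv_sub (l := atTop) (fun n : ℕ => n) (eventually_gt_atTop 0)
    (fun n k => grid T n k) (fun n k => grid T n (k + 1))
    ((eventually_gt_atTop 0).mono fun n hn k hk =>
      ⟨grid_mem_Icc hT hn hk.le, grid_mem_Icc hT hn hk⟩)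
    (fun t ht => tendsto_grid_gridIdx hT ht.1.le) (fun t ht => tendsto_grid_gridIdx_succ hT ht.1.le)
  have hε2 : 0 < ε / 2 := by positivity
  have hev1 : ∀ᶠ z : ℕ × ℕ in atTop ×ˢ atTop,
      T / z.1 * ∑ k ∈ Finset.range z.1, ∫ ω, W z.1 z.2 k ω ∂μ < (ε / 2) ^ q / (d + 1) :=
    hWt.eventually (gt_mem_nhds (by positivity))
  obtain ⟨pa, hpa, pb, hpb, hab⟩ := eventually_prod_iff.1 hev1
  obtain ⟨B, hB1, hB2⟩ := (hpb.and (eventually_ge_atTop B₀)).exists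
  refine ⟨(d * T ^ p * B) ^ (1 / q), by positivity, ?_⟩
  filter_upwards [hpa, hsub.eventually (gt_mem_nhds (show 0 < (ε / 2) ^ q by positivity)),
    eventually_gt_atTop 0] with n hn1 hn2 hn π r h
  have := h.prob
  have hr := h.nonneg
  have hw : 0 < T / n := by positivity
  obtain ⟨hΔ, hΔr⟩ := h.sum_integral_increment_le hT S.hpq.symm.lt hn
  obtain ⟨hsup, hsup_le⟩ := h.integral_gridSup_rpow_le hT S.hpq.symm.lt hn
  have hgs : ∀ z : ContPath T d × ContPath T d, 0 ≤ gridSup T n z := fun z => norm_nonneg _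
  have hbase : ∀ (k : ℕ) (z : ContPath T d × ContPath T d),
      0 ≤ W n B k z.1 + B * gridSup T n z ^ p := fun k z => by
    have := hW0 n B k z.1
    have := hgs z
    positivity
  have hWπ : ∀ k < n, Integrable (fun z : ContPath T d × ContPath T d => W n B k z.1) π :=
    fun k hk => h.measurePreserving_fst.integrable_comp_of_integrable (hW n B k hn hB2 hk.le).1
  have hbint : ∀ k < n, Integrable (fun z => W n B k z.1 + B * gridSup T n z ^ p) π :=
    fun k hk => (hWπ k hk).add (hsup.const_mul _)
  have hpow : ∀ (k : ℕ) (z : ContPath T d × ContPath T d),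
      |(W n B k z.1 + B * gridSup T n z ^ p) ^ (1 / q)| ^ q =
      W n B k z.1 + B * gridSup T n z ^ p := fun k z => by
    rw [abs_of_nonneg (Real.rpow_nonneg (hbase k z) _), one_div,
      Real.rpow_inv_rpow (hbase k z) hq.ne']
  let s := Finset.range n ×ˢ (Finset.univ : Finset (Fin d))
  let A : ℕ × Fin d → ContPath T d × ContPath T d → ℝ :=
    fun j z => (W n B j.1 z.1 + B * gridSup T n z ^ p) ^ (1 / q)
  let E : ℕ × Fin d → ContPath T d × ContPath T d → ℝ :=
    fun j z => DF z.1.1 (grid T n j.1) j.2 - DF z.1.1 (grid T n (j.1 + 1)) j.2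
  let D : ℕ × Fin d → ContPath T d × ContPath T d → ℝ :=
    fun j z => gridDiff T n z j.1 j.2 - gridDiff T n z (j.1 + 1) j.2
  have hs : ∀ j ∈ s, j.1 < n := fun j hj => Finset.mem_range.1 (Finset.mem_product.1 hj).1
  have hAL : ∀ j ∈ s, MemLp (A j) (ENNReal.ofReal q) π := fun j hj => by
    have h1 := hbint j.1 (hs j hj)
    rw [← integrable_norm_rpow_iff (h1.aestronglyMeasurable.aemeasurable.pow_const
      (1 / q)).aestronglyMeasurable (ENNReal.ofReal_pos.2 hq).ne' ENNReal.ofReal_ne_top,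
      ENNReal.toReal_ofReal hq.le]
    exact h1.congr (ae_of_all _ fun z => (hpow j.1 z).symm)
  have hDL : ∀ j ∈ s, MemLp (D j) (ENNReal.ofReal p) π := fun j hj => hΔ j.1 (hs j hj) j.2
  have hDer : ∀ t ∈ Icc 0 T, ∀ i, MemLp (fun z : ContPath T d × ContPath T d => DF z.1.1 t i)
      (ENNReal.ofReal q) π := fun t ht i =>
    (S.memLp_deriv_apply ht i).comp_measurePreserving h.measurePreserving_fst
  have hEL : ∀ j ∈ s, MemLp (E j) (ENNReal.ofReal q) π := fun j hj =>
    (hDer _ (grid_mem_Icc hT hn (hs j hj).le) j.2).sub (hDer _ (grid_mem_Icc hT hn (hs j hj)) j.2)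
  have hDr : ∑ j ∈ s, ∫ z, |D j z| ^ p ∂π ≤ (T / n) ^ (p - 1) * r ^ p := by
    rw [Finset.sum_product]
    exact hΔr
  have hb1 := abs_sum_integral_mul_le S.hpq s A D hAL hDL hw hr hDr
  have hb2 := abs_sum_integral_mul_le S.hpq s E D hEL hDL hw hr hDr
  have hi1 : ∀ j ∈ s, Integrable (fun z => |A j z| * |D j z|) π := fun j hj =>
    S.hpq.integrable_mul (hAL j hj).abs (hDL j hj).abs
  have hi2 : ∀ j ∈ s, Integrable (fun z => |E j z| * |D j z|) π := fun j hj =>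
    S.hpq.integrable_mul (hEL j hj).abs (hDL j hj).abs
  have hi3 : ∀ k ∈ Finset.range n, ∀ i ∈ Finset.univ, Integrable (fun z =>
      DF z.1.1 (grid T n (k + 1)) i * (gridDiff T n z k i - gridDiff T n z (k + 1) i)) π :=
    fun k hk i _ => S.hpq.integrable_mul
      (hDer _ (grid_mem_Icc hT hn (Finset.mem_range.1 hk)) i) (hΔ k (Finset.mem_range.1 hk) i)
  have hi4 := S.integrable_shiftPath h hn
  have hi5 : Integrable (fun z : ContPath T d × ContPath T d => F z.1.1) π :=
    h.measurePreserving_fst.integrable_comp_of_integrable S.integrable_functional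
  have hi6 : Integrable (fun z : ContPath T d × ContPath T d =>
      F (shiftPath T n z.1.1 (gridDiff T n z) n) - F z.1.1) π := hi4.sub hi5
  have hmain : |∫ z, F (shiftPath T n z.1.1 (gridDiff T n z) n) ∂π - ∫ ω, F ω.1 ∂μ -
        ∑ k ∈ Finset.range n, ∑ i, ∫ z, DF z.1.1 (grid T n (k + 1)) i *
          (gridDiff T n z k i - gridDiff T n z (k + 1) i) ∂π| ≤
      ∑ j ∈ s, ∫ z, |A j z| * |D j z| ∂π + ∑ j ∈ s, ∫ z, |E j z| * |D j z| ∂π := by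
    have e1 : ∑ k ∈ Finset.range n, ∑ i, ∫ z, DF z.1.1 (grid T n (k + 1)) i *
          (gridDiff T n z k i - gridDiff T n z (k + 1) i) ∂π =
        ∫ z, ∑ k ∈ Finset.range n, ∑ i, DF z.1.1 (grid T n (k + 1)) i *
          (gridDiff T n z k i - gridDiff T n z (k + 1) i) ∂π := by
      rw [integral_finsetSum _ fun k hk => integrable_finsetSum _ (hi3 k hk)]
      exact Finset.sum_congr rfl fun k hk => (integral_finsetSum _ (hi3 k hk)).symm
    rw [e1, ← h.integral_fst S.measurable_functional.aestronglyMeasurable,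
      ← integral_sub hi4 hi5, ← integral_sub hi6
        (integrable_finsetSum _ fun k hk => integrable_finsetSum _ (hi3 k hk)),
      ← integral_finsetSum _ hi1, ← integral_finsetSum _ hi2,
      ← integral_add (integrable_finsetSum _ hi1) (integrable_finsetSum _ hi2)]
    rw [← Real.norm_eq_abs]
    refine norm_integral_le_of_norm_le
      ((integrable_finsetSum _ hi1).add (integrable_finsetSum _ hi2)) (ae_of_all _ fun z => ?_)
    have h1 := S.abs_shiftPath_sub_le n z
      (fun k => (W n B k z.1 + B * gridSup T n z ^ p) ^ (1 / q)) fun k hk V hV => by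
        rw [one_div, Real.le_rpow_inv_iff_of_pos (norm_nonneg _) (hbase k z) hq]
        refine ((hW n B k hn hB2 hk.le).2 z.1 V).trans ?_
        gcongr
    refine h1.trans_eq ?_
    simp only [Finset.sum_add_distrib, s, Finset.sum_product, A, E, D]
    refine congrArg₂ _ (Finset.sum_congr rfl fun k _ => Finset.sum_congr rfl fun i _ => ?_) rfl
    rw [abs_of_nonneg (Real.rpow_nonneg (hbase k z) _)]
  have hA : (T / n * ∑ j ∈ s, ∫ z, |A j z| ^ q ∂π) ^ (1 / q) * r ≤
      ε / 2 * r + (d * T ^ p * B) ^ (1 / q) * r ^ p := by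
    have e1 : T / n * ∑ j ∈ s, ∫ z, |A j z| ^ q ∂π =
        d * (T / n * ∑ k ∈ Finset.range n, ∫ ω, W n B k ω ∂μ) +
          d * T * B * ∫ z, gridSup T n z ^ p ∂π := by
      have e2 : ∀ k ∈ Finset.range n, ∑ _i : Fin d, ∫ z, |(W n B k z.1 +
          B * gridSup T n z ^ p) ^ (1 / q)| ^ q ∂π =
          d * ∫ ω, W n B k ω ∂μ + d * (B * ∫ z, gridSup T n z ^ p ∂π) := fun k hk => by
        simp_rw [hpow k]
        rw [integral_add (hWπ k (Finset.mem_range.1 hk)) (hsup.const_mul _),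
          integral_const_mul, h.integral_fst
            (hW n B k hn hB2 (Finset.mem_range.1 hk).le).1.aestronglyMeasurable]
        simp
      simp only [s, Finset.sum_product, A]
      rw [Finset.sum_congr rfl e2, Finset.sum_add_distrib, ← Finset.mul_sum]
      simp only [Finset.sum_const, Finset.card_range, nsmul_eq_mul]
      field_simp
    have e3 : T / n * ∑ j ∈ s, ∫ z, |A j z| ^ q ∂π ≤ (ε / 2) ^ q + d * T ^ p * B * r ^ p := by
      rw [e1]
      refine add_le_add ?_ ?_
      · have h1 := (hab hn1 hB1).le
        simp only at h1
        calc _ ≤ d * ((ε / 2) ^ q / (d + 1)) := by gcongr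
          _ ≤ (ε / 2) ^ q := by
            rw [mul_div_assoc', div_le_iff₀ (by positivity)]
            nlinarith [show 0 < (ε / 2) ^ q by positivity]
      · calc _ ≤ d * T * B * (T ^ (p - 1) * r ^ p) := by gcongr
          _ = d * T ^ p * B * r ^ p := by
            rw [show p = (p - 1) + 1 by ring, Real.rpow_add_one hT.ne']
            ring_nf
    have e4 : (r ^ p) ^ (1 / q) * r = r ^ p := by
      rcases hr.eq_or_lt with h0 | h0
      · rw [← h0, Real.zero_rpow hp.ne', mul_zero]
      · rw [← Real.rpow_mul hr, ← Real.rpow_add_one h0.ne']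
        congr 1
        have := S.hpq.symm.sub_one_mul_conj
        field_simp
        linarith
    calc _ ≤ ((ε / 2) ^ q + d * T ^ p * B * r ^ p) ^ (1 / q) * r := by
          gcongr
      _ ≤ (((ε / 2) ^ q) ^ (1 / q) + (d * T ^ p * B * r ^ p) ^ (1 / q)) * r := by
          gcongr
          exact Real.rpow_add_le_add_rpow (by positivity) (by positivity) (by positivity)
            (by rw [div_le_one hq]; exact S.hpq.lt.le)
      _ = _ := by
          rw [one_div, Real.rpow_rpow_inv hε2.le hq.ne', ← one_div,
            Real.mul_rpow (by positivity) (by positivity), add_mul, mul_assoc _ _ r, e4]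
  have hE : (T / n * ∑ j ∈ s, ∫ z, |E j z| ^ q ∂π) ^ (1 / q) * r ≤ ε / 2 * r := by
    have e1 : ∑ j ∈ s, ∫ z, |E j z| ^ q ∂π = ∑ k ∈ Finset.range n, ∑ i, ∫ ω : ContPath T d,
        |DF ω.1 (grid T n k) i - DF ω.1 (grid T n (k + 1)) i| ^ q ∂μ := by
      simp only [s, Finset.sum_product, E]
      refine Finset.sum_congr rfl fun k hk => Finset.sum_congr rfl fun i _ => ?_
      have hk := Finset.mem_range.1 hk
      have hm : AEStronglyMeasurable (fun ω : ContPath T d =>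
          |DF ω.1 (grid T n k) i - DF ω.1 (grid T n (k + 1)) i| ^ q) μ :=
        (((S.memLp_deriv_apply (grid_mem_Icc hT hn hk.le) i).sub
          (S.memLp_deriv_apply (grid_mem_Icc hT hn hk) i)).aestronglyMeasurable.norm.aemeasurable.pow_const
            q).aestronglyMeasurable
      exact h.integral_fst hm
    rw [e1]
    gcongr
    rw [one_div, Real.rpow_inv_le_iff_of_pos _ hε2.le hq]
    · exact hn2.le
    · exact mul_nonneg hw.le (Finset.sum_nonneg fun k _ => Finset.sum_nonneg fun i _ =>
        integral_nonneg fun z => by positivity)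
  linarith

end SensitivitySetup

section CondIndep

variable {Ω : Type*} {m m' m₁ m₂ : MeasurableSpace Ω} [mΩ : MeasurableSpace Ω] {π : Measure Ω} [IsProbabilityMeasure π]

theorem integral_mul_condExp_eq (hm : m ≤ mΩ) {f g : Ω → ℝ}
    (hg : StronglyMeasurable[m] g) (hgf : Integrable (fun x => g x * f x) π)
    (hf : Integrable f π) : ∫ x, g x * (π[f | m]) x ∂π = ∫ x, g x * f x ∂π := by
  have h1 : π[g * f | m] =ᵐ[π] g * π[f | m] := condExp_mul_of_stronglyMeasurable_left hg hgf hf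
  rw [← integral_condExp hm (f := fun x => g x * f x)]
  exact (integral_congr_ae h1).symm

theorem integral_mul_eq_zero_of_condExp (hm : m ≤ mΩ) {f g : Ω → ℝ}
    (hg : StronglyMeasurable[m] g) (hgf : Integrable (fun x => g x * f x) π)
    (hf : Integrable f π) (h : π[f | m] =ᵐ[π] 0) : ∫ x, g x * f x ∂π = 0 := by
  rw [← integral_mul_condExp_eq hm hg hgf hf]
  exact integral_eq_zero_of_ae (h.mono fun x hx => by simp [hx])

theorem CondIndepOn.condExp_eq_zero (h : CondIndepOn π m' m₁ m₂)
    (h₁ : m₁ ≤ mΩ) (h₂ : m₂ ≤ mΩ) (h' : m' ≤ m₂) {N : Ω → ℝ} (hN : StronglyMeasurable[m₂] N)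
    (hNi : Integrable N π) (hN0 : π[N | m'] =ᵐ[π] 0) : π[N | m₁] =ᵐ[π] 0 := by
  have hone : ∀ A : Set Ω, MeasurableSet A →
      Integrable (A.indicator fun _ => (1 : ℝ)) π := fun A hA => (integrable_const 1).indicator hA
  have hset : ∀ (A : Set Ω) (φ : Ω → ℝ), MeasurableSet A →
      ∫ x in A, φ x ∂π = ∫ x, φ x * A.indicator (fun _ => (1 : ℝ)) x ∂π := fun A φ hA => by
    rw [← integral_indicator hA]
    refine integral_congr_ae (ae_of_all _ fun x => ?_)
    by_cases hx : x ∈ A <;> simp [hx]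
  refine (ae_eq_condExp_of_forall_setIntegral_eq h₁ hNi (fun s _ _ => integrableOn_zero)
    (fun A hA _ => ?_) aestronglyMeasurable_zero).symm
  have hA' := h₁ A hA
  have hbd : ∀ᵐ x ∂π, ‖(π[A.indicator (fun _ => (1 : ℝ)) | m']) x‖ ≤ (1 : ℝ) :=
    ae_bdd_abs_condExp_of_ae_bdd_abs (ae_of_all _ fun x => by
      by_cases hx : x ∈ A <;> simp [hx])
  have hφ : (π[A.indicator (fun _ => (1 : ℝ)) | m']) =ᵐ[π]
      π[A.indicator (fun _ => (1 : ℝ)) | m₂] := by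
    refine ae_eq_condExp_of_forall_setIntegral_eq h₂ (hone A hA')
      (fun s _ _ => integrable_condExp.integrableOn) (fun B hB _ => ?_)
      (stronglyMeasurable_condExp.mono h').aestronglyMeasurable
    have hB' := h₂ B hB
    rw [hset B _ hB', hset B _ hB', ← integral_mul_condExp_eq (h'.trans h₂)
      stronglyMeasurable_condExp ?_ (hone B hB')]
    · have h1 := integral_congr_ae (h A B hA hB)
      rw [integral_condExp (h'.trans h₂)] at h1
      refine h1.symm.trans (integral_congr_ae (ae_of_all _ fun x => ?_))
      by_cases hx : x ∈ A <;> by_cases hx' : x ∈ B <;> simp [hx, hx']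
    · exact integrable_condExp.mul_bdd (c := 1) (hone B hB').aestronglyMeasurable
        (ae_of_all _ fun x => by by_cases hx : x ∈ B <;> simp [hx])
  have hNA : Integrable (fun x => N x * A.indicator (fun _ => (1 : ℝ)) x) π :=
    hNi.mul_bdd (c := 1) (hone A hA').aestronglyMeasurable
      (ae_of_all _ fun x => by by_cases hx : x ∈ A <;> simp [hx])
  rw [hset A N hA', ← integral_mul_condExp_eq h₂ hN hNA (hone A hA')]
  have h2 : ∫ x, N x * (π[A.indicator (fun _ => (1 : ℝ)) | m₂]) x ∂π =
      ∫ x, (π[A.indicator (fun _ => (1 : ℝ)) | m']) x * N x ∂π :=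
    integral_congr_ae (hφ.mono fun x hx => by simp only [hx, mul_comm])
  rw [h2, integral_mul_eq_zero_of_condExp (h'.trans h₂) stronglyMeasurable_condExp
    (hNi.bdd_mul integrable_condExp.1 hbd) hNi hN0]
  simp

end CondIndep

section PlanBound

variable {T p : ℝ} {d : ℕ} {μ : Measure (ContPath T d)}
  {π : Measure (ContPath T d × ContPath T d)} {r : ℝ}

theorem comap_fst_FilC_le (t : ℝ) : (FilC T d t).comap Prod.fst ≤
    (inferInstance : MeasurableSpace (ContPath T d × ContPath T d)) :=
  (MeasurableSpace.comap_mono (FilC_le t)).trans measurable_fst.comap_le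

theorem comap_snd_FilC_le (t : ℝ) : (FilC T d t).comap Prod.snd ≤
    (inferInstance : MeasurableSpace (ContPath T d × ContPath T d)) :=
  (MeasurableSpace.comap_mono (FilC_le t)).trans measurable_snd.comap_le

theorem PlanBound.condExp_fst_eq_zero (h : PlanBound T p μ π r) {t : ℝ} {N : ContPath T d → ℝ}
    (hN : Integrable N μ) (hN0 : μ[N | FilC T d t] =ᵐ[μ] 0) :
    π[fun z => N z.1 | (FilC T d t).comap Prod.fst] =ᵐ[π] 0 := by
  have := h.prob
  have : IsProbabilityMeasure μ :=
    h.fst ▸ Measure.isProbabilityMeasure_map measurable_fst.aemeasurable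
  refine (ae_eq_condExp_of_forall_setIntegral_eq (comap_fst_FilC_le t)
    (h.measurePreserving_fst.integrable_comp_of_integrable hN) (fun s _ _ => integrableOn_zero)
    (fun A hA _ => ?_) aestronglyMeasurable_zero).symm
  obtain ⟨B, hB, rfl⟩ := hA
  have h1 : ∫ z in Prod.fst ⁻¹' B, N z.1 ∂π = ∫ ω in B, N ω ∂μ := by
    have hN' := hN.1
    rw [← h.fst] at hN' ⊢
    exact (setIntegral_map (FilC_le t B hB) hN' measurable_fst.aemeasurable).symm
  have h2 : ∫ ω in B, N ω ∂μ = 0 := by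
    rw [← setIntegral_condExp (FilC_le t) hN hB]
    exact integral_eq_zero_of_ae (ae_restrict_of_ae hN0)
  rw [Function.comp_def, h1, h2]
  simp

/-- Along a causal plan, the derivative may be replaced by its optional projection. -/
theorem PlanBound.integral_causal_mul_eq (h : PlanBound T p μ π r) (hπ : IsCausalStarC T d μ π)
    {q : ℝ} (hpq : q.HolderConjugate p) {t : ℝ} (ht : t ∈ Icc 0 T) {D : ContPath T d → ℝ}
    (hD : MemLp D (ENNReal.ofReal q) μ) (hDm : Measurable D) {ζ ξ : ContPath T d → ℝ}
    (hζ : Measurable[FilC T d t] ζ) (hξ : Measurable[FilC T d t] ξ)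
    (hζi : MemLp (fun z => ζ z.1) (ENNReal.ofReal p) π)
    (hξi : MemLp (fun z => ξ z.2) (ENNReal.ofReal p) π) :
    ∫ z, D z.1 * (ζ z.1 + ξ z.2) ∂π = ∫ z, (μ[D | FilC T d t]) z.1 * (ζ z.1 + ξ z.2) ∂π := by
  have := h.prob
  have : IsProbabilityMeasure μ :=
    h.fst ▸ Measure.isProbabilityMeasure_map measurable_fst.aemeasurable
  have h1q : 1 ≤ ENNReal.ofReal q := by
    rw [← ENNReal.ofReal_one]
    exact ENNReal.ofReal_le_ofReal hpq.lt.le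
  have hM : MemLp (μ[D | FilC T d t]) (ENNReal.ofReal q) μ := hD.condExp h1q
  have hDi := hD.integrable h1q
  let N : ContPath T d → ℝ := D - μ[D | FilC T d t]
  have hNL : MemLp N (ENNReal.ofReal q) μ := hD.sub hM
  have hNi := hNL.integrable h1q
  have hNm : Measurable N :=
    hDm.sub (stronglyMeasurable_condExp.measurable.mono (FilC_le t) le_rfl)
  have hN0 : μ[N | FilC T d t] =ᵐ[μ] 0 := by
    filter_upwards [condExp_sub hDi (integrable_condExp (m := FilC T d t) (f := D)) (FilC T d t),
      condExp_condExp_of_le (f := D) (μ := μ) le_rfl (FilC_le t)] with ω h1 h2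
    rw [h1, Pi.sub_apply, h2]
    simp
  have hDπ : MemLp (fun z : ContPath T d × ContPath T d => D z.1) (ENNReal.ofReal q) π :=
    hD.comp_measurePreserving h.measurePreserving_fst
  have hMπ : MemLp (fun z : ContPath T d × ContPath T d => (μ[D | FilC T d t]) z.1)
      (ENNReal.ofReal q) π := hM.comp_measurePreserving h.measurePreserving_fst
  have hNπ : MemLp (fun z : ContPath T d × ContPath T d => N z.1) (ENNReal.ofReal q) π :=
    hNL.comp_measurePreserving h.measurePreserving_fst
  have hNπi := hNπ.integrable h1q
  have e1 : ∫ z, ζ z.1 * N z.1 ∂π = 0 := by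
    refine integral_mul_eq_zero_of_condExp (comap_fst_FilC_le t) ?_
      (hpq.symm.integrable_mul hζi hNπ) hNπi (h.condExp_fst_eq_zero hNi hN0)
    exact Measurable.stronglyMeasurable (hζ.comp (comap_measurable Prod.fst))
  have e2 : ∫ z, ξ z.2 * N z.1 ∂π = 0 := by
    refine integral_mul_eq_zero_of_condExp (comap_snd_FilC_le t) ?_
      (hpq.symm.integrable_mul hξi hNπ) hNπi ?_
    · exact Measurable.stronglyMeasurable (hξ.comp (comap_measurable Prod.snd))
    · refine (hπ.2 t ht).condExp_eq_zero (comap_snd_FilC_le t) measurable_fst.comap_le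
        (MeasurableSpace.comap_mono (FilC_le t)) ?_ hNπi (h.condExp_fst_eq_zero hNi hN0)
      exact Measurable.stronglyMeasurable (hNm.comp (comap_measurable Prod.fst))
  have hsum : MemLp (fun z : ContPath T d × ContPath T d => ζ z.1 + ξ z.2)
    (ENNReal.ofReal p) π := hζi.add hξi
  rw [← sub_eq_zero, ← integral_sub (hpq.integrable_mul hDπ hsum) (hpq.integrable_mul hMπ hsum)]
  have e3 : ∫ z, (ζ z.1 * N z.1 + ξ z.2 * N z.1) ∂π = 0 := by
    rw [integral_add (hpq.symm.integrable_mul hζi hNπ) (hpq.symm.integrable_mul hξi hNπ), e1, e2,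
      add_zero]
  refine Eq.trans (integral_congr_ae (ae_of_all _ fun z => ?_)) e3
  simp only [N, Pi.sub_apply]
  ring

end PlanBound

theorem measurable_eval_FilC {T : ℝ} {d : ℕ} {s t : ℝ} (hs : s ∈ Icc 0 T) (hst : s ≤ t)
    (i : Fin d) : Measurable[FilC T d t] fun ω : ContPath T d => ω.1 s i := by
  have h1 : Measurable[evalSigma T d t] fun ω : ContPath T d => ω.1 s :=
    Measurable.of_comap_le (le_iSup (fun r : {r : ℝ // 0 ≤ r ∧ r ≤ T ∧ r ≤ t} =>
      MeasurableSpace.comap (fun ω : ContPath T d => ω.1 r.1) inferInstance)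
        ⟨s, hs.1, hs.2, hst⟩)
  exact ((measurable_pi_apply i).comp h1).mono (evalSigma_le_FilC t) le_rfl

/-- The `L^q` norm of the optional projection of the derivative. -/
def sensitivity (T q : ℝ) {d : ℕ} (μ : Measure (ContPath T d))
    (DF : (ℝ → Fin d → ℝ) → ℝ → Fin d → ℝ) : ℝ :=
  (∫ t in Ioo 0 T, condMoment q μ DF t) ^ (1 / q)

namespace SensitivitySetup

variable {T p q C : ℝ} {d : ℕ} {μ : Measure (ContPath T d)} {F : (ℝ → Fin d → ℝ) → ℝ}
  {DF : (ℝ → Fin d → ℝ) → ℝ → Fin d → ℝ} {π : Measure (ContPath T d × ContPath T d)} {r : ℝ}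

theorem memLp_eval (S : SensitivitySetup T p q C μ F DF) {t : ℝ} (ht : t ∈ Icc 0 T) (i : Fin d) :
    MemLp (fun ω : ContPath T d => ω.1 t i) (ENNReal.ofReal p) μ := by
  have hp := S.hpq.symm.pos
  have hm : Measurable fun ω : ContPath T d => ω.1 t i :=
    (measurable_pi_apply i).comp (measurable_eval ht)
  rw [← integrable_norm_rpow_iff hm.aestronglyMeasurable (ENNReal.ofReal_pos.2 hp).ne'
    ENNReal.ofReal_ne_top, ENNReal.toReal_ofReal hp.le]
  refine S.moment.mono' (hm.norm.pow_const p).aestronglyMeasurable (ae_of_all _ fun ω => ?_)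
  rw [Real.norm_of_nonneg (by positivity)]
  exact (Real.rpow_le_rpow (norm_nonneg _) (norm_le_pi_norm _ i) hp.le).trans
    (norm_rpow_le_pathMoment hp ω ht)

theorem integral_deriv_mul_increment (S : SensitivitySetup T p q C μ F DF)
    (h : PlanBound T p μ π r) (hπ : IsCausalStarC T d μ π) {n k : ℕ} (hk : k < n) (i : Fin d) :
    ∫ z, DF z.1.1 (grid T n (k + 1)) i * (gridDiff T n z k i - gridDiff T n z (k + 1) i) ∂π =
      ∫ z, (μ[fun ω : ContPath T d => DF ω.1 (grid T n (k + 1)) i |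
        FilC T d (grid T n (k + 1))]) z.1 *
          (gridDiff T n z k i - gridDiff T n z (k + 1) i) ∂π := by
  have hT := S.hT
  have hn : 0 < n := by omega
  have ht := grid_mem_Icc hT hn (Nat.succ_le_of_lt hk)
  have hs := grid_mem_Icc hT hn hk.le
  have hst := grid_mono hT n (Nat.le_succ k)
  let ζ : ContPath T d → ℝ := fun ω => ω.1 (grid T n k) i - ω.1 (grid T n (k + 1)) i
  let ξ : ContPath T d → ℝ := fun ω => ω.1 (grid T n (k + 1)) i - ω.1 (grid T n k) i
  have hζ : Measurable[FilC T d (grid T n (k + 1))] ζ :=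
    (measurable_eval_FilC hs hst i).sub (measurable_eval_FilC ht le_rfl i)
  have hξ : Measurable[FilC T d (grid T n (k + 1))] ξ :=
    (measurable_eval_FilC ht le_rfl i).sub (measurable_eval_FilC hs hst i)
  have heq : ∀ z : ContPath T d × ContPath T d,
      gridDiff T n z k i - gridDiff T n z (k + 1) i = ζ z.1 + ξ z.2 := fun z => by
    simp only [gridDiff, ζ, ξ, Pi.sub_apply]
    ring
  have hζi : MemLp (fun z : ContPath T d × ContPath T d => ζ z.1) (ENNReal.ofReal p) π :=
    ((S.memLp_eval hs i).sub (S.memLp_eval ht i)).comp_measurePreserving h.measurePreserving_fst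
  have hξi : MemLp (fun z : ContPath T d × ContPath T d => ξ z.2) (ENNReal.ofReal p) π := by
    have h1 := ((h.sum_integral_increment_le hT S.hpq.symm.lt hn).1 k hk i).sub hζi
    refine h1.ae_eq (ae_of_all _ fun z => ?_)
    simp only [Pi.sub_apply]
    rw [heq z]
    ring
  simp_rw [heq]
  exact h.integral_causal_mul_eq hπ S.hpq ht (S.memLp_deriv_apply ht i)
    ((measurable_pi_apply i).comp (S.measurable_deriv ht)) hζ hξ hζi hξi

theorem sum_integral_deriv_mul_increment_le (S : SensitivitySetup T p q C μ F DF)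
    (h : PlanBound T p μ π r) (hπ : IsCausalStarC T d μ π) {n : ℕ} (hn : 0 < n) :
    ∑ k ∈ Finset.range n, ∑ i, ∫ z, DF z.1.1 (grid T n (k + 1)) i *
        (gridDiff T n z k i - gridDiff T n z (k + 1) i) ∂π ≤
      (T / n * ∑ k ∈ Finset.range n, condMoment q μ DF (grid T n (k + 1))) ^ (1 / q) * r := by
  have hT := S.hT
  obtain ⟨hΔ, hΔr⟩ := h.sum_integral_increment_le hT S.hpq.symm.lt hn
  let s := Finset.range n ×ˢ (Finset.univ : Finset (Fin d))
  let A : ℕ × Fin d → ContPath T d × ContPath T d → ℝ := fun j z =>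
    (μ[fun ω : ContPath T d => DF ω.1 (grid T n (j.1 + 1)) j.2 |
      FilC T d (grid T n (j.1 + 1))]) z.1
  let D : ℕ × Fin d → ContPath T d × ContPath T d → ℝ :=
    fun j z => gridDiff T n z j.1 j.2 - gridDiff T n z (j.1 + 1) j.2
  have hs : ∀ j ∈ s, j.1 < n := fun j hj => Finset.mem_range.1 (Finset.mem_product.1 hj).1
  have hAL : ∀ j ∈ s, MemLp (A j) (ENNReal.ofReal q) π := fun j hj =>
    (S.memLp_condExp (grid_mem_Icc hT hn (hs j hj)) j.2 _).comp_measurePreserving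
      h.measurePreserving_fst
  have hDL : ∀ j ∈ s, MemLp (D j) (ENNReal.ofReal p) π := fun j hj => hΔ j.1 (hs j hj) j.2
  have hDr : ∑ j ∈ s, ∫ z, |D j z| ^ p ∂π ≤ (T / n) ^ (p - 1) * r ^ p := by
    rw [Finset.sum_product]
    exact hΔr
  have hb := abs_sum_integral_mul_le S.hpq s A D hAL hDL (by positivity) h.nonneg hDr
  have key : ∀ g : ContPath T d → ℝ, AEStronglyMeasurable g μ →
      ∫ z, |g z.1| ^ q ∂π = ∫ ω, |g ω| ^ q ∂μ := fun g hg =>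
    h.integral_fst (φ := fun ω => |g ω| ^ q)
      (hg.norm.aemeasurable.pow_const q).aestronglyMeasurable
  have e1 : ∑ j ∈ s, ∫ z, |A j z| ^ q ∂π =
      ∑ k ∈ Finset.range n, condMoment q μ DF (grid T n (k + 1)) := by
    simp only [s, Finset.sum_product, A, condMoment]
    refine Finset.sum_congr rfl fun k hk => Finset.sum_congr rfl fun i _ => ?_
    exact key _ integrable_condExp.1
  rw [← e1]
  refine le_trans ?_ hb
  simp only [s, Finset.sum_product]
  refine Finset.sum_le_sum fun k hk => Finset.sum_le_sum fun i _ => ?_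
  rw [S.integral_deriv_mul_increment h hπ (Finset.mem_range.1 hk) i]
  refine (le_abs_self _).trans (abs_integral_le_integral_abs.trans_eq ?_)
  simp only [abs_mul, A, D]

theorem tendsto_rpow_sum_condMoment (S : SensitivitySetup T p q C μ F DF) {e : ℝ} (he : 0 ≤ e) :
    Tendsto (fun n : ℕ =>
      (T / n * ∑ k ∈ Finset.range n, condMoment q μ DF (grid T n (k + 1))) ^ e) atTop
        (nhds ((∫ t in Ioo 0 T, condMoment q μ DF t) ^ e)) := by
  refine Tendsto.rpow_const ?_ (Or.inr he)
  exact S.tendsto_sum_condMoment (fun n : ℕ => n) (eventually_gt_atTop 0)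
    (fun n k => grid T n (k + 1)) ((eventually_gt_atTop 0).mono fun n hn k hk =>
      grid_mem_Icc S.hT hn hk) fun t ht => tendsto_grid_gridIdx_succ S.hT ht.1.le

theorem exists_integral_sub_le (S : SensitivitySetup T p q C μ F DF) {ε : ℝ} (hε : 0 < ε) :
    ∃ B : ℝ, 0 ≤ B ∧ ∀ (π : Measure (ContPath T d × ContPath T d)) (r : ℝ),
      PlanBound T p μ π r → IsCausalStarC T d μ π →
      ∫ z, F z.2.1 ∂π - ∫ ω, F ω.1 ∂μ ≤ (sensitivity T q μ DF + ε) * r + B * r ^ p := by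
  obtain ⟨B, hB, hev⟩ := S.exists_abs_integral_shiftPath_sub_le (half_pos hε)
  refine ⟨B, hB, fun π r h hπ => ?_⟩
  have hlim := (S.tendsto_integral_shiftPath h).sub_const (∫ ω, F ω.1 ∂μ)
  have hev2 : ∀ᶠ n : ℕ in atTop,
      (T / n * ∑ k ∈ Finset.range n, condMoment q μ DF (grid T n (k + 1))) ^ (1 / q) <
        sensitivity T q μ DF + ε / 2 :=
    (S.tendsto_rpow_sum_condMoment (one_div_nonneg.2 S.hpq.nonneg)).eventually
      (gt_mem_nhds (lt_add_of_pos_right _ (half_pos hε)))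
  refine le_of_tendsto hlim ?_
  filter_upwards [(tendsto_add_atTop_nat 1).eventually hev,
    (tendsto_add_atTop_nat 1).eventually hev2] with m h1 h2
  have h3 := (abs_le.1 (h1 π r h)).2
  have h4 := S.sum_integral_deriv_mul_increment_le h hπ m.succ_pos
  have h5 := mul_le_mul_of_nonneg_right h2.le h.nonneg
  simp only [Nat.succ_eq_add_one] at h4
  linarith

end SensitivitySetup

/-- The piecewise linear path with slope `ζ j` on the `j`-th cell of the uniform grid. -/
def drift (T : ℝ) {d : ℕ} (n : ℕ) (ζ : ℕ → Fin d → ℝ) (t : ℝ) : Fin d → ℝ :=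
  ∑ j ∈ Finset.range n, max 0 (min t (grid T n (j + 1)) - grid T n j) • ζ j

section Drift

variable {T : ℝ} {d : ℕ} {n : ℕ}

theorem continuous_drift (ζ : ℕ → Fin d → ℝ) : Continuous (drift T n ζ) := by
  unfold drift
  fun_prop

theorem grid_nonneg (hT : 0 < T) (n k : ℕ) : 0 ≤ grid T n k := by
  unfold grid
  positivity

theorem drift_zero (hT : 0 < T) (ζ : ℕ → Fin d → ℝ) : drift T n ζ 0 = 0 := by
  refine Finset.sum_eq_zero fun j _ => ?_
  rw [max_eq_left, zero_smul]
  linarith [min_le_left 0 (grid T n (j + 1)), grid_nonneg hT n j]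

theorem grid_mul_mul {l : ℕ} (hl : 0 < l) (n k : ℕ) : grid T (n * l) (k * l) = grid T n k := by
  unfold grid
  have : (l : ℝ) ≠ 0 := by positivity
  push_cast
  rw [← mul_assoc, mul_div_mul_right _ _ this]

theorem drift_succ_sub (hT : 0 < T) {l k : ℕ} (hl : 0 < l) (hk : k < n * l)
    (ζ : ℕ → Fin d → ℝ) :
    drift T n ζ (grid T (n * l) (k + 1)) - drift T n ζ (grid T (n * l) k) =
      (T / (n * l : ℕ)) • ζ (k / l) := by
  have hmono := grid_mono hT (n * l)
  unfold drift
  rw [← Finset.sum_sub_distrib, Finset.sum_eq_single (k / l)]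
  · have h1 : grid T n (k / l) ≤ grid T (n * l) k := by
      rw [← grid_mul_mul hl n (k / l)]
      exact hmono (Nat.div_mul_le_self k l)
    have h2 : grid T (n * l) (k + 1) ≤ grid T n (k / l + 1) := by
      rw [← grid_mul_mul hl n (k / l + 1)]
      exact hmono (Nat.succ_le_of_lt (Nat.lt_mul_of_div_lt (Nat.lt_succ_self _) hl))
    have h3 := hmono (Nat.le_succ k)
    rw [← sub_smul, min_eq_left h2, min_eq_left (h3.trans h2), max_eq_right (by linarith),
      max_eq_right (by linarith), ← grid_succ_sub (n * l) k]
    congr 1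
    ring
  · intro j _ hj
    rcases lt_or_gt_of_ne hj with h | h
    · have h1 : grid T n (j + 1) ≤ grid T (n * l) k := by
        rw [← grid_mul_mul hl n (j + 1)]
        exact hmono ((Nat.le_div_iff_mul_le hl).1 h)
      have h3 := hmono (Nat.le_succ k)
      rw [min_eq_right h1, min_eq_right (h1.trans h3), sub_self]
    · have h1 : grid T (n * l) (k + 1) ≤ grid T n j := by
        rw [← grid_mul_mul hl n j]
        exact hmono (Nat.succ_le_of_lt ((Nat.div_lt_iff_lt_mul hl).1 h))
      have h3 := hmono (Nat.le_succ k)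
      rw [max_eq_left, max_eq_left, sub_self]
      · exact sub_nonpos.2 ((min_le_left _ _).trans (h3.trans h1))
      · exact sub_nonpos.2 ((min_le_left _ _).trans h1)
  · intro h
    exact absurd (Finset.mem_range.2 (Nat.div_lt_of_lt_mul (by rwa [mul_comm] at hk))) h

/-- The density of `drift`. -/
def driftDensity (T : ℝ) {d : ℕ} (n : ℕ) (ζ : ℕ → Fin d → ℝ) (s : ℝ) : Fin d → ℝ :=
  ∑ j ∈ Finset.range n, (Ioc (grid T n j) (grid T n (j + 1))).indicator (fun _ => ζ j) s

theorem integral_driftDensity (hT : 0 < T) (ζ : ℕ → Fin d → ℝ) (t : ℝ) :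
    ∫ s in Ioc 0 t, driftDensity T n ζ s = drift T n ζ t := by
  unfold driftDensity drift
  rw [integral_finsetSum]
  · refine Finset.sum_congr rfl fun j _ => ?_
    rw [integral_indicator measurableSet_Ioc, Measure.restrict_restrict measurableSet_Ioc,
      setIntegral_const, Ioc_inter_Ioc, measureReal_def, Real.volume_Ioc, ENNReal.toReal_ofReal',
      sup_eq_left.2 (grid_nonneg hT n j), max_comm, inf_comm]
  · intro j _
    exact (integrable_const _).indicator measurableSet_Ioc

theorem lpnorm_driftDensity_le (hT : 0 < T) {p : ℝ} (hp : 0 < p) (ζ : ℕ → Fin d → ℝ) (s : ℝ) :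
    ENNReal.ofReal (lpnorm p (driftDensity T n ζ s) ^ p) ≤
      ∑ j ∈ Finset.range n, (Ioc (grid T n j) (grid T n (j + 1))).indicator
        (fun _ => ENNReal.ofReal (∑ i, |ζ j i| ^ p)) s := by
  rw [lpnorm_rpow hp]
  by_cases h : ∃ j ∈ Finset.range n, s ∈ Ioc (grid T n j) (grid T n (j + 1))
  · obtain ⟨j, hj, hs⟩ := h
    have h1 : driftDensity T n ζ s = ζ j := by
      unfold driftDensity
      rw [Finset.sum_eq_single_of_mem j hj, indicator_of_mem hs]
      intro k _ hk
      refine indicator_of_notMem (fun hs' => ?_) _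
      rcases lt_or_gt_of_ne hk with h | h
      · exact (hs'.2.trans (grid_mono hT n h)).not_gt hs.1
      · exact (hs.2.trans (grid_mono hT n h)).not_gt hs'.1
    rw [h1]
    refine le_trans (le_of_eq ?_) (Finset.single_le_sum (fun _ _ => zero_le) hj)
    rw [indicator_of_mem hs]
  · push Not at h
    have h1 : driftDensity T n ζ s = 0 :=
      Finset.sum_eq_zero fun j hj => indicator_of_notMem (h j hj) _
    simp [h1, Real.zero_rpow hp.ne']

theorem hcost_le_of_drift (hT : 0 < T) {p : ℝ} (hp : 0 < p) (ζ : ℕ → Fin d → ℝ)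
    {x y : ℝ → Fin d → ℝ} (h : ∀ t ∈ Icc 0 T, x t - y t = drift T n ζ t) :
    hcost T p x y ≤ ENNReal.ofReal (∑ j ∈ Finset.range n, T / n * ∑ i, |ζ j i| ^ p) := by
  have h1 : hcost T p x y ≤
      ∫⁻ t in Icc 0 T, ENNReal.ofReal (lpnorm p (driftDensity T n ζ t) ^ p) := by
    refine sInf_le ⟨driftDensity T n ζ, ?_, fun t ht => ?_, rfl⟩
    · unfold driftDensity
      exact integrable_finsetSum _ fun j _ => (integrable_const _).indicator measurableSet_Ioc
    · rw [h t ht, integral_driftDensity hT]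
  refine h1.trans ((lintegral_mono fun s => lpnorm_driftDensity_le hT hp ζ s).trans ?_)
  rw [lintegral_finsetSum _ fun j _ => measurable_const.indicator measurableSet_Ioc,
    ENNReal.ofReal_sum_of_nonneg fun j _ => by positivity]
  refine Finset.sum_le_sum fun j _ => ?_
  rw [lintegral_indicator measurableSet_Ioc, setLIntegral_const, mul_comm,
    ENNReal.ofReal_mul (by positivity)]
  gcongr
  refine (Measure.restrict_apply_le _ _).trans ?_
  rw [Real.volume_Ioc, grid_succ_sub]

end Drift

/-- The path `ω` shifted by the piecewise linear path with slopes `-ζ j`. -/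
def subDrift {T : ℝ} {d : ℕ} (hT : 0 < T) (n : ℕ) (ζ : ℕ → Fin d → ℝ) (ω : ContPath T d) :
    ContPath T d :=
  ⟨fun t => ω.1 t - drift T n ζ t, ω.2.1.sub (continuous_drift ζ).continuousOn, by
    simp [ω.2.2, drift_zero hT]⟩

section Adapted

variable {T : ℝ} {d : ℕ} {n : ℕ} {hT : 0 < T} {ζ : ℕ → ContPath T d → Fin d → ℝ}

theorem FilC_le_evalSigma {s t : ℝ} (hst : s < t) (ht : t ≤ T) :
    FilC T d s ≤ evalSigma T d t := by
  unfold FilC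
  rw [if_pos (hst.trans_le ht)]
  exact iInf_le_of_le ⟨t, hst, ht⟩ le_rfl

theorem measurable_subDrift_evalSigma
    (hζ : ∀ j < n, Measurable[FilC T d (grid T n j)] (ζ j)) {s : ℝ} (hs : s ≤ T) :
    Measurable[evalSigma T d s, evalSigma T d s] fun ω => subDrift hT n (fun j => ζ j ω) ω := by
  refine Measurable.of_le_map (iSup_le fun r => ?_)
  rw [MeasurableSpace.comap_le_iff_le_map, MeasurableSpace.map_comp]
  refine Measurable.le_map ?_
  have h1 : Measurable[evalSigma T d s] fun ω : ContPath T d => ω.1 r.1 :=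
    Measurable.of_comap_le (le_iSup (fun r : {r : ℝ // 0 ≤ r ∧ r ≤ T ∧ r ≤ s} =>
      MeasurableSpace.comap (fun ω : ContPath T d => ω.1 r.1) inferInstance) r)
  refine h1.sub (Finset.measurable_fun_sum _ fun j hj => ?_)
  by_cases hjs : grid T n j < s
  · have h2 : Measurable[evalSigma T d s] (ζ j) :=
      (hζ j (Finset.mem_range.1 hj)).mono (FilC_le_evalSigma hjs hs) le_rfl
    exact h2.const_smul (max 0 (min r.1 (grid T n (j + 1)) - grid T n j))
  · have : max 0 (min r.1 (grid T n (j + 1)) - grid T n j) = 0 :=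
      max_eq_left (sub_nonpos.2 ((min_le_left _ _).trans (r.2.2.2.trans (not_lt.1 hjs))))
    simp only [this, zero_smul]
    exact measurable_const

theorem measurable_subDrift (hζ : ∀ j < n, Measurable[FilC T d (grid T n j)] (ζ j)) :
    Measurable fun ω => subDrift hT n (fun j => ζ j ω) ω :=
  measurable_subDrift_evalSigma hζ le_rfl

theorem measurable_subDrift_FilC (hζ : ∀ j < n, Measurable[FilC T d (grid T n j)] (ζ j)) (t : ℝ) :
    Measurable[FilC T d t, FilC T d t] fun ω => subDrift hT n (fun j => ζ j ω) ω := by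
  by_cases h : t < T
  · have e : FilC T d t = ⨅ s : {s : ℝ // t < s ∧ s ≤ T}, evalSigma T d s.1 := if_pos h
    rw [e]
    intro A hA
    rw [MeasurableSpace.measurableSet_iInf] at hA ⊢
    exact fun s => measurable_subDrift_evalSigma hζ s.2.2 (hA s)
  · have e : FilC T d t = evalSigma T d T := if_neg h
    rw [e]
    exact measurable_subDrift_evalSigma hζ le_rfl

theorem isCausalStarC_map {μ : Measure (ContPath T d)} [IsProbabilityMeasure μ]
    {Y : ContPath T d → ContPath T d} (hY : ∀ t, Measurable[FilC T d t, FilC T d t] Y)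
    (hYm : Measurable Y) : IsCausalStarC T d μ (μ.map fun ω => (ω, Y ω)) := by
  have hm : Measurable fun ω => (ω, Y ω) := measurable_id.prodMk hYm
  have := Measure.isProbabilityMeasure_map (μ := μ) hm.aemeasurable
  constructor
  · rw [Measure.map_map measurable_fst hm]
    exact Measure.map_id
  · intro t ht A B hA hB
    set π := μ.map fun ω => (ω, Y ω)
    obtain ⟨A', hA', rfl⟩ := hA
    let A'' : Set (ContPath T d × ContPath T d) := Prod.fst ⁻¹' (Y ⁻¹' A')
    have hA'' : MeasurableSet[(FilC T d t).comap Prod.fst] A'' := ⟨_, hY t hA', rfl⟩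
    have hAm : MeasurableSet (Prod.snd ⁻¹' A' : Set (ContPath T d × ContPath T d)) :=
      measurable_snd (FilC_le t A' hA')
    have hAe : (Prod.snd ⁻¹' A' : Set (ContPath T d × ContPath T d)) =ᵐ[π] A'' := by
      have hsd := hAm.symmDiff (comap_fst_FilC_le t A'' hA'')
      refine measure_symmDiff_eq_zero_iff.1 ?_
      rw [Measure.map_apply hm hsd]
      convert measure_empty (μ := μ)
      ext ω
      simp [A'', mem_symmDiff]
    have hB' : MeasurableSet B := by
      obtain ⟨B', hB', rfl⟩ := hB
      exact measurable_fst hB'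
    have hsm : StronglyMeasurable[(FilC T d t).comap Prod.fst]
        (A''.indicator fun _ => (1 : ℝ)) := stronglyMeasurable_const.indicator hA''
    have h1 : (π[(Prod.snd ⁻¹' A').indicator (fun _ => (1 : ℝ)) |
        (FilC T d t).comap Prod.fst]) =ᵐ[π] A''.indicator fun _ => (1 : ℝ) := by
      refine (condExp_congr_ae (indicator_ae_eq_of_ae_eq_set hAe)).trans ?_
      rw [condExp_of_stronglyMeasurable (comap_fst_FilC_le t) hsm
        ((integrable_const 1).indicator (comap_fst_FilC_le t A'' hA''))]
    have h2 : ((Prod.snd ⁻¹' A') ∩ B).indicator (fun _ => (1 : ℝ)) =ᵐ[π]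
        (A''.indicator fun _ => (1 : ℝ)) * B.indicator fun _ => (1 : ℝ) := by
      filter_upwards [indicator_ae_eq_of_ae_eq_set (f := fun _ => (1 : ℝ)) hAe] with z hz
      rw [Pi.mul_apply, ← hz]
      by_cases h : z ∈ Prod.snd ⁻¹' A' <;> by_cases h' : z ∈ B <;> simp [h, h']
    refine (condExp_congr_ae h2).trans ((condExp_stronglyMeasurable_mul_of_bound
      (comap_fst_FilC_le t) hsm ((integrable_const 1).indicator hB') 1 (ae_of_all _ fun z => ?_)).trans
      (h1.symm.mul (EventuallyEq.refl _ _)))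
    by_cases h : z ∈ A'' <;> simp [h]

theorem planBound_subDrift {μ : Measure (ContPath T d)} [IsProbabilityMeasure μ]
    (hζ : ∀ j < n, Measurable[FilC T d (grid T n j)] (ζ j)) {p r : ℝ} (hp : 0 < p) (hr : 0 ≤ r)
    (hi : ∀ j < n, ∀ i, Integrable (fun ω => |ζ j ω i| ^ p) μ)
    (hc : T / n * ∑ j ∈ Finset.range n, ∑ i, ∫ ω, |ζ j ω i| ^ p ∂μ ≤ r ^ p) :
    PlanBound T p μ (μ.map fun ω => (ω, subDrift hT n (fun j => ζ j ω) ω)) r := by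
  have hm : Measurable fun ω => (ω, subDrift hT n (fun j => ζ j ω) ω) :=
    measurable_id.prodMk (measurable_subDrift hζ)
  refine ⟨Measure.isProbabilityMeasure_map hm.aemeasurable, ?_, hr, ?_⟩
  · rw [Measure.map_map measurable_fst hm]
    exact Measure.map_id
  · have hint : Integrable
        (fun ω => ∑ j ∈ Finset.range n, T / n * ∑ i, |ζ j ω i| ^ p) μ :=
      integrable_finsetSum _ fun j hj => (integrable_finsetSum _ fun i _ =>
        hi j (Finset.mem_range.1 hj) i).const_mul _
    have hle (ω : ContPath T d) : hcost T p ω.1 (subDrift hT n (fun j => ζ j ω) ω).1 ≤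
        ENNReal.ofReal (∑ j ∈ Finset.range n, T / n * ∑ i, |ζ j ω i| ^ p) :=
      hcost_le_of_drift hT hp (fun j => ζ j ω) fun t _ => by simp [subDrift]
    refine (lintegral_map_le _ _).trans ((lintegral_mono hle).trans ?_)
    · rw [← ofReal_integral_eq_lintegral_ofReal hint (ae_of_all _ fun ω => by positivity)]
      refine ENNReal.ofReal_le_ofReal (le_trans (le_of_eq ?_) hc)
      rw [integral_finsetSum _ fun j hj => (integrable_finsetSum _ fun i _ =>
        hi j (Finset.mem_range.1 hj) i).const_mul _, Finset.mul_sum]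
      refine Finset.sum_congr rfl fun j hj => ?_
      rw [integral_const_mul, integral_finsetSum _ fun i _ => hi j (Finset.mem_range.1 hj) i]

end Adapted

theorem sum_range_mul_div {M : Type*} [AddCommMonoid M] (n l : ℕ) (g : ℕ → M) :
    ∑ k ∈ Finset.range (n * l), g (k / l) = l • ∑ j ∈ Finset.range n, g j := by
  induction n with
  | zero => simp
  | succ n ih =>
    rw [Nat.succ_mul, Finset.sum_range_add, ih, Finset.sum_range_succ, smul_add]
    congr 1
    rw [Finset.sum_congr rfl (g := fun _ => g n), Finset.sum_const, Finset.card_range]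
    intro x hx
    have hx := Finset.mem_range.1 hx
    rw [mul_comm, Nat.mul_add_div (by omega), Nat.div_eq_of_lt hx, add_zero]

/-- The duality map of `ℓ^q`, with `x * dualMap q x = |x| ^ q`. -/
def dualMap (q x : ℝ) : ℝ := x * |x| ^ (q - 2)

theorem mul_dualMap {q : ℝ} (hq : 0 < q) (x : ℝ) : x * dualMap q x = |x| ^ q := by
  unfold dualMap
  rcases eq_or_ne x 0 with rfl | hx
  · simp [Real.zero_rpow hq.ne']
  · have : 0 < |x| := abs_pos.2 hx
    rw [← mul_assoc, ← sq, ← sq_abs, ← Real.rpow_natCast, ← Real.rpow_add this]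
    norm_num

theorem abs_dualMap_rpow {p q : ℝ} (hpq : q.HolderConjugate p) (x : ℝ) :
    |dualMap q x| ^ p = |x| ^ q := by
  have hq := hpq.pos
  have hp := hpq.symm.pos
  rcases eq_or_ne x 0 with rfl | hx
  · simp [dualMap, Real.zero_rpow hq.ne', Real.zero_rpow hp.ne']
  · have h0 : 0 < |x| := abs_pos.2 hx
    have h1 : |dualMap q x| = |x| ^ (q - 1) := by
      rw [dualMap, abs_mul, abs_of_pos (Real.rpow_pos_of_pos h0 _),
        show q - 1 = 1 + (q - 2) by ring, Real.rpow_add h0, Real.rpow_one]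
    rw [h1, ← Real.rpow_mul h0.le, hpq.sub_one_mul_conj]

theorem measurable_dualMap (q : ℝ) : Measurable (dualMap q) := by
  unfold dualMap
  fun_prop

namespace SensitivitySetup

variable {T p q C : ℝ} {d : ℕ} {μ : Measure (ContPath T d)} {F : (ℝ → Fin d → ℝ) → ℝ}
  {DF : (ℝ → Fin d → ℝ) → ℝ → Fin d → ℝ}

theorem exists_slopes (S : SensitivitySetup T p q C μ F DF) {n : ℕ} (hn : 0 < n) {u : ℝ}
    (hu : 0 ≤ u) : ∃ ξ : ℕ → ContPath T d → Fin d → ℝ,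
      (∀ j < n, Measurable[FilC T d (grid T n j)] (ξ j)) ∧
      (∀ j < n, ∀ i, MemLp (fun ω => ξ j ω i) (ENNReal.ofReal p) μ) ∧
      T / n * ∑ j ∈ Finset.range n, ∑ i, ∫ ω, |ξ j ω i| ^ p ∂μ ≤ u ^ p ∧
      T / n * ∑ j ∈ Finset.range n, ∑ i, ∫ ω, DF ω.1 (grid T n j) i * ξ j ω i ∂μ =
        (T / n * ∑ j ∈ Finset.range n, condMoment q μ DF (grid T n j)) ^ (1 / q) * u := by
  have hT := S.hT
  have hq := S.hpq.pos
  have hp := S.hpq.symm.pos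
  have := S.prob
  have hmem : ∀ j < n, grid T n j ∈ Icc 0 T := fun j hj => grid_mem_Icc hT hn hj.le
  set s := T / n * ∑ j ∈ Finset.range n, condMoment q μ DF (grid T n j) with hs
  have hs0 : 0 ≤ s :=
    mul_nonneg (by positivity) (Finset.sum_nonneg fun j _ => condMoment_nonneg _)
  obtain ⟨M, hM⟩ : ∃ M : ℕ → Fin d → ContPath T d → ℝ, ∀ j i, M j i =
      μ[fun ω : ContPath T d => DF ω.1 (grid T n j) i | FilC T d (grid T n j)] :=
    ⟨_, fun _ _ => rfl⟩
  have hcm (j : ℕ) : condMoment q μ DF (grid T n j) = ∑ i, ∫ ω, |M j i ω| ^ q ∂μ := by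
    simp only [hM]
    rfl
  have hMm (j : ℕ) (i : Fin d) : Measurable[FilC T d (grid T n j)] (M j i) := by
    rw [hM]
    exact stronglyMeasurable_condExp.measurable
  obtain ⟨c, hc, hcp, hcs⟩ : ∃ c : ℝ, 0 ≤ c ∧ c ^ p * s ≤ u ^ p ∧ c * s = s ^ (1 / q) * u := by
    refine ⟨u * s ^ (-(1 / p)), by positivity, ?_, ?_⟩
    · rw [Real.mul_rpow hu (by positivity), ← Real.rpow_mul hs0, mul_assoc]
      refine mul_le_of_le_one_right (by positivity) ?_
      rw [show -(1 / p) * p = -1 by field_simp, Real.rpow_neg_one]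
      exact inv_mul_le_one
    · rcases hs0.eq_or_lt with h | h
      · rw [← h, Real.zero_rpow (one_div_pos.2 hq).ne']
        simp
      · rw [mul_assoc, ← Real.rpow_add_one h.ne', mul_comm]
        congr 2
        have := S.hpq.inv_add_inv_eq_one
        simp only [one_div]
        linarith
  have hξm : ∀ j i, Measurable[FilC T d (grid T n j)] fun ω => c * dualMap q (M j i ω) :=
    fun j i => ((measurable_dualMap q).comp (hMm j i)).const_mul c
  have hξ : ∀ j < n, ∀ i, MemLp (fun ω => c * dualMap q (M j i ω)) (ENNReal.ofReal p) μ := by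
    intro j hj i
    refine MemLp.const_mul ?_ c
    have hm : Measurable fun ω => dualMap q (M j i ω) :=
      (measurable_dualMap q).comp ((hMm j i).mono (FilC_le _) le_rfl)
    rw [← integrable_norm_rpow_iff hm.aestronglyMeasurable (ENNReal.ofReal_pos.2 hp).ne'
      ENNReal.ofReal_ne_top, ENNReal.toReal_ofReal hp.le]
    simp only [Real.norm_eq_abs, abs_dualMap_rpow S.hpq]
    have h1 := S.memLp_condExp (hmem j hj) i (grid T n j)
    rw [← hM, ← integrable_norm_rpow_iff h1.1 (ENNReal.ofReal_pos.2 hq).ne'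
      ENNReal.ofReal_ne_top, ENNReal.toReal_ofReal hq.le] at h1
    exact h1
  refine ⟨fun j ω i => c * dualMap q (M j i ω), fun j _ => ?_, hξ, ?_, ?_⟩
  · exact (@measurable_pi_iff _ _ _ (FilC T d (grid T n j)) _ _).2 fun i => hξm j i
  · refine le_trans (le_of_eq ?_) hcp
    simp only [abs_mul, abs_of_nonneg hc, Real.mul_rpow hc (abs_nonneg _), abs_dualMap_rpow S.hpq,
      integral_const_mul, ← Finset.mul_sum]
    rw [hs]
    simp only [hcm]
    ring
  · rw [← hcs, hs, mul_left_comm]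
    congr 1
    rw [Finset.mul_sum]
    refine Finset.sum_congr rfl fun j hj => ?_
    have hj := Finset.mem_range.1 hj
    rw [hcm, Finset.mul_sum]
    refine Finset.sum_congr rfl fun i _ => ?_
    have key := integral_mul_condExp_eq (FilC_le (grid T n j)) (hξm j i).stronglyMeasurable
      (f := fun ω : ContPath T d => DF ω.1 (grid T n j) i) (π := μ) ?_
      (S.integrable_deriv_apply (hmem j hj) i)
    · rw [← hM] at key
      simp only [mul_comm (DF _ _ _)]
      rw [← key, ← integral_const_mul]
      refine integral_congr_ae (ae_of_all _ fun ω => ?_)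
      simp only
      rw [← mul_dualMap hq]
      ring
    · exact S.hpq.symm.integrable_mul (hξ j hj i) (S.memLp_deriv_apply (hmem j hj) i)

end SensitivitySetup

namespace SensitivitySetup

variable {T p q C : ℝ} {d : ℕ} {μ : Measure (ContPath T d)} {F : (ℝ → Fin d → ℝ) → ℝ}
  {DF : (ℝ → Fin d → ℝ) → ℝ → Fin d → ℝ}

theorem le_sum_integral_deriv_mul_slope (S : SensitivitySetup T p q C μ F DF) {n l : ℕ}
    (hn : 0 < n) (hl : 0 < l) {u a : ℝ} (hu : 0 ≤ u) {ξ : ℕ → ContPath T d → Fin d → ℝ}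
    (hξ : ∀ j < n, ∀ i, MemLp (fun ω => ξ j ω i) (ENNReal.ofReal p) μ)
    (hξu : T / n * ∑ j ∈ Finset.range n, ∑ i, ∫ ω, |ξ j ω i| ^ p ∂μ ≤ u ^ p)
    (ha : T / n * ∑ j ∈ Finset.range n, ∑ i, ∫ ω, DF ω.1 (grid T n j) i * ξ j ω i ∂μ = a) :
    a - (T / (n * l : ℕ) * ∑ k ∈ Finset.range (n * l), ∑ i, ∫ ω : ContPath T d,
        |DF ω.1 (grid T (n * l) (k + 1)) i - DF ω.1 (grid T n (k / l)) i| ^ q ∂μ) ^ (1 / q) * u ≤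
      T / (n * l : ℕ) * ∑ k ∈ Finset.range (n * l), ∑ i,
        ∫ ω, DF ω.1 (grid T (n * l) (k + 1)) i * ξ (k / l) ω i ∂μ := by
  have hT := S.hT
  have hq := S.hpq.pos
  have hp := S.hpq.symm.pos
  have hnl : 0 < n * l := Nat.mul_pos hn hl
  have hkl : ∀ k < n * l, k / l < n := fun k hk => Nat.div_lt_of_lt_mul (by rwa [mul_comm] at hk)
  have hm1 : ∀ k < n * l, grid T (n * l) (k + 1) ∈ Icc 0 T := fun k hk =>
    grid_mem_Icc hT hnl hk
  have hm2 : ∀ k < n * l, grid T n (k / l) ∈ Icc 0 T := fun k hk =>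
    grid_mem_Icc hT hn (hkl k hk).le
  set w := T / (n * l : ℕ) with hw
  have hw0 : 0 < w := by positivity
  have hsc : w * (l : ℝ) = T / n := by
    rw [hw]
    push_cast
    field_simp
  have hwsum (g : ℕ → ℝ) : w * ∑ k ∈ Finset.range (n * l), g (k / l) =
      T / n * ∑ j ∈ Finset.range n, g j := by
    rw [sum_range_mul_div, nsmul_eq_mul, ← mul_assoc, hsc]
  let s := Finset.range (n * l) ×ˢ (Finset.univ : Finset (Fin d))
  let A : ℕ × Fin d → ContPath T d → ℝ := fun j ω =>
    DF ω.1 (grid T (n * l) (j.1 + 1)) j.2 - DF ω.1 (grid T n (j.1 / l)) j.2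
  let D : ℕ × Fin d → ContPath T d → ℝ := fun j ω => w * ξ (j.1 / l) ω j.2
  have hs : ∀ j ∈ s, j.1 < n * l := fun j hj => Finset.mem_range.1 (Finset.mem_product.1 hj).1
  have hAL : ∀ j ∈ s, MemLp (A j) (ENNReal.ofReal q) μ := fun j hj =>
    (S.memLp_deriv_apply (hm1 _ (hs j hj)) j.2).sub (S.memLp_deriv_apply (hm2 _ (hs j hj)) j.2)
  have hDL : ∀ j ∈ s, MemLp (D j) (ENNReal.ofReal p) μ := fun j hj =>
    (hξ _ (hkl _ (hs j hj)) j.2).const_mul w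
  have hDr : ∑ j ∈ s, ∫ z, |D j z| ^ p ∂μ ≤ w ^ (p - 1) * u ^ p := by
    have e : ∑ j ∈ s, ∫ z, |D j z| ^ p ∂μ = w ^ (p - 1) *
        (w * ∑ k ∈ Finset.range (n * l), ∑ i, ∫ ω, |ξ (k / l) ω i| ^ p ∂μ) := by
      simp only [s, D, Finset.sum_product, abs_mul, abs_of_pos hw0,
        Real.mul_rpow hw0.le (abs_nonneg _), integral_const_mul, ← Finset.mul_sum]
      rw [← mul_assoc, ← Real.rpow_add_one hw0.ne', sub_add_cancel]
    rw [e, hwsum fun j => ∑ i, ∫ ω, |ξ j ω i| ^ p ∂μ]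
    gcongr
  have hb := abs_sum_integral_mul_le S.hpq s A D hAL hDL hw0 hu hDr
  have e1 : ∑ j ∈ s, ∫ z, |A j z| ^ q ∂μ = ∑ k ∈ Finset.range (n * l), ∑ i,
      ∫ ω : ContPath T d,
        |DF ω.1 (grid T (n * l) (k + 1)) i - DF ω.1 (grid T n (k / l)) i| ^ q ∂μ := by
    simp only [s, Finset.sum_product, A]
  rw [e1] at hb
  have hsub : ∀ j ∈ s, ∫ ω, A j ω * D j ω ∂μ =
      w * (∫ ω, DF ω.1 (grid T (n * l) (j.1 + 1)) j.2 * ξ (j.1 / l) ω j.2 ∂μ) -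
        w * ∫ ω, DF ω.1 (grid T n (j.1 / l)) j.2 * ξ (j.1 / l) ω j.2 ∂μ := by
    intro j hj
    rw [← mul_sub, ← integral_sub, ← integral_const_mul]
    · refine integral_congr_ae (ae_of_all _ fun ω => ?_)
      simp only [A, D]
      ring
    · exact S.hpq.integrable_mul (S.memLp_deriv_apply (hm1 _ (hs j hj)) j.2)
        (hξ _ (hkl _ (hs j hj)) j.2)
    · exact S.hpq.integrable_mul (S.memLp_deriv_apply (hm2 _ (hs j hj)) j.2)
        (hξ _ (hkl _ (hs j hj)) j.2)
  have hlow : -∑ j ∈ s, ∫ ω, |A j ω| * |D j ω| ∂μ ≤ ∑ j ∈ s, ∫ ω, A j ω * D j ω ∂μ := by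
    rw [← Finset.sum_neg_distrib]
    refine Finset.sum_le_sum fun j _ => ?_
    simp only [← abs_mul]
    exact (neg_le_neg abs_integral_le_integral_abs).trans (neg_abs_le _)
  rw [Finset.sum_congr rfl hsub, Finset.sum_sub_distrib] at hlow
  simp only [s, Finset.sum_product, ← Finset.mul_sum] at hlow
  rw [hwsum fun j => ∑ i, ∫ ω, DF ω.1 (grid T n j) i * ξ j ω i ∂μ, ha] at hlow
  simp only [s, Finset.sum_product] at hb
  linarith

theorem exists_causal_plan (S : SensitivitySetup T p q C μ F DF) {n : ℕ} (hn : 0 < n) {u δ : ℝ}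
    (hu : 0 ≤ u) (hδ : 0 < δ) : ∃ π, PlanBound T p μ π (δ * u) ∧ IsCausalStarC T d μ π ∧
      ∀ l > 0, δ * (((T / n * ∑ j ∈ Finset.range n, condMoment q μ DF (grid T n j)) ^ (1 / q) -
        (T / (n * l : ℕ) * ∑ k ∈ Finset.range (n * l), ∑ i, ∫ ω : ContPath T d,
          |DF ω.1 (grid T (n * l) (k + 1)) i - DF ω.1 (grid T n (k / l)) i| ^ q ∂μ) ^ (1 / q)) *
            u) ≤
        ∑ k ∈ Finset.range (n * l), ∑ i, ∫ z, DF z.1.1 (grid T (n * l) (k + 1)) i *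
          (gridDiff T (n * l) z k i - gridDiff T (n * l) z (k + 1) i) ∂π := by
  have hT := S.hT
  have hq := S.hpq.pos
  have hp := S.hpq.symm.pos
  have := S.prob
  obtain ⟨ξ, hξm, hξ, hξu, ha⟩ := S.exists_slopes hn hu
  have hζ : ∀ j < n, Measurable[FilC T d (grid T n j)] fun ω => -δ • ξ j ω := fun j hj =>
    (hξm j hj).const_smul (-δ)
  have hζp (j : ℕ) (i : Fin d) (ω : ContPath T d) :
      |(-δ • ξ j ω) i| ^ p = δ ^ p * |ξ j ω i| ^ p := by
    rw [Pi.smul_apply, smul_eq_mul, abs_mul, abs_neg, abs_of_pos hδ,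
      Real.mul_rpow hδ.le (abs_nonneg _)]
  have hi : ∀ j < n, ∀ i, Integrable (fun ω => |ξ j ω i| ^ p) μ := by
    intro j hj i
    have := (hξ j hj i)
    rw [← integrable_norm_rpow_iff this.1 (ENNReal.ofReal_pos.2 hp).ne'
      ENNReal.ofReal_ne_top, ENNReal.toReal_ofReal hp.le] at this
    exact this
  have hY := measurable_subDrift (hT := hT) hζ
  have hm : Measurable fun ω => (ω, subDrift hT n (fun j => -δ • ξ j ω) ω) :=
    measurable_id.prodMk hY
  refine ⟨μ.map fun ω => (ω, subDrift hT n (fun j => -δ • ξ j ω) ω), ?_, ?_, ?_⟩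
  · refine planBound_subDrift hζ hp (by positivity) (fun j hj i => ?_) ?_
    · simp only [hζp]
      exact (hi j hj i).const_mul _
    · simp only [hζp, integral_const_mul, ← Finset.mul_sum]
      rw [Real.mul_rpow hδ.le hu, mul_left_comm]
      gcongr
  · exact isCausalStarC_map (measurable_subDrift_FilC hζ) hY
  · intro l hl
    have hnl : 0 < n * l := Nat.mul_pos hn hl
    have hlow := S.le_sum_integral_deriv_mul_slope hn hl hu hξ hξu ha
    rw [sub_mul]
    refine (mul_le_mul_of_nonneg_left hlow hδ.le).trans (le_of_eq ?_)
    simp only [Finset.mul_sum]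
    refine Finset.sum_congr rfl fun k hk => Finset.sum_congr rfl fun i _ => ?_
    have hk := Finset.mem_range.1 hk
    have h2 : grid T (n * l) (k + 1) ∈ Icc 0 T := grid_mem_Icc hT hnl hk
    have hgm : ∀ k ≤ n * l, Measurable fun z : ContPath T d × ContPath T d =>
        gridDiff T (n * l) z k i := fun k hk =>
      (measurable_pi_apply i).comp (measurable_gridDiff hT hnl hk)
    have hmeas : Measurable fun z : ContPath T d × ContPath T d =>
        DF z.1.1 (grid T (n * l) (k + 1)) i *
          (gridDiff T (n * l) z k i - gridDiff T (n * l) z (k + 1) i) :=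
      (((measurable_pi_apply i).comp (S.measurable_deriv h2)).comp measurable_fst).mul
        ((hgm k hk.le).sub (hgm (k + 1) hk))
    rw [integral_map hm.aemeasurable hmeas.aestronglyMeasurable, ← integral_const_mul,
      ← integral_const_mul]
    refine integral_congr_ae (ae_of_all _ fun ω => ?_)
    have hd := congr_fun (drift_succ_sub hT hl hk fun j => -δ • ξ j ω) i
    simp only [Pi.sub_apply, Pi.smul_apply, smul_eq_mul] at hd
    simp only [gridDiff, subDrift, sub_sub_cancel, Pi.sub_apply]
    linear_combination (DF ω.1 (grid T (n * l) (k + 1)) i) * hd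

end SensitivitySetup

theorem gridIdx_mul_div (T : ℝ) (n : ℕ) {l : ℕ} (hl : 0 < l) (t : ℝ) :
    gridIdx T (n * l) t / l = gridIdx T n t := by
  unfold gridIdx
  rw [← Nat.floor_div_natCast]
  congr 1
  have : (l : ℝ) ≠ 0 := by positivity
  push_cast
  field_simp

namespace SensitivitySetup

variable {T p q C : ℝ} {d : ℕ} {μ : Measure (ContPath T d)} {F : (ℝ → Fin d → ℝ) → ℝ}
  {DF : (ℝ → Fin d → ℝ) → ℝ → Fin d → ℝ}

theorem tendsto_sum_deriv_sub_refine (S : SensitivitySetup T p q C μ F DF) :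
    Tendsto (fun x : ℕ × ℕ => T / (x.1 * x.2 : ℕ) * ∑ k ∈ Finset.range (x.1 * x.2), ∑ i,
      ∫ ω : ContPath T d, |DF ω.1 (grid T (x.1 * x.2) (k + 1)) i -
        DF ω.1 (grid T x.1 (k / x.2)) i| ^ q ∂μ) (atTop ×ˢ atTop) (nhds 0) := by
  have hT := S.hT
  have h1 : ∀ᶠ x : ℕ × ℕ in atTop ×ˢ atTop, 0 < x.1 := tendsto_fst.eventually_gt_atTop 0
  have h2 : ∀ᶠ x : ℕ × ℕ in atTop ×ˢ atTop, 0 < x.2 := tendsto_snd.eventually_gt_atTop 0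
  have hm : Tendsto (fun x : ℕ × ℕ => x.1 * x.2) (atTop ×ˢ atTop) atTop :=
    tendsto_fst.atTop_mul_atTop₀ tendsto_snd
  refine S.tendsto_sum_deriv_sub (fun x : ℕ × ℕ => x.1 * x.2) (hm.eventually_gt_atTop 0)
    (fun x k => grid T (x.1 * x.2) (k + 1)) (fun x k => grid T x.1 (k / x.2)) ?_ ?_ ?_
  · filter_upwards [h1, h2] with x hx hx' k hk
    exact ⟨grid_mem_Icc hT (Nat.mul_pos hx hx') hk, grid_mem_Icc hT hx
      (Nat.div_lt_of_lt_mul (by rwa [mul_comm] at hk)).le⟩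
  · exact fun t ht => (tendsto_grid_gridIdx_succ hT ht.1.le).comp hm
  · refine fun t ht => ((tendsto_grid_gridIdx hT ht.1.le).comp tendsto_fst).congr' ?_
    filter_upwards [h2] with x hx
    simp only [Function.comp_apply, gridIdx_mul_div T x.1 hx]

theorem exists_le_integral_sub (S : SensitivitySetup T p q C μ F DF) {u ε : ℝ} (hu : 0 ≤ u)
    (hε : 0 < ε) : ∃ B : ℝ, 0 ≤ B ∧ ∀ δ > 0, ∃ π, PlanBound T p μ π (δ * u) ∧
      IsCausalStarC T d μ π ∧ δ * u * (sensitivity T q μ DF - ε) - B * (δ * u) ^ p ≤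
        ∫ z, F z.2.1 ∂π - ∫ ω, F ω.1 ∂μ := by
  have hT := S.hT
  have hq := S.hpq.pos
  obtain ⟨B, hB, hev⟩ := S.exists_abs_integral_shiftPath_sub_le (ε := ε / 4) (by positivity)
  refine ⟨B, hB, fun δ hδ => ?_⟩
  have h1 : Tendsto (fun n : ℕ => (T / n * ∑ j ∈ Finset.range n,
      condMoment q μ DF (grid T n j)) ^ (1 / q)) atTop (nhds (sensitivity T q μ DF)) := by
    refine Tendsto.rpow_const ?_ (Or.inr (by positivity))
    exact S.tendsto_sum_condMoment (fun n : ℕ => n) (eventually_gt_atTop 0) (fun n k => grid T n k)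
      ((eventually_gt_atTop 0).mono fun n hn k hk => grid_mem_Icc hT hn hk.le)
      fun t ht => tendsto_grid_gridIdx hT ht.1.le
  have h2 := (S.tendsto_sum_deriv_sub_refine).rpow_const (p := 1 / q) (Or.inr (by positivity))
  rw [Real.zero_rpow (one_div_pos.2 hq).ne'] at h2
  have h3 := (h2.eventually_lt_const (show (0 : ℝ) < ε / 4 by positivity)).curry
  obtain ⟨n, ⟨hn, hnl⟩, hn0⟩ :=
    (((h1.eventually_const_lt (sub_lt_self (sensitivity T q μ DF) (show (0 : ℝ) < ε / 4 by positivity))).and h3).and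
      (eventually_gt_atTop 0)).exists
  obtain ⟨π, hπ, hc, hlow⟩ := S.exists_causal_plan hn0 hu hδ
  refine ⟨π, hπ, hc, ?_⟩
  have hmul : Tendsto (fun l : ℕ => n * l) atTop atTop :=
    tendsto_id.const_mul_atTop' hn0
  have hlim : Tendsto (fun m : ℕ => ∫ z, F (shiftPath T m z.1.1 (gridDiff T m z) m) ∂π)
      atTop (nhds (∫ z, F z.2.1 ∂π)) :=
    (tendsto_add_atTop_iff_nat 1).1 (S.tendsto_integral_shiftPath hπ)
  have aux : ∀ a b s : ℝ, sensitivity T q μ DF - ε / 4 < a → b < ε / 4 →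
      δ * ((a - b) * u) ≤ s → δ * u * (sensitivity T q μ DF - ε / 2) ≤ s := fun a b s ha hb hs => by
    refine le_trans ?_ hs
    rw [mul_assoc, mul_comm u]
    exact mul_le_mul_of_nonneg_left (mul_le_mul_of_nonneg_right (by linarith) hu) hδ.le
  have hlim' := (hlim.comp hmul).sub_const (∫ ω, F ω.1 ∂μ)
  refine ge_of_tendsto hlim' ?_
  filter_upwards [hnl, hmul.eventually hev, eventually_gt_atTop 0] with l hl hl' hl0
  have e1 := (abs_le.1 (hl' π _ hπ)).1
  have e2 := hlow l hl0
  have e3 := aux _ _ _ hn hl e2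
  simp only [Function.comp_apply]
  have := mul_nonneg hδ.le hu
  linear_combination e1 + e3 + (ε / 4) * this
end SensitivitySetup

theorem EReal.coe_le_inv_mul_sub {V : EReal} {m δ a : ℝ} (hδ : 0 < δ)
    (h : ((m + δ * a : ℝ) : EReal) ≤ V) : (a : EReal) ≤ ((1 / δ : ℝ) : EReal) * (V - (m : EReal)) := by
  induction V with
  | bot => exact absurd h (not_le.2 (EReal.bot_lt_coe _))
  | top => rw [EReal.top_sub_coe, EReal.coe_mul_top_of_pos (by positivity)]; exact le_top
  | coe V =>
    have h := EReal.coe_le_coe_iff.1 h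
    rw [← EReal.coe_sub, ← EReal.coe_mul, EReal.coe_le_coe_iff, one_div, ← div_eq_inv_mul,
      le_div_iff₀ hδ]
    linarith

theorem EReal.inv_mul_sub_le_coe {V : EReal} {m δ b : ℝ} (hδ : 0 < δ)
    (h : V ≤ ((m + δ * b : ℝ) : EReal)) : ((1 / δ : ℝ) : EReal) * (V - (m : EReal)) ≤ (b : EReal) := by
  induction V with
  | bot => rw [EReal.bot_sub, EReal.coe_mul_bot_of_pos (by positivity)]; exact bot_le
  | top => exact absurd h (not_le.2 (EReal.coe_lt_top _))
  | coe V =>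
    have h := EReal.coe_le_coe_iff.1 h
    rw [← EReal.coe_sub, ← EReal.coe_mul, EReal.coe_le_coe_iff, one_div, ← div_eq_inv_mul,
      div_le_iff₀ hδ]
    linarith

namespace PenaltyAssumptions

variable {p : ℝ} {L : ℝ → ℝ≥0∞}

theorem Lconj_nonneg (hL : PenaltyAssumptions p L) (v : ℝ) : 0 ≤ Lconj L v := by
  refine le_trans (le_of_eq ?_) (le_iSup _ (⟨0, le_rfl⟩ : {u : ℝ // 0 ≤ u}))
  simp [hL.zero]

theorem exists_growth (hL : PenaltyAssumptions p L) {K : ℝ} (hK : 0 ≤ K) :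
    ∃ U : ℝ, 1 ≤ U ∧ ∀ u ≥ U, L u ≠ ⊤ → K * u ^ p ≤ (L u).toReal := by
  obtain ⟨U, hU⟩ := eventually_atTop.1 (hL.growth.eventually_const_lt (ENNReal.ofReal_lt_top (r := K)))
  refine ⟨max 1 U, le_max_left _ _, fun u hu hfin => ?_⟩
  have h := ENNReal.mul_le_of_le_div (hU u ((le_max_right _ _).trans hu)).le
  rwa [← ENNReal.ofReal_mul hK, ENNReal.ofReal_le_iff_le_toReal hfin] at h

theorem coe_sub_penalty_eq {δ a u : ℝ} (hδ : 0 < δ) (h : L u ≠ ⊤) :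
    (a : EReal) - ((ENNReal.ofReal δ * L u : ℝ≥0∞) : EReal) =
      ((a - δ * (L u).toReal : ℝ) : EReal) := by
  rw [EReal.coe_sub, ← ENNReal.ofReal_toReal h, ← ENNReal.ofReal_mul hδ.le,
    EReal.coe_ennreal_ofReal, max_eq_left (by positivity), ENNReal.toReal_ofReal ENNReal.toReal_nonneg]

theorem tendsto_iSup_sub_penalty (hL : PenaltyAssumptions p L) (hp : 1 < p) {ι : Type*}
    {I R : ι → ℝ} (hR : ∀ i, 0 ≤ R i) {m v : ℝ} (hv : 0 ≤ v)
    (hup : ∀ ε > 0, ∃ B : ℝ, 0 ≤ B ∧ ∀ i, I i - m ≤ (v + ε) * R i + B * R i ^ p)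
    (hlow : ∀ u ≥ 0, ∀ ε > 0, ∃ B : ℝ, 0 ≤ B ∧ ∀ δ > 0, ∃ i, R i ≤ δ * u ∧
      δ * u * (v - ε) - B * (δ * u) ^ p ≤ I i - m) :
    Tendsto (fun δ : ℝ => ((1 / δ : ℝ) : EReal) *
        ((⨆ i, (I i : EReal) - ((ENNReal.ofReal δ * L (R i / δ) : ℝ≥0∞) : EReal)) - (m : EReal)))
      (nhdsWithin 0 (Ioi 0)) (nhds (Lconj L v)) := by
  have hδ0 : ∀ᶠ δ : ℝ in nhdsWithin 0 (Ioi 0), 0 < δ := self_mem_nhdsWithin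
  have hpow : ∀ c η : ℝ, 0 < η → ∀ᶠ δ : ℝ in nhdsWithin 0 (Ioi 0), c * δ ^ (p - 1) < η := by
    intro c η hη
    have h : Tendsto (fun δ : ℝ => c * δ ^ (p - 1)) (nhdsWithin 0 (Ioi 0))
        (nhds (c * 0 ^ (p - 1))) :=
      ((Real.continuousAt_rpow_const 0 (p - 1) (Or.inr (by linarith))).tendsto.mono_left
        nhdsWithin_le_nhds).const_mul c
    rw [Real.zero_rpow (by linarith), mul_zero] at h
    exact h.eventually_lt_const hη
  have hmulpow : ∀ δ > (0 : ℝ), ∀ u ≥ (0 : ℝ), (δ * u) ^ p = δ * (δ ^ (p - 1) * u ^ p) := by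
    intro δ hδ u hu
    rw [Real.mul_rpow hδ.le hu, ← mul_assoc, ← Real.rpow_one_add' hδ.le (by linarith)]
    congr 2
    ring
  refine tendsto_order.2 ⟨fun a ha => ?_, fun b hb => ?_⟩
  · obtain ⟨⟨u, hu⟩, hau⟩ := lt_iSup_iff.1 ha
    have hfin : L u ≠ ⊤ := fun h => by simp [h] at hau
    have e := coe_sub_penalty_eq (a := u * v) one_pos hfin
    rw [ENNReal.ofReal_one, one_mul, one_mul] at e
    simp only at hau
    rw [e] at hau
    obtain ⟨a', haa', ha'⟩ := EReal.lt_iff_exists_real_btwn.1 hau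
    have ha' := EReal.coe_lt_coe_iff.1 ha'
    set η := u * v - (L u).toReal - a' with hη
    have hη0 : 0 < η := by linarith
    obtain ⟨B, hB, hex⟩ := hlow u hu (η / (2 * (u + 1))) (by positivity)
    have hεu : u * (η / (2 * (u + 1))) ≤ η / 2 := by
      rw [← mul_div_assoc, div_le_div_iff₀ (by positivity) (by positivity)]
      nlinarith
    filter_upwards [hδ0, hpow (B * u ^ p) (η / 2) (by positivity)] with δ hδ hsm
    refine haa'.trans_le (EReal.coe_le_inv_mul_sub hδ ?_)
    obtain ⟨i, hi, hIi⟩ := hex δ hδ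
    have hRu : R i / δ ≤ u := by rwa [div_le_iff₀ hδ, mul_comm]
    have hLu : L (R i / δ) ≤ L u := hL.mono (div_nonneg (hR i) hδ.le) hu hRu
    refine le_trans ?_ (le_iSup _ i)
    rw [coe_sub_penalty_eq hδ (ne_top_of_le_ne_top hfin hLu), EReal.coe_le_coe_iff]
    have hLr := ENNReal.toReal_mono hfin hLu
    rw [hmulpow δ hδ u hu] at hIi
    have h1 := mul_le_mul_of_nonneg_left hLr hδ.le
    have h2 := mul_le_mul_of_nonneg_left hsm.le hδ.le
    have h3 := mul_le_mul_of_nonneg_left hεu hδ.le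
    have h4 : δ * η = δ * (u * v - (L u).toReal - a') := by rw [hη]
    linear_combination hIi + h1 + h2 + h3 - h4
  · obtain ⟨b', hb', hbb'⟩ := EReal.lt_iff_exists_real_btwn.1 hb
    obtain ⟨b₀, hb₀, hb₀'⟩ := EReal.lt_iff_exists_real_btwn.1 hb'
    have hb₀' := EReal.coe_lt_coe_iff.1 hb₀'
    have hb0 : 0 ≤ b₀ := EReal.coe_nonneg.1 ((hL.Lconj_nonneg v).trans hb₀.le)
    obtain ⟨B₁, hB₁, hup₁⟩ := hup 1 one_pos
    obtain ⟨U, hU1, hU⟩ := hL.exists_growth (K := v + 1 + B₁) (by positivity)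
    set η := b' - b₀ with hη
    have hη0 : 0 < η := by linarith
    obtain ⟨B₂, hB₂, hup₂⟩ := hup (η / (2 * U)) (by positivity)
    filter_upwards [hδ0, hpow (B₂ * U ^ p) (η / 2) (by positivity), hpow 1 1 one_pos]
      with δ hδ hsm hsm1
    refine (EReal.inv_mul_sub_le_coe hδ ?_).trans_lt hbb'
    refine iSup_le fun i => ?_
    obtain ⟨u, hu⟩ : ∃ u, u = R i / δ := ⟨_, rfl⟩
    have hRu : R i = δ * u := by rw [hu]; field_simp
    have hu0 : 0 ≤ u := hu ▸ div_nonneg (hR i) hδ.le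
    rw [← hu]
    by_cases hfin : L u = ⊤
    · rw [hfin, ENNReal.mul_top (ENNReal.ofReal_pos.2 hδ).ne', EReal.coe_ennreal_top, EReal.sub_top]
      exact bot_le
    rw [coe_sub_penalty_eq hδ hfin, EReal.coe_le_coe_iff]
    have hℓ : u * v - (L u).toReal ≤ b₀ := by
      have h1 := (le_iSup (fun u : {u : ℝ // 0 ≤ u} =>
        ((u.1 * v : ℝ) : EReal) - ((L u.1 : ℝ≥0∞) : EReal)) ⟨u, hu0⟩).trans hb₀.le
      have e := coe_sub_penalty_eq (a := u * v) one_pos hfin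
      rw [ENNReal.ofReal_one, one_mul, one_mul] at e
      exact EReal.coe_le_coe_iff.1 (e ▸ h1)
    suffices h : ∃ ε B : ℝ, I i - m ≤ (v + ε) * R i + B * R i ^ p ∧
        (v + ε) * u + B * (δ ^ (p - 1) * u ^ p) - (L u).toReal ≤ b' by
      obtain ⟨ε, B, h1, h2⟩ := h
      rw [hRu, hmulpow δ hδ u hu0] at h1
      have h3 := mul_le_mul_of_nonneg_left h2 hδ.le
      linear_combination h1 + h3
    rcases le_total U u with hUu | hUu
    · refine ⟨1, B₁, hup₁ i, ?_⟩
      have h1 := hU u hUu hfin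
      have h2 : u ≤ u ^ p := Real.self_le_rpow_of_one_le (hU1.trans hUu) hp.le
      have h3 : δ ^ (p - 1) * u ^ p ≤ 1 * u ^ p := by
        gcongr
        linarith
      nlinarith [mul_le_mul_of_nonneg_left h3 hB₁,
        mul_le_mul_of_nonneg_left h2 (show 0 ≤ v + 1 by linarith)]
    · refine ⟨η / (2 * U), B₂, hup₂ i, ?_⟩
      have h1 : η / (2 * U) * u ≤ η / 2 := by
        rw [div_mul_eq_mul_div, div_le_div_iff₀ (by positivity) (by positivity)]
        nlinarith
      have h2 : B₂ * (δ ^ (p - 1) * u ^ p) ≤ B₂ * (δ ^ (p - 1) * U ^ p) := by gcongr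
      linarith

end PenaltyAssumptions

namespace SensitivitySetup

variable {T p q C : ℝ} {d : ℕ} {μ : Measure (ContPath T d)} {F : (ℝ → Fin d → ℝ) → ℝ}
  {DF : (ℝ → Fin d → ℝ) → ℝ → Fin d → ℝ}

theorem sensitivity_eq (S : SensitivitySetup T p q C μ F DF) :
    (∫ t in Icc (0 : ℝ) T,
      ∫ ω, lpnorm q ((μ[(fun ω' : ContPath T d => DF ω'.1 t) | FilC T d t]) ω) ^ q ∂μ) ^ (1 / q) =
      sensitivity T q μ DF := by
  have hq := S.hpq.pos
  have := S.prob
  unfold sensitivity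
  rw [← integral_Icc_eq_integral_Ioo]
  congr 1
  refine setIntegral_congr_fun measurableSet_Icc fun t ht => ?_
  have hint : Integrable (fun ω : ContPath T d => DF ω.1 t) μ :=
    (S.memLp_deriv ht).integrable S.one_le
  have hc (i : Fin d) : (fun ω => (μ[(fun ω' : ContPath T d => DF ω'.1 t) | FilC T d t]) ω i)
      =ᵐ[μ] μ[fun ω : ContPath T d => DF ω.1 t i | FilC T d t] :=
    (ContinuousLinearMap.proj (R := ℝ) (φ := fun _ : Fin d => ℝ) i).comp_condExp_comm hint
  simp only [lpnorm_rpow hq, condMoment]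
  rw [integral_finsetSum]
  · refine Finset.sum_congr rfl fun i _ => integral_congr_ae ?_
    filter_upwards [hc i] with ω hω
    rw [hω]
  · intro i _
    have h1 := S.memLp_condExp ht i t
    rw [← integrable_norm_rpow_iff h1.1 (ENNReal.ofReal_pos.2 hq).ne'
      ENNReal.ofReal_ne_top, ENNReal.toReal_ofReal hq.le] at h1
    refine h1.congr ?_
    filter_upwards [hc i] with ω hω
    rw [hω, Real.norm_eq_abs]

theorem sensitivity_nonneg : 0 ≤ sensitivity T q μ DF :=
  Real.rpow_nonneg (integral_nonneg fun _ => condMoment_nonneg _) _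

theorem tendsto_VC (S : SensitivitySetup T p q C μ F DF) {L : ℝ → ℝ≥0∞}
    (hL : PenaltyAssumptions p L) {f : ContPath T d → ℝ} (hf : ∀ ω, f ω = F ω.1) :
    Tendsto (fun δ : ℝ =>
        (((1 / δ : ℝ)) : EReal) * (VC T p L μ f δ - ((∫ ω, f ω ∂μ : ℝ) : EReal)))
      (nhdsWithin 0 (Ioi 0)) (nhds (Lconj L (sensitivity T q μ DF))) := by
  have hp := S.hpq.symm.pos
  have hR : ∀ x : ℝ≥0∞, x ≠ ⊤ → ENNReal.ofReal ((x.toReal ^ (1 / p)) ^ p) = x := by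
    intro x hx
    rw [← Real.rpow_mul ENNReal.toReal_nonneg, one_div_mul_cancel hp.ne', Real.rpow_one,
      ENNReal.ofReal_toReal hx]
  obtain rfl : f = fun ω => F ω.1 := funext hf
  refine hL.tendsto_iSup_sub_penalty S.hpq.symm.lt (fun π => by positivity) sensitivity_nonneg
    (fun ε hε => ?_) (fun u hu ε hε => ?_)
  · obtain ⟨B, hB, h⟩ := S.exists_integral_sub_le hε
    refine ⟨B, hB, fun π => h π.1 _ ⟨π.2.1, π.2.2.1.1, by positivity, ?_⟩ π.2.2.1⟩
    rw [hR _ π.2.2.2.ne]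
  · obtain ⟨B, hB, h⟩ := S.exists_le_integral_sub hu hε
    refine ⟨B, hB, fun δ hδ => ?_⟩
    obtain ⟨π, hπ, hc, hle⟩ := h δ hδ
    refine ⟨⟨π, hπ.prob, hc, hπ.cost.trans_lt ENNReal.ofReal_lt_top⟩, ?_, hle⟩
    have hδu : 0 ≤ δ * u := mul_nonneg hδ.le hu
    calc _ ≤ ((δ * u) ^ p) ^ (1 / p) := by
          refine Real.rpow_le_rpow ENNReal.toReal_nonneg ?_ (by positivity)
          exact ENNReal.toReal_le_of_le_ofReal (by positivity) hπ.cost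
      _ = δ * u := by rw [← Real.rpow_mul hδu, mul_one_div_cancel hp.ne', Real.rpow_one]

end SensitivitySetup

/-- Continuous-time sensitivity of causal-Wasserstein DRO under hyperbolic
scaling: `lim_{δ→0+} (V(δ) − V(0))/δ = L*((∫_0^T E_μ[|E_μ[𝔻_t f(X)|F_t]|_*^q] dt)^{1/q})`. -/
theorem statement_15 (T : ℝ) (hT : 0 < T) {d : ℕ} (p q : ℝ) (hp : 1 < p)
    (hq : q = p / (p - 1))
    (L : ℝ → ℝ≥0∞) (hL : PenaltyAssumptions p L)
    (μ : Measure (ContPath T d)) [IsProbabilityMeasure μ]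
    (hmom : Integrable
      (fun ω : ContPath T d => (⨆ t : Set.Icc (0 : ℝ) T, lpnorm p (ω.1 t.1)) ^ p) μ)
    (f : ContPath T d → ℝ)
    (ftilde : (ℝ → Fin d → ℝ) → ℝ) (Df : (ℝ → Fin d → ℝ) → ℝ → Fin d → ℝ)
    (hext : ∀ ω : ContPath T d, f ω = ftilde ω.1)
    (hdiff : HasPathwiseMalliavinDeriv T ftilde Df)
    (hfcont : UnifContOnCadlag T ftilde)
    (hDcont : ∀ t ∈ Set.Icc (0 : ℝ) T, UnifContOnCadlagVec T (fun ω => Df ω t))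
    (hll : HasLeftLimits T Df)
    (hbp : BoundednessPreserving T Df)
    (C : ℝ)
    (hfgrow : ∀ ω : ℝ → Fin d → ℝ, CadlagOn T ω →
      |ftilde ω| ≤ C * (1 + (pathSup T ω) ^ p))
    (hDgrow : ∀ ω : ℝ → Fin d → ℝ, CadlagOn T ω → ∀ t ∈ Set.Icc (0 : ℝ) T,
      lpnorm q (Df ω t) ≤ C * (1 + (pathSup T ω) ^ (p - 1))) :
    Tendsto (fun δ : ℝ =>
        (((1 / δ : ℝ)) : EReal) * (VC T p L μ f δ - ((∫ ω, f ω ∂μ : ℝ) : EReal)))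
      (nhdsWithin 0 (Set.Ioi 0))
      (nhds (Lconj L
        ((∫ t in Set.Icc (0 : ℝ) T,
          ∫ ω, lpnorm q ((μ[(fun ω' : ContPath T d => Df ω'.1 t) | FilC T d t]) ω) ^ q ∂μ)
            ^ (1 / q)))) := by
  have hpq : q.HolderConjugate p := (Real.holderConjugate_iff_eq_conjExponent hp).2 hq |>.symm
  have S : SensitivitySetup T p q C μ ftilde Df :=
    ⟨hT, hpq, ‹_›, hmom, hdiff, hfcont, hDcont, hll, hfgrow, hDgrow⟩
  rw [S.sensitivity_eq]
  exact S.tendsto_VC hL hext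

end
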